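/- Randstellensatz for free spectrahedra: let L = I + A₁x₁ + ⋯ + Aₙxₙ be a monic hermitian linear matrix pencil of size d that is minimal for its free spectrahedron (every monic hermitian pencil N with D_N = D_L has size ≥ d), and let f = f* ∈ M_d(ℂ⟨x⟩). Then the following are equivalent: (i) for every k and every X ∈ D_L(k), f(X) ⪰ 0 and ker L(X) ⊆ ker f(X); (ii) there exist finitely many column vectors pᵢ ∈ ℂ⟨x⟩^{d×1}, matrices qⱼ ∈ M_d(ℂ⟨x⟩), and constant matrices Cⱼ ∈ M_d(ℂ) satisfying CⱼL = LCⱼ in M_d(ℂ⟨x⟩), such that f = L(Σᵢ pᵢpᵢ*)L + Σⱼ (qⱼL + Cⱼ)* L (qⱼL + Cⱼ). -/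

import Mathlib

open scoped Kronecker Matrix ComplexOrder

/-- Noncommutative polynomials: the free `ℂ`-algebra `ℂ⟨x₁,…,xₙ⟩` on `n` generators. -/
abbrev FreeAlg (n : ℕ) := FreeAlgebra ℂ (Fin n)

/-- Evaluation of a matrix of noncommutative polynomials at an `n`-tuple of `k × k` complex
matrices, i.e. the image under `id ⊗ ev_X`. -/
noncomputable def evalM {n k : ℕ} {I J : Type*} (f : Matrix I J (FreeAlg n))
    (X : Fin n → Matrix (Fin k) (Fin k) ℂ) : Matrix (I × Fin k) (J × Fin k) ℂ :=
  fun p q => FreeAlgebra.lift ℂ X (f p.1 q.1) p.2 q.2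

/-- The conjugate-linear involutive anti-automorphism on `ℂ⟨x⟩` fixing the generators:
reverse each word and conjugate each coefficient. -/
noncomputable def nstar {n : ℕ} (a : FreeAlg n) : FreeAlg n :=
  (FreeAlgebra.equivMonoidAlgebraFreeMonoid).symm
    (MonoidAlgebra.ofCoeff (Finsupp.mapDomain FreeMonoid.reverse
      (Finsupp.mapRange (starRingEnd ℂ) (map_zero _)
        ((FreeAlgebra.equivMonoidAlgebraFreeMonoid) a).coeff)))

/-- Conjugate-transpose of a matrix over `ℂ⟨x⟩`. -/
noncomputable def adjM {n : ℕ} {I J : Type*} (f : Matrix I J (FreeAlg n)) :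
    Matrix J I (FreeAlg n) :=
  fun i j => nstar (f j i)

/-- A matrix `f` over `ℂ⟨x⟩` is hermitian if `f = f*`. -/
def IsHermPoly {n : ℕ} {I : Type*} (f : Matrix I I (FreeAlg n)) : Prop :=
  ∀ i j, f i j = nstar (f j i)

/-- Evaluation `L(X) = A₀ ⊗ I + ∑ⱼ Aⱼ ⊗ Xⱼ` of a linear matrix pencil at a matrix tuple. -/
noncomputable def pencilK {n d k : ℕ} (A0 : Matrix (Fin d) (Fin d) ℂ)
    (A : Fin n → Matrix (Fin d) (Fin d) ℂ) (X : Fin n → Matrix (Fin k) (Fin k) ℂ) :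
    Matrix (Fin d × Fin k) (Fin d × Fin k) ℂ :=
  A0 ⊗ₖ (1 : Matrix (Fin k) (Fin k) ℂ) + ∑ j, A j ⊗ₖ X j

/-- Evaluation `L(X) = I ⊗ I + ∑ⱼ Aⱼ ⊗ Xⱼ` of a monic linear matrix pencil. -/
noncomputable def monicK {n d k : ℕ} (A : Fin n → Matrix (Fin d) (Fin d) ℂ)
    (X : Fin n → Matrix (Fin k) (Fin k) ℂ) : Matrix (Fin d × Fin k) (Fin d × Fin k) ℂ :=
  1 + ∑ j, A j ⊗ₖ X j

/-- The monic pencil `I + ∑ⱼ Aⱼ xⱼ` as a matrix of noncommutative polynomials. -/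
noncomputable def monicPoly {n e : ℕ} (A : Fin n → Matrix (Fin e) (Fin e) ℂ) :
    Matrix (Fin e) (Fin e) (FreeAlg n) :=
  1 + ∑ j, (A j).map (fun c => c • FreeAlgebra.ι ℂ j)

/-- The subspace of noncommutative polynomials of degree at most `δ`:
the `ℂ`-linear span of products of at most `δ` generators. -/
noncomputable def degLE (n δ : ℕ) : Submodule ℂ (FreeAlg n) :=
  Submodule.span ℂ
    {a | ∃ w : List (Fin n), w.length ≤ δ ∧ a = (w.map (FreeAlgebra.ι ℂ)).prod}

/-- A matrix over `ℂ⟨x⟩` has degree at most `δ` if each entry does. -/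
def matDegLE {n : ℕ} {I J : Type*} (f : Matrix I J (FreeAlg n)) (δ : ℕ) : Prop :=
  ∀ i j, f i j ∈ degLE n δ

/-- The degree of a matrix of noncommutative polynomials: the least `δ` such that every entry
lies in the span of words of length at most `δ`. -/
noncomputable def matDeg {n : ℕ} {I J : Type*} (f : Matrix I J (FreeAlg n)) : ℕ :=
  sInf {δ | matDegLE f δ}

/-- Evaluation of `f` at the zero scalar tuple, `f(0) ∈ M_d(ℂ)`. -/
noncomputable def evalZero {n : ℕ} {I J : Type*} (f : Matrix I J (FreeAlg n)) :
    Matrix I J ℂ :=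
  f.map (⇑(FreeAlgebra.lift ℂ (fun _ : Fin n => (0 : ℂ))))

/-!
If `ker L(X) ⊆ ker f(X)` on the free spectrahedron, minimality of `L` forces `f = g L`, and the
symmetry of `f` turns this into `f = L e L + c L` with `e = e*` and `c` a constant hermitian matrix
commuting with the coefficients of `L`. Positivity of `f` near the boundary of the spectrahedron
gives `c ⪰ 0`, hence `c = C²` with `C` commuting with `L`.

The certificates of bounded degree form the cone generated by the diagonal of a positive form on a
finite-dimensional space, which is closed. If `f` were outside, a functional `ψ` positive on the
cone would be negative at `f`. The GNS construction for `M ↦ ψ(L M L)` gives a tuple `X` and a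
cyclic vector `u` with `L(X) ≻ 0`. For `y = L(X)⁻¹ u` and a polynomial `V` with `V(X) u = -y`,
`ψ(f) = ⟨y, f(X) y⟩ + ψ((C V L + C)* L (C V L + C)) ≥ 0`, a contradiction.
-/

section FreeAlgebraInvolution

variable {n : ℕ}

theorem FreeAlg.induction_monomial {p : FreeAlg n → Prop}
    (monomial : ∀ w c,
      p (FreeAlgebra.equivMonoidAlgebraFreeMonoid.symm (MonoidAlgebra.single w c)))
    (add : ∀ a b, p a → p b → p (a + b)) (a : FreeAlg n) : p a := by
  rw [← FreeAlgebra.equivMonoidAlgebraFreeMonoid.symm_apply_apply a]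
  induction FreeAlgebra.equivMonoidAlgebraFreeMonoid a using MonoidAlgebra.induction_linear with
  | zero => simpa using monomial 1 0
  | add f g hf hg => rw [map_add]; exact add _ _ hf hg
  | single w c => exact monomial w c

theorem nstar_monomial (w : FreeMonoid (Fin n)) (c : ℂ) :
    nstar (FreeAlgebra.equivMonoidAlgebraFreeMonoid.symm (MonoidAlgebra.single w c)) =
      FreeAlgebra.equivMonoidAlgebraFreeMonoid.symm
        (MonoidAlgebra.single w.reverse (starRingEnd ℂ c)) := by
  rw [nstar, AlgEquiv.apply_symm_apply]
  simp

@[simp]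
theorem nstar_add (a b : FreeAlg n) : nstar (a + b) = nstar a + nstar b := by
  unfold nstar
  rw [← map_add, ← MonoidAlgebra.ofCoeff_add, ← Finsupp.mapDomain_add, map_add,
    MonoidAlgebra.coeff_add, Finsupp.mapRange_add (map_add _)]

@[simp]
theorem nstar_mul (a b : FreeAlg n) : nstar (a * b) = nstar b * nstar a := by
  induction a using FreeAlg.induction_monomial with
  | add a a' h h' => rw [add_mul, nstar_add, nstar_add, mul_add, h, h']
  | monomial w c =>
    induction b using FreeAlg.induction_monomial with
    | add b b' h h' => rw [mul_add, nstar_add, nstar_add, add_mul, h, h']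
    | monomial v e =>
      rw [← map_mul, MonoidAlgebra.single_mul_single, nstar_monomial, nstar_monomial,
        nstar_monomial, ← map_mul, MonoidAlgebra.single_mul_single]
      simp [mul_comm, FreeMonoid.reverse_mul]

@[simp]
theorem nstar_nstar (a : FreeAlg n) : nstar (nstar a) = a := by
  induction a using FreeAlg.induction_monomial with
  | add a a' h h' => rw [nstar_add, nstar_add, h, h']
  | monomial w c => rw [nstar_monomial, nstar_monomial]; simp

@[simp]
theorem nstar_algebraMap (c : ℂ) :
    nstar (algebraMap ℂ (FreeAlg n) c) = algebraMap ℂ (FreeAlg n) (starRingEnd ℂ c) := by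
  have algebraMap_eq (c : ℂ) : algebraMap ℂ (FreeAlg n) c =
      FreeAlgebra.equivMonoidAlgebraFreeMonoid.symm (MonoidAlgebra.single 1 c) := by
    rw [AlgEquiv.eq_symm_apply, AlgEquiv.commutes]; rfl
  rw [algebraMap_eq, algebraMap_eq, nstar_monomial]; rfl

@[simp]
theorem nstar_ι (j : Fin n) : nstar (FreeAlgebra.ι ℂ j) = FreeAlgebra.ι ℂ j := by
  have ι_eq : FreeAlgebra.ι ℂ j =
      FreeAlgebra.equivMonoidAlgebraFreeMonoid.symm
        (MonoidAlgebra.single (FreeMonoid.of j) (1 : ℂ)) := by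
    rw [AlgEquiv.eq_symm_apply]
    simp [FreeAlgebra.equivMonoidAlgebraFreeMonoid]
  rw [ι_eq, nstar_monomial]; simp

@[simp]
theorem nstar_smul (c : ℂ) (a : FreeAlg n) : nstar (c • a) = starRingEnd ℂ c • nstar a := by
  rw [Algebra.smul_def, nstar_mul, nstar_algebraMap, Algebra.smul_def, Algebra.commutes]

/-- The involution `nstar` as a conjugate-linear map. -/
noncomputable def nstarₗ : FreeAlg n →ₗ⋆[ℂ] FreeAlg n where
  toFun := nstar
  map_add' := nstar_add
  map_smul' := nstar_smul

@[simp]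
theorem nstar_zero : nstar (0 : FreeAlg n) = 0 :=
  map_zero nstarₗ

@[simp]
theorem nstar_one : nstar (1 : FreeAlg n) = 1 := by
  simpa using nstar_algebraMap (n := n) 1

theorem nstar_sum {I : Type*} (s : Finset I) (g : I → FreeAlg n) :
    nstar (∑ i ∈ s, g i) = ∑ i ∈ s, nstar (g i) :=
  map_sum nstarₗ g s

theorem nstar_injective : Function.Injective (nstar : FreeAlg n → FreeAlg n) :=
  Function.LeftInverse.injective nstar_nstar

end FreeAlgebraInvolution

section MatrixAdjoint

variable {n : ℕ} {I J K : Type*}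

theorem adjM_mul [Fintype J] (f : Matrix I J (FreeAlg n)) (g : Matrix J K (FreeAlg n)) :
    adjM (f * g) = adjM g * adjM f := by
  ext i k
  simp [adjM, Matrix.mul_apply, nstar_sum]

theorem adjM_add (f g : Matrix I J (FreeAlg n)) : adjM (f + g) = adjM f + adjM g := by
  ext i k
  simp [adjM]

theorem adjM_smul (c : ℂ) (f : Matrix I J (FreeAlg n)) :
    adjM (c • f) = starRingEnd ℂ c • adjM f := by
  ext i k
  simp [adjM]

@[simp]
theorem adjM_adjM (f : Matrix I J (FreeAlg n)) : adjM (adjM f) = f := by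
  ext i k
  simp [adjM]

/-- The adjoint `adjM` as a conjugate-linear map. -/
noncomputable def adjMₗ : Matrix I J (FreeAlg n) →ₗ⋆[ℂ] Matrix J I (FreeAlg n) where
  toFun := adjM
  map_add' := adjM_add
  map_smul' := adjM_smul

@[simp]
theorem adjM_zero : adjM (0 : Matrix I J (FreeAlg n)) = 0 :=
  map_zero adjMₗ

theorem IsHermPoly.adjM_eq {f : Matrix I I (FreeAlg n)} (hf : IsHermPoly f) : adjM f = f := by
  ext i j
  exact (hf i j).symm

end MatrixAdjoint

section LeftDerivative

variable {n : ℕ}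

/-- The constant coefficient `a ↦ a(0)` of a noncommutative polynomial. -/
noncomputable def constCoeff : FreeAlg n →ₐ[ℂ] ℂ :=
  FreeAlgebra.lift ℂ fun _ => 0

/-- The algebra homomorphism `a ↦ !![a(0), ∂ⱼa; 0, a]` encoding the left derivative `∂ⱼ`. -/
noncomputable def leftDerivHom (j : Fin n) : FreeAlg n →ₐ[ℂ] Matrix (Fin 2) (Fin 2) (FreeAlg n) :=
  FreeAlgebra.lift ℂ fun i => !![0, if i = j then 1 else 0; 0, FreeAlgebra.ι ℂ i]

/-- The left derivative `∂ⱼ`: it strips a leading `xⱼ` off every word and kills the words that do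
not start with `xⱼ`. -/
noncomputable def leftDeriv (j : Fin n) : FreeAlg n →ₗ[ℂ] FreeAlg n :=
  Matrix.entryLinearMap ℂ (FreeAlg n) 0 1 ∘ₗ (leftDerivHom j).toLinearMap

theorem leftDerivHom_apply (j : Fin n) (a : FreeAlg n) :
    leftDerivHom j a = !![algebraMap ℂ _ (constCoeff a), leftDeriv j a; 0, a] := by
  have entries : leftDerivHom j a 0 0 = algebraMap ℂ _ (constCoeff a) ∧
      leftDerivHom j a 1 0 = 0 ∧ leftDerivHom j a 1 1 = a := by
    induction a using FreeAlgebra.induction with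
    | grade0 r => rw [AlgHom.commutes, AlgHom.commutes]; simp [Matrix.algebraMap_matrix_apply]
    | grade1 i => simp [leftDerivHom, constCoeff]
    | mul a b ha hb => simp [Matrix.mul_apply, Fin.sum_univ_two, ha, hb]
    | add a b ha hb => simp [ha, hb]
  ext i k
  fin_cases i <;> fin_cases k <;> simp [entries, leftDeriv]

@[simp]
theorem constCoeff_ι (j : Fin n) : constCoeff (FreeAlgebra.ι ℂ j) = 0 := by
  simp [constCoeff]

@[simp]
theorem constCoeff_nstar (a : FreeAlg n) :
    constCoeff (nstar a) = starRingEnd ℂ (constCoeff a) := by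
  induction a using FreeAlgebra.induction with
  | grade0 r => simp
  | grade1 i => simp
  | mul a b ha hb => simp [ha, hb, mul_comm]
  | add a b ha hb => simp [ha, hb]

theorem leftDeriv_mul (j : Fin n) (a b : FreeAlg n) :
    leftDeriv j (a * b) = constCoeff a • leftDeriv j b + leftDeriv j a * b := by
  have : leftDerivHom j (a * b) 0 1 = (leftDerivHom j a * leftDerivHom j b) 0 1 := by
    rw [map_mul]
  rw [leftDerivHom_apply, leftDerivHom_apply, leftDerivHom_apply] at this
  simpa [Matrix.mul_apply, Fin.sum_univ_two, Algebra.smul_def] using this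

theorem leftDeriv_ι (j i : Fin n) :
    leftDeriv j (FreeAlgebra.ι ℂ i) = if i = j then 1 else 0 := by
  simp [leftDeriv, leftDerivHom]

@[simp]
theorem leftDeriv_algebraMap (j : Fin n) (c : ℂ) :
    leftDeriv j (algebraMap ℂ (FreeAlg n) c) = 0 := by
  change leftDerivHom j _ 0 1 = 0
  rw [AlgHom.commutes]; simp [Matrix.algebraMap_matrix_apply]

theorem leftDeriv_one (j : Fin n) : leftDeriv j (1 : FreeAlg n) = 0 := by
  simpa using leftDeriv_algebraMap (n := n) j 1

theorem leftDeriv_ι_mul (j i : Fin n) (a : FreeAlg n) :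
    leftDeriv j (FreeAlgebra.ι ℂ i * a) = if i = j then a else 0 := by
  rw [leftDeriv_mul, leftDeriv_ι]; simp

theorem eq_constCoeff_add_sum_ι_mul_leftDeriv (a : FreeAlg n) :
    a = algebraMap ℂ _ (constCoeff a) + ∑ j, FreeAlgebra.ι ℂ j * leftDeriv j a := by
  induction a using FreeAlgebra.induction with
  | grade0 r => simp
  | grade1 i => simp [leftDeriv_ι]
  | add a b ha hb =>
    simp only [map_add, mul_add, Finset.sum_add_distrib]
    nth_rw 1 [ha, hb]
    abel
  | mul a b ha hb =>
    have expand_left : a * b = constCoeff a • b + ∑ j, FreeAlgebra.ι ℂ j * (leftDeriv j a * b) := by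
      nth_rw 1 [ha]
      simp only [add_mul, Finset.sum_mul, mul_assoc, Algebra.smul_def]
    simp only [leftDeriv_mul, mul_add, Finset.sum_add_distrib, map_mul]
    rw [expand_left]
    nth_rw 1 [hb]
    simp only [smul_add, Finset.smul_sum, mul_smul_comm, Algebra.smul_def (constCoeff a)
      (algebraMap ℂ _ _), add_assoc]

theorem eq_zero_of_constCoeff_of_leftDeriv {a : FreeAlg n} (h0 : constCoeff a = 0)
    (h : ∀ j, leftDeriv j a = 0) : a = 0 := by
  rw [eq_constCoeff_add_sum_ι_mul_leftDeriv a]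
  simp [h0, h]

end LeftDerivative

section Degree

variable {n : ℕ}

/-- The space of noncommutative polynomials of degree less than `m`, described through iterated left
derivatives because all the degree inductions below are driven by `leftDeriv`. -/
noncomputable def degLT (n : ℕ) : ℕ → Submodule ℂ (FreeAlg n)
  | 0 => ⊥
  | m + 1 => ⨅ j, (degLT n m).comap (leftDeriv j)

theorem mem_degLT_zero {a : FreeAlg n} : a ∈ degLT n 0 ↔ a = 0 := by simp [degLT]

theorem mem_degLT_succ {m : ℕ} {a : FreeAlg n} :
    a ∈ degLT n (m + 1) ↔ ∀ j, leftDeriv j a ∈ degLT n m := by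
  simp [degLT]

theorem degLT_mono : Monotone (degLT n) := by
  refine monotone_nat_of_le_succ fun m => ?_
  induction m with
  | zero => exact bot_le
  | succ m ih => exact fun a ha => mem_degLT_succ.2 fun j => ih (mem_degLT_succ.1 ha j)

theorem mem_degLT_one {a : FreeAlg n} :
    a ∈ degLT n 1 ↔ a = algebraMap ℂ _ (constCoeff a) := by
  simp only [mem_degLT_succ, mem_degLT_zero]
  refine ⟨fun h => ?_, fun h j => by rw [h, leftDeriv_algebraMap]⟩
  nth_rw 1 [eq_constCoeff_add_sum_ι_mul_leftDeriv a]
  simp [h]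

theorem algebraMap_mem_degLT (c : ℂ) (m : ℕ) : algebraMap ℂ (FreeAlg n) c ∈ degLT n (m + 1) :=
  mem_degLT_succ.2 fun j => by simp

theorem one_mem_degLT (m : ℕ) : (1 : FreeAlg n) ∈ degLT n (m + 1) := by
  simpa using algebraMap_mem_degLT (n := n) 1 m

theorem ι_mul_mem_degLT {m : ℕ} {a : FreeAlg n} (j : Fin n) (ha : a ∈ degLT n m) :
    FreeAlgebra.ι ℂ j * a ∈ degLT n (m + 1) := by
  refine mem_degLT_succ.2 fun i => ?_
  rw [leftDeriv_ι_mul]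
  split_ifs
  exacts [ha, zero_mem _]

theorem mul_mem_degLT {m k : ℕ} {a b : FreeAlg n} (ha : a ∈ degLT n m) (hb : b ∈ degLT n k) :
    a * b ∈ degLT n (m + k) := by
  induction m generalizing a with
  | zero => rw [mem_degLT_zero.1 ha, zero_mul]; exact zero_mem _
  | succ m ih =>
    rw [eq_constCoeff_add_sum_ι_mul_leftDeriv a, add_mul, Finset.sum_mul]
    refine add_mem ?_ (Submodule.sum_mem _ fun j _ => ?_)
    · rw [← Algebra.smul_def]
      exact Submodule.smul_mem _ _ (degLT_mono (by lia) hb)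
    · rw [mul_assoc, show m + 1 + k = (m + k) + 1 by lia]
      exact ι_mul_mem_degLT _ (ih (mem_degLT_succ.1 ha j))

theorem exists_mem_degLT (a : FreeAlg n) : ∃ m, a ∈ degLT n m := by
  induction a using FreeAlgebra.induction with
  | grade0 r => exact ⟨1, algebraMap_mem_degLT _ _⟩
  | grade1 i => exact ⟨2, by simpa using ι_mul_mem_degLT i (one_mem_degLT 0)⟩
  | mul a b ha hb =>
    obtain ⟨⟨m, hm⟩, ⟨k, hk⟩⟩ := And.intro ha hb
    exact ⟨m + k, mul_mem_degLT hm hk⟩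
  | add a b ha hb =>
    obtain ⟨⟨m, hm⟩, ⟨k, hk⟩⟩ := And.intro ha hb
    exact ⟨m + k, add_mem (degLT_mono (by lia) hm) (degLT_mono (by lia) hk)⟩

theorem exists_forall_mem_degLT {I J : Type*} [Finite I] [Finite J]
    (h : Matrix I J (FreeAlg n)) : ∃ m, ∀ i j, h i j ∈ degLT n m := by
  cases nonempty_fintype (I × J)
  choose m hm using fun p : I × J => exists_mem_degLT (h p.1 p.2)
  refine ⟨∑ p, m p, fun i j => degLT_mono ?_ (hm (i, j))⟩
  exact Finset.single_le_sum (f := m) (fun _ _ => Nat.zero_le _) (Finset.mem_univ _)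

instance finiteDimensional_degLT (m : ℕ) : FiniteDimensional ℂ (degLT n m) := by
  induction m with
  | zero => exact inferInstanceAs (FiniteDimensional ℂ (⊥ : Submodule ℂ (FreeAlg n)))
  | succ m ih =>
    let coords : degLT n (m + 1) →ₗ[ℂ] ℂ × (Fin n → degLT n m) :=
      (constCoeff.toLinearMap ∘ₗ (degLT n (m + 1)).subtype).prod
        (LinearMap.pi fun j => (leftDeriv j ∘ₗ (degLT n (m + 1)).subtype).codRestrict (degLT n m)
          fun x => mem_degLT_succ.1 x.2 j)
    refine FiniteDimensional.of_injective coords ?_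
    rw [← LinearMap.ker_eq_bot, LinearMap.ker_eq_bot']
    intro x hx
    exact Subtype.ext (eq_zero_of_constCoeff_of_leftDeriv (congrArg Prod.fst hx)
      fun j => congrArg Subtype.val (congrFun (congrArg Prod.snd hx) j))

theorem eq_zero_of_sum_mul_nstar_eq_zero {I : Type*} [Fintype I] [DecidableEq I]
    {K : Matrix I I (FreeAlg n)} (hK : ∀ s t, constCoeff (K s t) = (1 : Matrix I I ℂ) s t) {m : ℕ}
    {y : I → FreeAlg n} (hy : ∀ s, y s ∈ degLT n m)
    (h : ∑ s, ∑ t, y s * (K s t * nstar (y t)) = 0) (s : I) : y s = 0 := by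
  induction m generalizing y s with
  | zero => exact mem_degLT_zero.1 (hy s)
  | succ m ih =>
    have constCoeff_zero : ∀ s, constCoeff (y s) = 0 := by
      have norm_sum : ∑ s, Complex.normSq (constCoeff (y s)) = 0 := by
        have := congrArg constCoeff h
        simp only [map_sum, map_mul, hK, Matrix.one_apply, constCoeff_nstar, map_zero, ite_mul,
          one_mul, zero_mul, mul_ite, mul_zero, Finset.sum_ite_eq, Finset.mem_univ, if_true,
          Complex.mul_conj, ← Complex.ofReal_sum, Complex.ofReal_eq_zero] at this
        exact this
      rw [Finset.sum_eq_zero_iff_of_nonneg fun _ _ => Complex.normSq_nonneg _] at norm_sum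
      exact fun s => Complex.normSq_eq_zero.1 (norm_sum s (Finset.mem_univ s))
    have leftDeriv_zero (j : Fin n) (s : I) : leftDeriv j (y s) = 0 := by
      refine ih (fun s => mem_degLT_succ.1 (hy s) j) ?_ s
      have := congrArg (fun a => nstar (leftDeriv j (nstar (leftDeriv j a)))) h
      simpa only [map_sum, leftDeriv_mul, constCoeff_zero, zero_smul, zero_add, nstar_sum,
        nstar_mul, nstar_nstar, mul_assoc, map_zero, nstar_zero] using this
    exact eq_zero_of_constCoeff_of_leftDeriv (constCoeff_zero s) (leftDeriv_zero · s)

end Degree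

section PencilMultiplication

variable {n d : ℕ} {I J K : Type*}

/-- A matrix of complex numbers, viewed as a constant matrix over `ℂ⟨x⟩`. -/
noncomputable abbrev constMat (n : ℕ) (C : Matrix I J ℂ) : Matrix I J (FreeAlg n) :=
  C.map (algebraMap ℂ (FreeAlg n))

theorem constMat_injective :
    Function.Injective (constMat n : Matrix I J ℂ → Matrix I J (FreeAlg n)) :=
  Matrix.map_injective (algebraMap ℂ (FreeAlg n)).injective

theorem constMat_zero : constMat n (0 : Matrix I J ℂ) = 0 :=
  Matrix.map_zero _ (map_zero _)

theorem constMat_one [DecidableEq I] : constMat n (1 : Matrix I I ℂ) = 1 :=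
  Matrix.map_one _ (map_zero _) (map_one _)

theorem constMat_sub (C D : Matrix I J ℂ) :
    constMat n (C - D) = constMat n C - constMat n D :=
  Matrix.map_sub _ (map_sub _) C D

theorem constMat_mul [Fintype J] (C : Matrix I J ℂ) (D : Matrix J K ℂ) :
    constMat n (C * D) = constMat n C * constMat n D :=
  Matrix.map_mul

theorem constMat_sum {ι : Type*} (s : Finset ι) (C : ι → Matrix I J ℂ) :
    constMat n (∑ i ∈ s, C i) = ∑ i ∈ s, constMat n (C i) :=
  map_sum (algebraMap ℂ (FreeAlg n)).toAddMonoidHom.mapMatrix C s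

theorem adjM_constMat (C : Matrix I J ℂ) : adjM (constMat n C) = constMat n Cᴴ := by
  ext i k
  simp [adjM]

theorem adjM_one [DecidableEq I] : adjM (1 : Matrix I I (FreeAlg n)) = 1 := by
  rw [← constMat_one, adjM_constMat, Matrix.conjTranspose_one]

variable (A : Fin n → Matrix (Fin d) (Fin d) ℂ)

theorem monicPoly_apply (i k : Fin d) :
    monicPoly A i k = (1 : Matrix (Fin d) (Fin d) (FreeAlg n)) i k +
      ∑ j, A j i k • FreeAlgebra.ι ℂ j := by
  simp [monicPoly, Matrix.sum_apply]

theorem monicPoly_mul_apply (g : Matrix (Fin d) K (FreeAlg n)) (i : Fin d) (k : K) :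
    (monicPoly A * g) i k = g i k + ∑ j, ∑ l, A j i l • (FreeAlgebra.ι ℂ j * g l k) := by
  simp only [Matrix.mul_apply, monicPoly_apply, add_mul, Finset.sum_add_distrib, Finset.sum_mul]
  rw [← Matrix.mul_apply, Matrix.one_mul, Finset.sum_comm]
  simp only [smul_mul_assoc]

theorem mul_monicPoly_apply (g : Matrix K (Fin d) (FreeAlg n)) (i : K) (k : Fin d) :
    (g * monicPoly A) i k = g i k + ∑ j, ∑ l, A j l k • (g i l * FreeAlgebra.ι ℂ j) := by
  simp only [Matrix.mul_apply, monicPoly_apply, mul_add, Finset.sum_add_distrib, Finset.mul_sum]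
  rw [← Matrix.mul_apply, Matrix.mul_one, Finset.sum_comm]
  simp only [mul_smul_comm]

theorem map_constCoeff_monicPoly : (monicPoly A).map constCoeff = 1 := by
  ext i k
  simp [monicPoly_apply, Matrix.one_apply, apply_ite constCoeff]

theorem map_leftDeriv_monicPoly (j : Fin n) :
    (monicPoly A).map (leftDeriv j) = constMat n (A j) := by
  ext i k
  simp [monicPoly_apply, Matrix.one_apply, apply_ite (leftDeriv j), leftDeriv_one, leftDeriv_ι,
    Algebra.algebraMap_eq_smul_one]

theorem map_constCoeff_mul [Fintype J] (f : Matrix I J (FreeAlg n)) (g : Matrix J K (FreeAlg n)) :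
    (f * g).map constCoeff = f.map constCoeff * g.map constCoeff :=
  Matrix.map_mul

theorem map_leftDeriv_mul [Fintype J] (j : Fin n) (f : Matrix I J (FreeAlg n))
    (g : Matrix J K (FreeAlg n)) :
    (f * g).map (leftDeriv j) =
      constMat n (f.map constCoeff) * g.map (leftDeriv j) + f.map (leftDeriv j) * g := by
  ext i k
  simp [-Matrix.map_map, Matrix.mul_apply, leftDeriv_mul, Finset.sum_add_distrib,
    Algebra.smul_def]

theorem constCoeff_monicPoly_mul (g : Matrix (Fin d) K (FreeAlg n)) :
    (monicPoly A * g).map constCoeff = g.map constCoeff := by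
  rw [map_constCoeff_mul, map_constCoeff_monicPoly, Matrix.one_mul]

theorem constCoeff_mul_monicPoly (g : Matrix K (Fin d) (FreeAlg n)) :
    (g * monicPoly A).map constCoeff = g.map constCoeff := by
  rw [map_constCoeff_mul, map_constCoeff_monicPoly, Matrix.mul_one]

theorem leftDeriv_monicPoly_mul (j : Fin n) (g : Matrix (Fin d) K (FreeAlg n)) :
    (monicPoly A * g).map (leftDeriv j) = g.map (leftDeriv j) + constMat n (A j) * g := by
  rw [map_leftDeriv_mul, map_constCoeff_monicPoly, map_leftDeriv_monicPoly, constMat_one,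
    Matrix.one_mul]

theorem leftDeriv_mul_monicPoly (j : Fin n) (g : Matrix K (Fin d) (FreeAlg n)) :
    (g * monicPoly A).map (leftDeriv j) =
      g.map (leftDeriv j) * monicPoly A + constMat n (g.map constCoeff * A j) := by
  rw [map_leftDeriv_mul, map_leftDeriv_monicPoly, ← constMat_mul, add_comm]

theorem adjM_monicPoly {A : Fin n → Matrix (Fin d) (Fin d) ℂ} (hA : ∀ j, (A j).IsHermitian) :
    adjM (monicPoly A) = monicPoly A := by
  ext i k
  have coeff_eq (j : Fin n) : starRingEnd ℂ (A j k i) = A j i k := (hA j).apply i k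
  simp only [adjM, monicPoly_apply, nstar_add, nstar_sum, nstar_smul, nstar_ι, coeff_eq]
  exact congrArg (· + _) (congrFun₂ adjM_one i k)

theorem constMat_mul_monicPoly_comm {A : Fin n → Matrix (Fin d) (Fin d) ℂ}
    {C : Matrix (Fin d) (Fin d) ℂ} (hC : ∀ j, C * A j = A j * C) :
    constMat n C * monicPoly A = monicPoly A * constMat n C := by
  ext i k
  rw [monicPoly_mul_apply, mul_monicPoly_apply]
  congr 1
  refine Finset.sum_congr rfl fun j _ => ?_
  have entry := congrFun (congrFun (hC j) i) k
  simp only [Matrix.mul_apply] at entry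
  simp only [Matrix.map_apply, ← Algebra.smul_def, smul_smul, ← Algebra.commutes,
    ← Finset.sum_smul, ← entry, mul_comm]

end PencilMultiplication

section NormalForm

variable {n d : ℕ} {K : Type*} {A B : Fin n → Matrix (Fin d) (Fin d) ℂ}

theorem eq_sum_constMat_mul (hB : ∑ j, B j * A j = 1) (g : Matrix (Fin d) K (FreeAlg n)) :
    g = ∑ j, constMat n (B j) * (constMat n (A j) * g) := by
  simp only [← Matrix.mul_assoc, ← constMat_mul]
  rw [← Matrix.sum_mul, ← constMat_sum, hB, constMat_one, Matrix.one_mul]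

theorem constMat_mul_mem_degLT {m : ℕ} (C : Matrix (Fin d) (Fin d) ℂ)
    {g : Matrix (Fin d) K (FreeAlg n)} (hg : ∀ i k, g i k ∈ degLT n m) (i : Fin d) (k : K) :
    (constMat n C * g) i k ∈ degLT n m := by
  simp only [Matrix.mul_apply, Matrix.map_apply, ← Algebra.smul_def]
  exact Submodule.sum_mem _ fun l _ => Submodule.smul_mem _ _ (hg l k)

/- Comparing words starting with `xⱼ` gives `Aⱼ g = -∂ⱼ g`, so the left inverse `B` of the column
`(Aⱼ)ⱼ` shows that `g` has smaller degree than itself. -/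
theorem eq_zero_of_monicPoly_mul_eq_constMat [Finite K] (hB : ∑ j, B j * A j = 1)
    {g : Matrix (Fin d) K (FreeAlg n)} {c : Matrix (Fin d) K ℂ}
    (h : monicPoly A * g = constMat n c) : g = 0 := by
  obtain ⟨m, hm⟩ := exists_forall_mem_degLT g
  induction m with
  | zero => ext i k; exact mem_degLT_zero.1 (hm i k)
  | succ m ih =>
    refine ih fun i k => ?_
    have A_mul_g (j : Fin n) : constMat n (A j) * g = -g.map (leftDeriv j) := by
      rw [eq_neg_iff_add_eq_zero, add_comm, ← leftDeriv_monicPoly_mul, h]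
      ext i k
      simp
    rw [eq_sum_constMat_mul hB g, Matrix.sum_apply]
    refine Submodule.sum_mem _ fun j _ => constMat_mul_mem_degLT _ (fun i k => ?_) i k
    rw [A_mul_g]
    exact neg_mem (mem_degLT_succ.1 (hm i k) j)

theorem eq_zero_of_mul_monicPoly_eq_constMat [Finite K] (hA : ∀ j, (A j).IsHermitian)
    (hB : ∑ j, B j * A j = 1) {g : Matrix K (Fin d) (FreeAlg n)}
    {c : Matrix K (Fin d) ℂ} (h : g * monicPoly A = constMat n c) : g = 0 := by
  have := congrArg adjM h
  rw [adjM_mul, adjM_monicPoly hA, adjM_constMat] at this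
  rw [← adjM_adjM g, eq_zero_of_monicPoly_mul_eq_constMat hB this, adjM_zero]

theorem eq_zero_and_eq_zero_of_mul_monicPoly_eq_constMat [Finite K]
    (hA : ∀ j, (A j).IsHermitian) (hB : ∑ j, B j * A j = 1)
    {g : Matrix K (Fin d) (FreeAlg n)} {c : Matrix K (Fin d) ℂ}
    (h : g * monicPoly A = constMat n c) : g = 0 ∧ c = 0 := by
  have hg := eq_zero_of_mul_monicPoly_eq_constMat hA hB h
  refine ⟨hg, constMat_injective (n := n) ?_⟩
  rw [← h, hg, Matrix.zero_mul, constMat_zero]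

/- Applying `∑ⱼ Bⱼ ∂ⱼ` to `g L = L g'` exhibits `g'` as a multiple of `L` plus a remainder of
smaller degree, which satisfies an equation of the same shape. -/
theorem exists_eq_mul_monicPoly_add_constMat (hB : ∑ j, B j * A j = 1)
    {g g' : Matrix (Fin d) (Fin d) (FreeAlg n)} (h : g * monicPoly A = monicPoly A * g') :
    ∃ (e : Matrix (Fin d) (Fin d) (FreeAlg n)) (c : Matrix (Fin d) (Fin d) ℂ),
      g' = e * monicPoly A + constMat n c := by
  obtain ⟨m, hm⟩ := exists_forall_mem_degLT g'
  replace hm i k := degLT_mono m.le_succ (hm i k)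
  induction m generalizing g g' with
  | zero =>
    refine ⟨0, g'.map constCoeff, ?_⟩
    ext i k
    simpa using mem_degLT_one.1 (hm i k)
  | succ m ih =>
    let e := ∑ j, constMat n (B j) * g.map (leftDeriv j)
    let r := ∑ j, constMat n (B j) * (constMat n (g.map constCoeff * A j) - g'.map (leftDeriv j))
    have division : g' = e * monicPoly A + r := by
      have A_mul_g' (j : Fin n) : constMat n (A j) * g' = g.map (leftDeriv j) * monicPoly A +
          (constMat n (g.map constCoeff * A j) - g'.map (leftDeriv j)) := by
        rw [← add_sub_assoc, ← leftDeriv_mul_monicPoly, h, leftDeriv_monicPoly_mul,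
          add_sub_cancel_left]
      nth_rw 1 [eq_sum_constMat_mul hB g']
      simp only [A_mul_g', mul_add, Finset.sum_add_distrib, e, r, Finset.sum_mul, Matrix.mul_assoc]
    have remainder_eq : (g - monicPoly A * e) * monicPoly A = monicPoly A * r := by
      rw [sub_mul, h, division, mul_add, Matrix.mul_assoc, add_sub_cancel_left]
    have remainder_deg (i k : Fin d) : r i k ∈ degLT n (m + 1) := by
      simp only [r, Matrix.sum_apply]
      refine Submodule.sum_mem _ fun j _ => constMat_mul_mem_degLT _ (fun i k => ?_) i k
      exact sub_mem (algebraMap_mem_degLT _ _) (mem_degLT_succ.1 (hm i k) j)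
    obtain ⟨e', c, hr⟩ := ih remainder_eq remainder_deg
    exact ⟨e + e', c, by rw [division, hr, add_mul, add_assoc]⟩

theorem commute_of_mul_monicPoly_eq_monicPoly_mul_constMat (hA : ∀ j, (A j).IsHermitian)
    (hB : ∑ j, B j * A j = 1) {g : Matrix (Fin d) (Fin d) (FreeAlg n)}
    {c : Matrix (Fin d) (Fin d) ℂ} (h : g * monicPoly A = monicPoly A * constMat n c) (j : Fin n) :
    c * A j = A j * c := by
  have constCoeff_g : g.map constCoeff = c := by
    rw [← constCoeff_mul_monicPoly A, h, constCoeff_monicPoly_mul]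
    ext i k
    simp
  have leftDeriv_c : (constMat n c).map (leftDeriv (n := n) j) = 0 := by
    ext i k
    simp
  have deriv_eq : g.map (leftDeriv j) * monicPoly A = constMat n (A j * c - c * A j) := by
    rw [constMat_sub, eq_sub_iff_add_eq, ← constCoeff_g, ← leftDeriv_mul_monicPoly, h,
      leftDeriv_monicPoly_mul, leftDeriv_c, zero_add, constMat_mul, constCoeff_g]
  exact (sub_eq_zero.1 (eq_zero_and_eq_zero_of_mul_monicPoly_eq_constMat hA hB deriv_eq).2).symm

theorem normalForm_unique (hA : ∀ j, (A j).IsHermitian) (hB : ∑ j, B j * A j = 1)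
    {e e' : Matrix (Fin d) (Fin d) (FreeAlg n)} {c c' : Matrix (Fin d) (Fin d) ℂ}
    (h : monicPoly A * (e * monicPoly A + constMat n c) =
      monicPoly A * (e' * monicPoly A + constMat n c')) : e = e' ∧ c = c' := by
  have diff : monicPoly A * ((e - e') * monicPoly A + constMat n (c - c')) = constMat n 0 := by
    rw [constMat_zero, ← sub_eq_zero.2 h, ← mul_sub, sub_mul, constMat_sub]
    congr 1
    abel
  have eq_const : (e - e') * monicPoly A = constMat n (c' - c) := by
    rw [eq_neg_of_add_eq_zero_left (eq_zero_of_monicPoly_mul_eq_constMat hB diff), ← neg_sub c,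
      ← zero_sub (c - c'), constMat_sub _ (c - c'), constMat_zero, zero_sub]
  obtain ⟨he, hc⟩ := eq_zero_and_eq_zero_of_mul_monicPoly_eq_constMat hA hB eq_const
  exact ⟨sub_eq_zero.1 he, (sub_eq_zero.1 hc).symm⟩

theorem exists_normalForm (hA : ∀ j, (A j).IsHermitian) (hB : ∑ j, B j * A j = 1)
    {f g : Matrix (Fin d) (Fin d) (FreeAlg n)} (hf : adjM f = f) (h : f = g * monicPoly A) :
    ∃ (e : Matrix (Fin d) (Fin d) (FreeAlg n)) (c : Matrix (Fin d) (Fin d) ℂ),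
      adjM e = e ∧ c.IsHermitian ∧ (∀ j, c * A j = A j * c) ∧
      f = monicPoly A * e * monicPoly A + constMat n c * monicPoly A := by
  have symm : g * monicPoly A = monicPoly A * adjM g := by
    rw [← h, ← hf, h, adjM_mul, adjM_monicPoly hA]
  obtain ⟨e, c, hg⟩ := exists_eq_mul_monicPoly_add_constMat hB symm
  have hc : ∀ j, c * A j = A j * c := by
    refine commute_of_mul_monicPoly_eq_monicPoly_mul_constMat hA hB (g := g - monicPoly A * e) ?_
    rw [sub_mul, symm, hg, mul_add, Matrix.mul_assoc, add_sub_cancel_left]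
  have f_eq : f = monicPoly A * (e * monicPoly A + constMat n c) := by rw [h, symm, hg]
  have hcH : ∀ j, cᴴ * A j = A j * cᴴ := fun j => by
    simpa [Matrix.conjTranspose_mul, (hA j).eq] using
      (congrArg Matrix.conjTranspose (hc j)).symm
  obtain ⟨he, hcc⟩ : adjM e = e ∧ cᴴ = c := by
    refine normalForm_unique hA hB ?_
    rw [← f_eq, ← hf, f_eq, adjM_mul, adjM_add, adjM_mul, adjM_monicPoly hA, adjM_constMat,
      add_mul, mul_add, Matrix.mul_assoc, constMat_mul_monicPoly_comm hcH]
  refine ⟨e, c, he, hcc, hc, ?_⟩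
  rw [f_eq, mul_add, ← Matrix.mul_assoc, constMat_mul_monicPoly_comm hc]

end NormalForm

section PosSemidef

variable {m : Type*} [Fintype m]

open scoped MatrixOrder in
theorem exists_eq_conjTranspose_mul_self {M : Matrix m m ℂ} (hM : M.PosSemidef) :
    ∃ S : Matrix m m ℂ, M = Sᴴ * S := by
  classical exact CStarAlgebra.nonneg_iff_eq_star_mul_self.mp hM.nonneg

theorem isCompact_setOf_posSemidef_trace_mem {T : Set ℂ} (hT : IsCompact T) :
    IsCompact {M : Matrix m m ℂ | M.PosSemidef ∧ M.trace ∈ T} := by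
  obtain ⟨R, hR⟩ := hT.isBounded.exists_norm_le
  have hcompact : IsCompact {S : Matrix m m ℂ | (Sᴴ * S).trace ∈ T} := by
    refine (isCompact_univ_pi fun _ => isCompact_univ_pi fun _ =>
      isCompact_closedBall (0 : ℂ) √R).of_isClosed_subset
      (hT.isClosed.preimage (by fun_prop)) fun (S : Matrix m m ℂ) hS i _ j _ => ?_
    rw [mem_closedBall_zero_iff]
    refine Real.le_sqrt_of_sq_le ?_
    have htrace : (Sᴴ * S).trace.re = ∑ b, ∑ a, ‖S a b‖ ^ 2 := by
      simp [Matrix.trace, Matrix.mul_apply, ← Complex.normSq_eq_conj_mul_self,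
        Complex.normSq_eq_norm_sq]
      norm_cast
    calc ‖S i j‖ ^ 2 ≤ ∑ a, ‖S a j‖ ^ 2 :=
          Finset.single_le_sum (f := fun a => ‖S a j‖ ^ 2) (fun _ _ => by positivity)
            (Finset.mem_univ i)
      _ ≤ ∑ b, ∑ a, ‖S a b‖ ^ 2 :=
          Finset.single_le_sum (f := fun b => ∑ a, ‖S a b‖ ^ 2) (fun _ _ => by positivity)
            (Finset.mem_univ j)
      _ ≤ R := htrace ▸ (Complex.re_le_norm _).trans (hR _ hS)
  convert hcompact.image (f := fun S : Matrix m m ℂ => Sᴴ * S) (by fun_prop) using 1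
  ext M
  constructor
  · rintro ⟨hM, htr⟩
    obtain ⟨S, rfl⟩ := exists_eq_conjTranspose_mul_self hM
    exact ⟨S, htr, rfl⟩
  · rintro ⟨S, hS, rfl⟩
    exact ⟨Matrix.posSemidef_conjTranspose_mul_self S, hS⟩

theorem convex_setOf_posSemidef_trace_mem {T : Set ℂ} (hT : Convex ℝ T) :
    Convex ℝ {M : Matrix m m ℂ | M.PosSemidef ∧ M.trace ∈ T} := by
  rintro M ⟨hM, hMT⟩ M' ⟨hM', hMT'⟩ a b ha hb hab
  refine ⟨(hM.smul ha).add (hM'.smul hb), ?_⟩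
  rw [Matrix.trace_add, Matrix.trace_smul, Matrix.trace_smul]
  exact hT hMT hMT' ha hb hab

theorem posSemidef_of_re_nonneg {M : Matrix m m ℂ} (hM : M.IsHermitian)
    (h : ∀ w, 0 ≤ (star w ⬝ᵥ M *ᵥ w).re) : M.PosSemidef :=
  .of_dotProduct_mulVec_nonneg hM fun w =>
    Complex.nonneg_iff.mpr ⟨h w, (hM.im_star_dotProduct_mulVec_self w).symm⟩

/-- **Finsler's lemma**. -/
theorem exists_posSemidef_add_smul {M G : Matrix m m ℂ} (hM : M.IsHermitian) (hG : G.PosSemidef)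
    (h : ∀ w, w ≠ 0 → G *ᵥ w = 0 → 0 < (star w ⬝ᵥ M *ᵥ w).re) :
    ∃ C : ℝ, 0 ≤ C ∧ (M + C • G).PosSemidef := by
  let q : Matrix m m ℂ → (m → ℂ) → ℝ := fun N w => (star w ⬝ᵥ N *ᵥ w).re
  have hq : ∀ N, Continuous (q N) := fun N => by fun_prop
  have hqG : ∀ w, 0 ≤ q G w := hG.re_dotProduct_nonneg
  let K : Set (m → ℂ) := Metric.sphere 0 1 ∩ {w | q M w ≤ 0}
  have hK : IsCompact K := (isCompact_sphere 0 1).inter_right (isClosed_le (hq M) continuous_const)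
  have hK0 : ∀ w ∈ K, 0 < q G w := by
    intro w hw
    refine (hqG w).lt_of_ne fun h0 => (h w ?_ ?_).not_ge hw.2
    · rintro rfl
      simpa using hw.1
    · exact (hG.dotProduct_mulVec_zero_iff w).mp
        (Complex.ext h0.symm (hG.isHermitian.im_star_dotProduct_mulVec_self w))
  obtain ⟨C, hC⟩ := hK.exists_bound_of_continuousOn
    ((hq M).continuousOn.div (hq G).continuousOn fun w hw => (hK0 w hw).ne')
  have hsphere : ∀ w ∈ Metric.sphere (0 : m → ℂ) 1, 0 ≤ q M w + |C| * q G w := by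
    intro w hw
    rcases lt_or_ge 0 (q M w) with hpos | hneg
    · exact add_nonneg hpos.le (mul_nonneg (abs_nonneg C) (hqG w))
    · have := (abs_le.mp ((hC w ⟨hw, hneg⟩).trans (le_abs_self C))).1
      rw [Pi.div_apply, le_div_iff₀ (hK0 w ⟨hw, hneg⟩)] at this
      linarith
  refine ⟨|C|, abs_nonneg C, posSemidef_of_re_nonneg
    (hM.add (hG.isHermitian.smul (IsSelfAdjoint.all _))) fun w => ?_⟩
  have hsplit : ∀ w, q (M + |C| • G) w = q M w + |C| * q G w := fun w => by
    simp [q, Matrix.add_mulVec, Matrix.smul_mulVec]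
  rcases eq_or_ne w 0 with rfl | hw
  · simp
  · have hhom : ∀ t : ℝ, q (M + |C| • G) ((t : ℂ) • w) = t ^ 2 * q (M + |C| • G) w := fun t => by
      simp [q, Matrix.mulVec_smul, sq, mul_assoc]
    have hunit := hsphere (((‖w‖⁻¹ : ℝ) : ℂ) • w) (by simp [norm_smul, hw])
    rw [← hsplit, hhom] at hunit
    exact nonneg_of_mul_nonneg_right hunit (by positivity)

end PosSemidef

section Separation

variable {E V : Type*} [AddCommGroup E] [Module ℂ E] [AddCommGroup V] [Module ℂ V]

/-- The linear extension `M ↦ ∑ i j, M i j • S (b i) (b j)` of a sesquilinear map `S` to complex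
matrices, along a finite family `b`. -/
noncomputable def gramMap {ι : Type*} [Fintype ι] (S : E →ₗ⋆[ℂ] E →ₗ[ℂ] V) (b : ι → E) :
    Matrix ι ι ℂ →ₗ[ℂ] V :=
  ∑ i, ∑ j, (LinearMap.toSpanSingleton ℂ V (S (b i) (b j))) ∘ₗ Matrix.entryLinearMap ℂ ℂ i j

theorem gramMap_conjTranspose_mul_self {ι κ : Type*} [Fintype ι] [Fintype κ]
    (S : E →ₗ⋆[ℂ] E →ₗ[ℂ] V) (b : ι → E) (c : Matrix κ ι ℂ) :
    gramMap S b (cᴴ * c) = ∑ k, S (∑ i, c k i • b i) (∑ i, c k i • b i) := by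
  simp only [gramMap, LinearMap.sum_apply, LinearMap.comp_apply, Matrix.entryLinearMap_apply,
    LinearMap.toSpanSingleton_apply, Matrix.mul_apply, Matrix.conjTranspose_apply,
    map_sum, map_smul, map_smulₛₗ, LinearMap.smul_apply, Finset.smul_sum, smul_smul]
  rw [Finset.sum_comm, Finset.sum_congr rfl fun _ _ => Finset.sum_comm, Finset.sum_comm]
  simp only [mul_comm, starRingEnd_apply]

theorem gramMap_ne_zero {ι : Type*} [Fintype ι] {S : E →ₗ⋆[ℂ] E →ₗ[ℂ] V}
    (hS : ∀ (N : ℕ) (p : Fin N → E), ∑ i, S (p i) (p i) = 0 → ∀ i, p i = 0) (b : Module.Basis ι ℂ E)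
    {M : Matrix ι ι ℂ} (hM : M.PosSemidef) (hM0 : M ≠ 0) : gramMap S b M ≠ 0 := by
  obtain ⟨c, rfl⟩ := exists_eq_conjTranspose_mul_self hM
  intro h0
  rw [gramMap_conjTranspose_mul_self, ← (Fintype.equivFin ι).symm.sum_comp] at h0
  have hc : ∀ k i, c k i = 0 := fun k i => by
    have := hS _ _ h0 (Fintype.equivFin ι k)
    rw [Equiv.symm_apply_apply] at this
    exact Fintype.linearIndependent_iff.mp b.linearIndependent _ this i
  exact hM0 (by rw [show c = 0 from Matrix.ext hc, Matrix.mul_zero])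

theorem exists_dual_pos [FiniteDimensional ℂ E] (S : E →ₗ⋆[ℂ] E →ₗ[ℂ] V)
    (hS : ∀ (N : ℕ) (p : Fin N → E), ∑ i, S (p i) (p i) = 0 → ∀ i, p i = 0) :
    ∃ ψ : V →ₗ[ℂ] ℂ, ∀ p, p ≠ 0 → 0 < (ψ (S p p)).re := by
  set m := Module.finrank ℂ E
  let b : Module.Basis (Fin m) ℂ E := Module.finBasis ℂ E
  have : LocallyConvexSpace ℝ (Matrix (Fin m) (Fin m) ℂ) :=
    inferInstanceAs (LocallyConvexSpace ℝ (Fin m → Fin m → ℂ))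
  obtain ⟨f, u, v, hK, huv, hker⟩ := RCLike.geometric_hahn_banach_compact_closed (𝕜 := ℂ)
    (convex_setOf_posSemidef_trace_mem (m := Fin m) (convex_singleton 1))
    (isCompact_setOf_posSemidef_trace_mem isCompact_singleton)
    ((LinearMap.ker (gramMap S b)).restrictScalars ℝ).convex
    (LinearMap.ker (gramMap S b)).closed_of_finiteDimensional
    (Set.disjoint_left.mpr fun M hM hM0 => gramMap_ne_zero hS b hM.1
      (by rintro rfl; simpa using hM.2) hM0)
  have hv : v < 0 := by simpa using hker 0 (Submodule.zero_mem _)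
  have hf0 : f.toLinearMap ∈ (LinearMap.ker (gramMap S b)).dualAnnihilator := by
    rw [Submodule.mem_dualAnnihilator]
    intro M hM
    by_contra hne
    have hne : f M ≠ 0 := hne
    have := hker ((v / f M) • M) (Submodule.smul_mem _ _ hM)
    rw [map_smul, smul_eq_mul, div_mul_cancel₀ _ hne] at this
    simp at this
  rw [← LinearMap.range_dualMap_eq_dualAnnihilator_ker] at hf0
  obtain ⟨ψ, hψ⟩ := hf0
  refine ⟨-ψ, fun p hp => ?_⟩
  let c : Matrix Unit (Fin m) ℂ := Matrix.of fun _ => b.repr p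
  have hc : c ≠ 0 := fun h0 => hp (b.repr.map_eq_zero_iff.mp
    (Finsupp.ext fun i => congrFun (congrFun h0 ()) i))
  have hSp : ψ (S p p) = f (cᴴ * c) := by
    rw [show f (cᴴ * c) = _ from (LinearMap.congr_fun hψ _).symm, LinearMap.dualMap_apply,
      gramMap_conjTranspose_mul_self]
    simp [c, b.sum_repr]
  have hpsd := Matrix.posSemidef_conjTranspose_mul_self c
  have hr : 0 < (cᴴ * c).trace := hpsd.trace_nonneg.lt_of_ne fun h =>
    hc (Matrix.trace_conjTranspose_mul_self_eq_zero_iff.mp h.symm)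
  obtain ⟨hr', him⟩ := Complex.pos_iff.mp hr
  have hunit := hK ((cᴴ * c).trace⁻¹ • (cᴴ * c))
    ⟨hpsd.smul (inv_nonneg_of_nonneg hr.le), by simp [hr.ne']⟩
  have hf : f (cᴴ * c) = (cᴴ * c).trace * f ((cᴴ * c).trace⁻¹ • (cᴴ * c)) := by
    rw [map_smul, smul_eq_mul, mul_inv_cancel_left₀ hr.ne']
  rw [LinearMap.neg_apply, hSp, hf, Complex.neg_re, Complex.mul_re, ← him, zero_mul, sub_zero,
    neg_pos]
  exact mul_neg_of_pos_of_neg hr' ((hunit.trans huv).trans hv)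

theorem exists_dual_pos_of_submodule [FiniteDimensional ℂ E] (S : E →ₗ⋆[ℂ] E →ₗ[ℂ] V)
    {st : V →ₗ⋆[ℂ] V} (hst : Function.Involutive st) (hstS : ∀ p, st (S p p) = S p p)
    (R : Submodule ℂ V) (hR : ∀ v ∈ R, st v ∈ R)
    (hS : ∀ (N : ℕ) (p : Fin N → E), ∑ i, S (p i) (p i) ∈ R → ∀ i, p i = 0) :
    ∃ ψ : V →ₗ[ℂ] ℂ, (∀ v ∈ R, ψ v = 0) ∧ (∀ v, ψ (st v) = star (ψ v)) ∧
      ∀ p, p ≠ 0 → 0 < (ψ (S p p)).re := by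
  obtain ⟨φ, hφ⟩ := exists_dual_pos (S.compr₂ₛₗ R.mkQ) fun N p h => hS N p <| by
    rw [← R.ker_mkQ, LinearMap.mem_ker, map_sum]
    exact h
  let ψ₀ : V →ₗ[ℂ] ℂ := φ ∘ₗ R.mkQ
  have hψ₀R : ∀ v ∈ R, ψ₀ v = 0 := fun v hv => by
    rw [LinearMap.comp_apply, Submodule.mkQ_apply, (Submodule.Quotient.mk_eq_zero R).mpr hv,
      map_zero]
  let ψ₁ : V →ₗ[ℂ] ℂ :=
    ((starLinearEquiv ℂ : ℂ ≃ₗ⋆[ℂ] ℂ).toLinearMap.comp ψ₀ : V →ₗ⋆[ℂ] ℂ).comp st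
  have hψ₁ : ∀ v, ψ₁ v = star (ψ₀ (st v)) := fun v => rfl
  refine ⟨ψ₀ + ψ₁, fun v hv => ?_, fun v => ?_, fun p hp => ?_⟩
  · rw [LinearMap.add_apply, hψ₁, hψ₀R v hv, hψ₀R _ (hR v hv), star_zero, add_zero]
  · rw [LinearMap.add_apply, LinearMap.add_apply, hψ₁, hψ₁, hst, star_add, star_star, add_comm]
  · rw [LinearMap.add_apply, hψ₁, hstS, Complex.add_re]
    exact add_pos (hφ p hp) (hφ p hp)

-- The cone of sums `∑ᵢ S pᵢ pᵢ` is closed: separate it from `z` by applying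
-- `exists_dual_pos_of_submodule` to `S` with `-z` adjoined as a further square.
theorem exists_eq_sum_of_forall_dual_nonneg [FiniteDimensional ℂ E] (S : E →ₗ⋆[ℂ] E →ₗ[ℂ] V)
    {st : V →ₗ⋆[ℂ] V} (hst : Function.Involutive st) (hstS : ∀ p, st (S p p) = S p p)
    (hS : ∀ (N : ℕ) (p : Fin N → E), ∑ i, S (p i) (p i) = 0 → ∀ i, p i = 0)
    {z : V} (hz : st z = z)
    (hpos : ∀ ψ : V →ₗ[ℂ] ℂ, (∀ v, ψ (st v) = star (ψ v)) → (∀ p, p ≠ 0 → 0 < (ψ (S p p)).re) →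
      0 ≤ (ψ z).re) :
    ∃ (N : ℕ) (p : Fin N → E), z = ∑ i, S (p i) (p i) := by
  by_contra! hne
  let S' : E × ℂ →ₗ⋆[ℂ] E × ℂ →ₗ[ℂ] V := LinearMap.mk₂'ₛₗ (starRingEnd ℂ) (RingHom.id ℂ)
    (fun a b => S a.1 b.1 - (star a.2 * b.2) • z)
    (fun a a' b => by simp only [Prod.fst_add, Prod.snd_add, map_add, star_add,
      LinearMap.add_apply]; module)
    (fun c a b => by simp [mul_smul, smul_sub])
    (fun a b b' => by simp only [Prod.fst_add, Prod.snd_add, map_add]; module)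
    (fun c a b => by
      simp only [Prod.smul_fst, Prod.smul_snd, map_smul, RingHom.id_apply, smul_eq_mul]; module)
  have hS' : ∀ a, S' a a = S a.1 a.1 - (star a.2 * a.2) • z := fun a => rfl
  have hS'0 : ∀ (N : ℕ) (a : Fin N → E × ℂ), ∑ i, S' (a i) (a i) = 0 → ∀ i, a i = 0 := by
    intro N a h
    set r : ℂ := ∑ i, star (a i).2 * (a i).2
    have hr0 : 0 ≤ r := Finset.sum_nonneg fun i _ => star_mul_self_nonneg _
    have hrz : ∑ i, S (a i).1 (a i).1 = r • z := by
      simp only [hS', Finset.sum_sub_distrib, ← Finset.sum_smul] at h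
      exact sub_eq_zero.mp h
    rcases eq_or_ne r 0 with hr | hr
    · intro i
      rw [hr, zero_smul] at hrz
      have h2 := (Finset.sum_eq_zero_iff_of_nonneg fun i _ =>
        star_mul_self_nonneg (a i).2).mp hr i (Finset.mem_univ i)
      exact Prod.ext (hS N _ hrz i) (by simpa using h2)
    · obtain ⟨t, ht⟩ : ∃ t : ℂ, r⁻¹ = star t * t :=
        CStarAlgebra.nonneg_iff_eq_star_mul_self.mp (inv_nonneg_of_nonneg hr0)
      refine absurd ?_ (hne N fun i => t • (a i).1)
      simp only [map_smulₛₗ, LinearMap.smul_apply, smul_smul, ← Finset.smul_sum, hrz,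
        RingHom.id_apply]
      rw [mul_comm t, starRingEnd_apply, ← ht, inv_mul_cancel₀ hr, one_smul]
  obtain ⟨ψ, -, hψst, hψ⟩ := exists_dual_pos_of_submodule S' hst
    (fun a => by simp [hS', hstS, hz, mul_comm]) ⊥ (by simp) (by simpa using hS'0)
  have hneg : (ψ z).re < 0 := by simpa [hS'] using hψ (0, 1) (by simp)
  exact hneg.not_ge (hpos ψ hψst fun p hp => by simpa [hS'] using hψ (p, 0) (by simpa using hp))

end Separation

section Evaluation

variable {n d k : ℕ} {I J : Type*}

theorem evalM_zero (X : Fin n → Matrix (Fin k) (Fin k) ℂ) :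
    evalM (0 : Matrix I J (FreeAlg n)) X = 0 := by
  ext p q
  simp [evalM]

theorem evalM_add (f g : Matrix I J (FreeAlg n)) (X : Fin n → Matrix (Fin k) (Fin k) ℂ) :
    evalM (f + g) X = evalM f X + evalM g X := by
  ext p q
  simp [evalM]

theorem evalM_sum {K : Type*} (s : Finset K) (f : K → Matrix I J (FreeAlg n))
    (X : Fin n → Matrix (Fin k) (Fin k) ℂ) :
    evalM (∑ i ∈ s, f i) X = ∑ i ∈ s, evalM (f i) X :=
  map_sum (AddMonoidHom.mk' (evalM · X) fun f g => evalM_add f g X) f s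

theorem evalM_mul {K : Type*} [Fintype J] (f : Matrix I J (FreeAlg n)) (g : Matrix J K (FreeAlg n))
    (X : Fin n → Matrix (Fin k) (Fin k) ℂ) : evalM (f * g) X = evalM f X * evalM g X := by
  ext p q
  simp only [evalM, Matrix.mul_apply, map_sum, map_mul, Matrix.sum_apply, Fintype.sum_prod_type]

theorem lift_nstar {X : Fin n → Matrix (Fin k) (Fin k) ℂ} (hX : ∀ j, (X j).IsHermitian)
    (a : FreeAlg n) : FreeAlgebra.lift ℂ X (nstar a) = (FreeAlgebra.lift ℂ X a)ᴴ := by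
  induction a using FreeAlgebra.induction with
  | grade0 c =>
    rw [nstar_algebraMap, AlgHom.commutes, AlgHom.commutes, Algebra.algebraMap_eq_smul_one,
      Algebra.algebraMap_eq_smul_one, Matrix.conjTranspose_smul, Matrix.conjTranspose_one,
      starRingEnd_apply]
  | grade1 j => rw [nstar_ι, FreeAlgebra.lift_ι_apply, hX j]
  | mul a b ha hb => rw [nstar_mul, map_mul, map_mul, ha, hb, Matrix.conjTranspose_mul]
  | add a b ha hb => rw [nstar_add, map_add, map_add, ha, hb, Matrix.conjTranspose_add]

theorem evalM_adjM (f : Matrix I J (FreeAlg n)) {X : Fin n → Matrix (Fin k) (Fin k) ℂ}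
    (hX : ∀ j, (X j).IsHermitian) : evalM (adjM f) X = (evalM f X)ᴴ := by
  ext p q
  simp [evalM, adjM, lift_nstar hX]

theorem evalM_constMat (C : Matrix (Fin d) (Fin d) ℂ) (X : Fin n → Matrix (Fin k) (Fin k) ℂ) :
    evalM (constMat n C) X = C ⊗ₖ (1 : Matrix (Fin k) (Fin k) ℂ) := by
  ext p q
  simp [evalM, Matrix.kroneckerMap_apply, Algebra.algebraMap_eq_smul_one, Matrix.one_apply]

theorem evalM_monicPoly (A : Fin n → Matrix (Fin d) (Fin d) ℂ)
    (X : Fin n → Matrix (Fin k) (Fin k) ℂ) : evalM (monicPoly A) X = monicK A X := by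
  ext ⟨i, a⟩ ⟨l, b⟩
  simp only [evalM, monicPoly_apply, map_add, map_sum, map_smul, FreeAlgebra.lift_ι_apply, monicK,
    Matrix.add_apply, Matrix.sum_apply, Matrix.kroneckerMap_apply, Matrix.smul_apply, smul_eq_mul]
  by_cases h : i = l
  · subst h
    simp [Matrix.one_apply]
  · simp [h]

theorem isHermitian_monicK {A : Fin n → Matrix (Fin d) (Fin d) ℂ} (hA : ∀ j, (A j).IsHermitian)
    {X : Fin n → Matrix (Fin k) (Fin k) ℂ} (hX : ∀ j, (X j).IsHermitian) :
    (monicK A X).IsHermitian := by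
  rw [Matrix.IsHermitian, ← evalM_monicPoly, ← evalM_adjM _ hX, adjM_monicPoly hA]

theorem evalM_mulVec [Fintype J] (f : Matrix I J (FreeAlg n))
    (X : Fin n → Matrix (Fin k) (Fin k) ℂ) (v : J × Fin k → ℂ) (i : I) (a : Fin k) :
    (evalM f X *ᵥ v) (i, a) = ∑ l, (FreeAlgebra.lift ℂ X (f i l) *ᵥ fun b => v (l, b)) a := by
  simp only [evalM, Matrix.mulVec, dotProduct, Fintype.sum_prod_type]

theorem posSemidef_and_ker_le_of_certificate {A : Fin n → Matrix (Fin d) (Fin d) ℂ}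
    (hA : ∀ j, (A j).IsHermitian) {M N : ℕ} (p : Fin M → Matrix (Fin d) (Fin 1) (FreeAlg n))
    (q : Fin N → Matrix (Fin d) (Fin d) (FreeAlg n)) {C : Fin N → Matrix (Fin d) (Fin d) ℂ}
    (hC : ∀ j, constMat n (C j) * monicPoly A = monicPoly A * constMat n (C j))
    {X : Fin n → Matrix (Fin k) (Fin k) ℂ} (hX : ∀ j, (X j).IsHermitian)
    (hL : (monicK A X).PosSemidef) {f : Matrix (Fin d) (Fin d) (FreeAlg n)}
    (hf : f = monicPoly A * (∑ i, p i * adjM (p i)) * monicPoly A +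
      ∑ j, adjM (q j * monicPoly A + constMat n (C j)) * monicPoly A *
        (q j * monicPoly A + constMat n (C j))) :
    (evalM f X).PosSemidef ∧ ∀ u, monicK A X *ᵥ u = 0 → evalM f X *ᵥ u = 0 := by
  have hCX : ∀ j, monicK A X * evalM (constMat n (C j)) X =
      evalM (constMat n (C j)) X * monicK A X := fun j => by
    rw [← evalM_monicPoly, ← evalM_mul, ← evalM_mul, hC j]
  simp only [hf, evalM_add, evalM_mul, evalM_sum, evalM_adjM _ hX, evalM_monicPoly] at hCX ⊢
  refine ⟨.add ?_ (Matrix.posSemidef_sum _ fun j _ => hL.conjTranspose_mul_mul_same _),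
    fun u hu => ?_⟩
  · have hpp : (∑ i, evalM (p i) X * (evalM (p i) X)ᴴ).PosSemidef :=
      Matrix.posSemidef_sum _ fun i _ => Matrix.posSemidef_self_mul_conjTranspose _
    simpa only [(isHermitian_monicK hA hX).eq] using hpp.conjTranspose_mul_mul_same (monicK A X)
  · simp only [Matrix.add_mulVec, Matrix.sum_mulVec, ← Matrix.mulVec_mulVec, hu, Matrix.mulVec_zero,
      zero_add]
    refine Finset.sum_eq_zero fun j _ => ?_
    rw [Matrix.mulVec_mulVec _ (monicK A X), hCX, ← Matrix.mulVec_mulVec, hu, Matrix.mulVec_zero,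
      Matrix.mulVec_zero]

end Evaluation

section Realization

variable {n d k : ℕ} {W : Type*} [AddCommGroup W] [Module ℂ W]

theorem exists_equiv_dotProduct [FiniteDimensional ℂ W] {s : W →ₗ⋆[ℂ] W →ₗ[ℂ] ℂ} (hs : s.IsSymm)
    (hpos : ∀ a, a ≠ 0 → 0 < (s a a).re) :
    ∃ (k : ℕ) (T : W ≃ₗ[ℂ] (Fin k → ℂ)), ∀ a b, s a b = star (T a) ⬝ᵥ T b := by
  let core : InnerProductSpace.Core ℂ W :=
    { inner a b := s a b
      conj_inner_symm a b := hs.eq b a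
      re_inner_nonneg a := by
        rcases eq_or_ne a 0 with rfl | ha
        · simp
        · exact (hpos a ha).le
      add_left a b c := by simp
      smul_left a b r := by simp
      definite a h := by
        by_contra ha
        have := hpos a ha
        simp_all }
  let _ : NormedAddCommGroup W := core.toNormedAddCommGroup
  let _ : InnerProductSpace ℂ W := .ofCore core.toCore
  refine ⟨_, (stdOrthonormalBasis ℂ W).repr.toLinearEquiv.trans (WithLp.linearEquiv 2 ℂ _),
    fun a b => ?_⟩
  rw [dotProduct_comm]
  exact ((stdOrthonormalBasis ℂ W).repr.inner_map_map a b).symm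

theorem sesq_sum_smul_eq_dotProduct {ι : Type*} [Fintype ι] (x : W →ₗ⋆[ℂ] W →ₗ[ℂ] ℂ) (b : ι → W)
    (c e : ι → ℂ) : x (∑ i, c i • b i) (∑ i, e i • b i) =
      star c ⬝ᵥ (Matrix.of fun i j => x (b i) (b j)) *ᵥ e := by
  simp only [map_sum, LinearMap.sum_apply, map_smul, LinearMap.map_smulₛₗ, LinearMap.smul_apply,
    dotProduct, Matrix.mulVec, Pi.star_apply, Matrix.of_apply, smul_eq_mul, Finset.mul_sum,
    starRingEnd_apply]
  rw [Finset.sum_comm]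
  exact Finset.sum_congr rfl fun i _ => Finset.sum_congr rfl fun j _ => by ring

theorem exists_realization [FiniteDimensional ℂ W] {s : W →ₗ⋆[ℂ] W →ₗ[ℂ] ℂ} (hs : s.IsSymm)
    (hpos : ∀ a, a ≠ 0 → 0 < (s a a).re) {x : Fin n → W →ₗ⋆[ℂ] W →ₗ[ℂ] ℂ}
    (hx : ∀ j, (x j).IsSymm) :
    ∃ (k : ℕ) (T : W ≃ₗ[ℂ] (Fin k → ℂ)) (X : Fin n → Matrix (Fin k) (Fin k) ℂ),
      (∀ j, (X j).IsHermitian) ∧ (∀ a b, s a b = star (T a) ⬝ᵥ T b) ∧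
      ∀ j a b, x j a b = star (T a) ⬝ᵥ X j *ᵥ T b := by
  obtain ⟨k, T, hT⟩ := exists_equiv_dotProduct hs hpos
  refine ⟨k, T, fun j => Matrix.of fun p q => x j (T.symm (Pi.single p 1)) (T.symm (Pi.single q 1)),
    fun j => ?_, hT, fun j a b => ?_⟩
  · ext p q
    exact (hx j).eq _ _
  · have hsum : ∀ a, a = ∑ i, T a i • T.symm (Pi.single i 1) := fun a => by
      apply T.injective
      simp only [map_sum, map_smul, LinearEquiv.apply_symm_apply]
      exact pi_eq_sum_univ' (T a)
    conv_lhs => rw [hsum a, hsum b]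
    exact sesq_sum_smul_eq_dotProduct (x j) _ _ _

/-- The sesquilinear form on `Wᵈ` of the pencil `I + ∑ⱼ Aⱼ xⱼ` when the forms `s` and `x j` on `W`
stand for the identity and for the variable `xⱼ`. -/
noncomputable def pencilForm (A : Fin n → Matrix (Fin d) (Fin d) ℂ) (s : W →ₗ⋆[ℂ] W →ₗ[ℂ] ℂ)
    (x : Fin n → W →ₗ⋆[ℂ] W →ₗ[ℂ] ℂ) (v w : Fin d → W) : ℂ :=
  ∑ i, s (v i) (w i) + ∑ j, ∑ i, ∑ l, A j i l * x j (v i) (w l)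

theorem kronecker_mulVec_apply {I J K L : Type*} [Fintype J] [Fintype L] (M : Matrix I J ℂ)
    (N : Matrix K L ℂ) (w : J × L → ℂ) (i : I) (a : K) :
    ((M ⊗ₖ N) *ᵥ w) (i, a) = ∑ l, M i l * (N *ᵥ fun b => w (l, b)) a := by
  simp only [Matrix.mulVec, dotProduct, Fintype.sum_prod_type, Matrix.kroneckerMap_apply,
    Finset.mul_sum, mul_assoc]

theorem monicK_mulVec (A : Fin n → Matrix (Fin d) (Fin d) ℂ) (X : Fin n → Matrix (Fin k) (Fin k) ℂ)
    (v : Fin d × Fin k → ℂ) (i : Fin d) (a : Fin k) :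
    (monicK A X *ᵥ v) (i, a) = v (i, a) + ∑ j, ∑ l, A j i l * (X j *ᵥ fun b => v (l, b)) a := by
  simp only [monicK, Matrix.add_mulVec, Matrix.one_mulVec, Pi.add_apply, Matrix.sum_mulVec,
    Finset.sum_apply, kronecker_mulVec_apply]

theorem pencilForm_eq_dotProduct (A : Fin n → Matrix (Fin d) (Fin d) ℂ)
    {s : W →ₗ⋆[ℂ] W →ₗ[ℂ] ℂ} {x : Fin n → W →ₗ⋆[ℂ] W →ₗ[ℂ] ℂ} (T : W → Fin k → ℂ)
    {X : Fin n → Matrix (Fin k) (Fin k) ℂ} (hT : ∀ a b, s a b = star (T a) ⬝ᵥ T b)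
    (hX : ∀ j a b, x j a b = star (T a) ⬝ᵥ X j *ᵥ T b) (v w : Fin d → W) :
    pencilForm A s x v w = star (fun p : Fin d × Fin k => T (v p.1) p.2) ⬝ᵥ
      monicK A X *ᵥ (fun p : Fin d × Fin k => T (w p.1) p.2) := by
  simp only [pencilForm, hT, hX]
  rw [dotProduct, Fintype.sum_prod_type]
  simp only [monicK_mulVec, mul_add, Finset.sum_add_distrib, Pi.star_apply]
  congr 1
  rw [Finset.sum_comm]
  refine Finset.sum_congr rfl fun i _ => ?_
  simp only [Finset.mul_sum, dotProduct, Pi.star_apply]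
  conv_rhs => rw [Finset.sum_comm]; enter [2, j]; rw [Finset.sum_comm]
  exact Finset.sum_congr rfl fun j _ => Finset.sum_congr rfl fun l _ =>
    Finset.sum_congr rfl fun b _ => by ring

end Realization

section Minimality

variable {n d e k : ℕ}

/-- A monic hermitian pencil is minimal for its free spectrahedron if every monic hermitian pencil
with the same free spectrahedron has at least its size. -/
def IsMinimal (A : Fin n → Matrix (Fin d) (Fin d) ℂ) : Prop :=
  ∀ (e : ℕ) (C : Fin n → Matrix (Fin e) (Fin e) ℂ), (∀ j, (C j).IsHermitian) →
    (∀ (k : ℕ) (X : Fin n → Matrix (Fin k) (Fin k) ℂ), (∀ j, (X j).IsHermitian) →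
      ((monicK A X).PosSemidef ↔ (monicK C X).PosSemidef)) → d ≤ e

theorem pencilK_one (A : Fin n → Matrix (Fin d) (Fin d) ℂ)
    (X : Fin n → Matrix (Fin k) (Fin k) ℂ) : pencilK 1 A X = monicK A X := by
  rw [pencilK, monicK, Matrix.one_kronecker_one]

theorem conjTranspose_mul_pencilK_mul (A₀ : Matrix (Fin d) (Fin d) ℂ)
    (A : Fin n → Matrix (Fin d) (Fin d) ℂ) (X : Fin n → Matrix (Fin k) (Fin k) ℂ)
    (V : Matrix (Fin d) (Fin e) ℂ) :
    (V ⊗ₖ (1 : Matrix (Fin k) (Fin k) ℂ))ᴴ * pencilK A₀ A X *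
        (V ⊗ₖ (1 : Matrix (Fin k) (Fin k) ℂ)) =
      pencilK (Vᴴ * A₀ * V) (fun j => Vᴴ * A j * V) X := by
  simp only [pencilK, Matrix.conjTranspose_kronecker, Matrix.conjTranspose_one, Matrix.mul_add,
    Matrix.add_mul, Matrix.mul_sum, Matrix.sum_mul, ← Matrix.mul_kronecker_mul, Matrix.one_mul,
    Matrix.mul_one]

theorem conjTranspose_mul_monicK_mul (A : Fin n → Matrix (Fin d) (Fin d) ℂ)
    (X : Fin n → Matrix (Fin k) (Fin k) ℂ) {V : Matrix (Fin d) (Fin e) ℂ} (hV : Vᴴ * V = 1) :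
    (V ⊗ₖ (1 : Matrix (Fin k) (Fin k) ℂ))ᴴ * monicK A X *
        (V ⊗ₖ (1 : Matrix (Fin k) (Fin k) ℂ)) = monicK (fun j => Vᴴ * A j * V) X := by
  rw [← pencilK_one, conjTranspose_mul_pencilK_mul, Matrix.mul_one, hV, pencilK_one]

theorem exists_isometry_compl {x : Fin d → ℂ} (hx : x ≠ 0) :
    ∃ e < d, ∃ (V : Matrix (Fin d) (Fin e) ℂ) (c : ℂ),
      Vᴴ * V = 1 ∧ V * Vᴴ + c • Matrix.vecMulVec x (star x) = 1 := by
  obtain ⟨e, rfl⟩ := Nat.exists_eq_succ_of_ne_zero (n := d) fun h => by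
    subst h
    exact hx (Subsingleton.elim _ _)
  let y : EuclideanSpace ℂ (Fin (e + 1)) := WithLp.toLp 2 x
  have hy : y ≠ 0 := by simpa [y] using hx
  obtain ⟨b, hb⟩ := Orthonormal.exists_orthonormalBasis_extension_of_card_eq (𝕜 := ℂ)
    (v := fun _ : Fin (e + 1) => (‖y‖ : ℂ)⁻¹ • y) (s := {0}) (by simp)
    ⟨fun _ => norm_smul_inv_norm hy, fun i j hij => (hij (Subsingleton.elim i j)).elim⟩
  let U := (EuclideanSpace.basisFun (Fin (e + 1)) ℂ).toBasis.toMatrix b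
  have hU : U ∈ Matrix.unitaryGroup (Fin (e + 1)) ℂ :=
    (EuclideanSpace.basisFun (Fin (e + 1)) ℂ).toMatrix_orthonormalBasis_mem_unitary b
  have hU0 (i : Fin (e + 1)) : U i 0 = (‖y‖ : ℂ)⁻¹ * x i := by
    simp [U, Module.Basis.toMatrix_apply, hb 0 rfl, y]
  refine ⟨e, e.lt_succ_self, U.submatrix id Fin.succ, (‖y‖ : ℂ)⁻¹ * (‖y‖ : ℂ)⁻¹, ?_, ?_⟩
  · ext a b
    have := congr_fun₂ (Matrix.mem_unitaryGroup_iff'.mp hU) a.succ b.succ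
    simpa [Matrix.mul_apply, Matrix.one_apply, Matrix.star_eq_conjTranspose] using this
  · rw [← Matrix.mem_unitaryGroup_iff.mp hU]
    ext i j
    simp [Matrix.mul_apply, Fin.sum_univ_succ, hU0, Matrix.star_eq_conjTranspose,
      Matrix.vecMulVec_apply]
    ring

namespace IsMinimal

variable {A : Fin n → Matrix (Fin d) (Fin d) ℂ}

theorem exists_compression_posSemidef (hmin : IsMinimal A) (hA : ∀ j, (A j).IsHermitian)
    (he : e < d) {V : Matrix (Fin d) (Fin e) ℂ} (hV : Vᴴ * V = 1) :
    ∃ (k : ℕ) (X : Fin n → Matrix (Fin k) (Fin k) ℂ), (∀ j, (X j).IsHermitian) ∧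
      ¬ (monicK A X).PosSemidef ∧ (monicK (fun j => Vᴴ * A j * V) X).PosSemidef := by
  by_contra! h
  refine he.not_ge (hmin e _ (fun j => Matrix.isHermitian_conjTranspose_mul_mul V (hA j))
    fun k X hX => ⟨fun hpos => ?_, fun hpos => of_not_not fun hneg => h k X hX hneg hpos⟩)
  rw [← conjTranspose_mul_monicK_mul A X hV]
  exact hpos.conjTranspose_mul_mul_same _

theorem exists_not_posSemidef (hmin : IsMinimal A) (hA : ∀ j, (A j).IsHermitian)
    {x : Fin d → ℂ} (hx : x ≠ 0) :
    ∃ (k : ℕ) (X : Fin n → Matrix (Fin k) (Fin k) ℂ), (∀ j, (X j).IsHermitian) ∧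
      ¬ (monicK A X).PosSemidef ∧ ∀ w : Fin d × Fin k → ℂ,
        (Matrix.vecMulVec x (star x) ⊗ₖ (1 : Matrix (Fin k) (Fin k) ℂ)) *ᵥ w = 0 →
        0 ≤ (star w ⬝ᵥ monicK A X *ᵥ w).re := by
  obtain ⟨e, he, V, c, hV, hVc⟩ := exists_isometry_compl hx
  obtain ⟨k, X, hX, hneg, hpos⟩ := hmin.exists_compression_posSemidef hA he hV
  refine ⟨k, X, hX, hneg, fun w hw => ?_⟩
  set W := V ⊗ₖ (1 : Matrix (Fin k) (Fin k) ℂ)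
  have hWw : W *ᵥ Wᴴ *ᵥ w = w := by
    have h1 : W * Wᴴ + c • (Matrix.vecMulVec x (star x) ⊗ₖ 1) = 1 := by
      rw [Matrix.conjTranspose_kronecker, ← Matrix.mul_kronecker_mul, Matrix.conjTranspose_one,
        Matrix.one_mul, ← Matrix.smul_kronecker, ← Matrix.add_kronecker, hVc,
        Matrix.one_kronecker_one]
    have h2 := congrArg (· *ᵥ w) h1
    simpa only [Matrix.add_mulVec, Matrix.smul_mulVec, hw, smul_zero, add_zero,
      Matrix.one_mulVec, ← Matrix.mulVec_mulVec] using h2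
  rw [← conjTranspose_mul_monicK_mul A X hV] at hpos
  have h := hpos.re_dotProduct_nonneg (Wᴴ *ᵥ w)
  rwa [← Matrix.mulVec_mulVec, hWw, ← Matrix.mulVec_mulVec, Matrix.dotProduct_mulVec,
    ← Matrix.star_mulVec, Matrix.mulVec_mulVec, ← Matrix.mulVec_mulVec, hWw] at h

theorem eq_zero_of_forall_mulVec_eq_zero (hmin : IsMinimal A) (hA : ∀ j, (A j).IsHermitian)
    {v : Fin d → ℂ} (hv : ∀ j, A j *ᵥ v = 0) : v = 0 := by
  by_contra hne
  obtain ⟨e, he, V, c, hV, hVc⟩ := exists_isometry_compl hne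
  obtain ⟨k, X, -, hneg, hpos⟩ := hmin.exists_compression_posSemidef hA he hV
  have hP : (V * Vᴴ)ᴴ = V * Vᴴ := (Matrix.isHermitian_mul_conjTranspose_self V).eq
  have hAP (j : Fin n) : A j * (V * Vᴴ) = A j := by
    simpa [Matrix.mul_add, Matrix.mul_vecMulVec, hv j] using congrArg (A j * ·) hVc
  have hPA (j : Fin n) : V * Vᴴ * A j = A j := by
    simpa [(hA j).eq, hP] using congrArg Matrix.conjTranspose (hAP j)
  have hPP : IsIdempotentElem (V * Vᴴ) := by
    rw [IsIdempotentElem, Matrix.mul_assoc, ← Matrix.mul_assoc Vᴴ, hV, Matrix.one_mul]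
  have hcompl : (1 - V * Vᴴ).PosSemidef := by
    have h1 := Matrix.posSemidef_conjTranspose_mul_self (1 - V * Vᴴ)
    rwa [Matrix.conjTranspose_sub, hP, Matrix.conjTranspose_one, hPP.one_sub.eq] at h1
  have hL : monicK A X = pencilK (V * Vᴴ) A X + (1 - V * Vᴴ) ⊗ₖ 1 := by
    rw [← pencilK_one, pencilK, pencilK, add_right_comm, ← Matrix.add_kronecker, add_sub_cancel]
  have hLV : pencilK (V * Vᴴ) A X =
      (Vᴴ ⊗ₖ (1 : Matrix (Fin k) (Fin k) ℂ))ᴴ * monicK (fun j => Vᴴ * A j * V) X *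
        (Vᴴ ⊗ₖ (1 : Matrix (Fin k) (Fin k) ℂ)) := by
    rw [← pencilK_one, conjTranspose_mul_pencilK_mul]
    simp only [Matrix.conjTranspose_conjTranspose, Matrix.mul_one, ← Matrix.mul_assoc, hPA]
    simp only [Matrix.mul_assoc, hAP]
  rw [hL, hLV] at hneg
  exact hneg ((hpos.conjTranspose_mul_mul_same _).add (hcompl.kronecker .one))

theorem exists_sum_mul_eq_one (hmin : IsMinimal A) (hA : ∀ j, (A j).IsHermitian) :
    ∃ B : Fin n → Matrix (Fin d) (Fin d) ℂ, ∑ j, B j * A j = 1 := by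
  let F : (Fin d → ℂ) →ₗ[ℂ] (Fin n → Fin d → ℂ) := LinearMap.pi fun j => (A j).mulVecLin
  obtain ⟨g, hg⟩ := F.exists_leftInverse_of_injective (LinearMap.ker_eq_bot'.mpr fun v hv =>
    hmin.eq_zero_of_forall_mulVec_eq_zero hA (congrFun hv))
  refine ⟨fun j => LinearMap.toMatrix' (g ∘ₗ LinearMap.single ℂ (fun _ => Fin d → ℂ) j),
    Matrix.toLin'.injective (LinearMap.ext fun v => ?_)⟩
  calc Matrix.toLin' (∑ j, _ * A j) v = ∑ j, g (Pi.single j (F v j)) := by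
        simp [Matrix.toLin'_mul, F]
    _ = g (F v) := by rw [← map_sum, Finset.univ_sum_single]
    _ = Matrix.toLin' 1 v := by
        rw [Matrix.toLin'_one]
        exact LinearMap.congr_fun hg v

end IsMinimal

end Minimality

section PositiveMap

variable {ι m κ : Type*} [Fintype ι]

open scoped MatrixOrder in
theorem eq_zero_of_sum_conjTranspose_mul_self_eq_zero [Fintype m] {C : ι → Matrix m m ℂ}
    (h : ∑ i, (C i)ᴴ * C i = 0) (i : ι) : C i = 0 :=
  Matrix.conjTranspose_mul_self_eq_zero.mp <| (Finset.sum_eq_zero_iff_of_nonneg fun i _ =>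
    (Matrix.posSemidef_conjTranspose_mul_self (C i)).nonneg).mp h i (Finset.mem_univ i)

/-- The form `(p, q) ↦ p̄ qᵀ` of rank one matrices, conjugate-linear in `p`. -/
noncomputable def rankOne (m : Type*) : (m → ℂ) →ₗ⋆[ℂ] (m → ℂ) →ₗ[ℂ] Matrix m m ℂ :=
  LinearMap.mk₂'ₛₗ (starRingEnd ℂ) (RingHom.id ℂ) (fun p q => Matrix.vecMulVec (star p) q)
    (fun _ _ _ => by simp [Matrix.add_vecMulVec])
    (fun c p _ => by rw [star_smul, Matrix.smul_vecMulVec, starRingEnd_apply])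
    (fun _ _ _ => Matrix.vecMulVec_add ..) (fun _ _ _ => Matrix.vecMulVec_smul ..)

theorem rankOne_apply (p q : m → ℂ) : rankOne m p q = Matrix.vecMulVec (star p) q := rfl

theorem posSemidef_rankOne_self [Finite m] (p : m → ℂ) : (rankOne m p p).PosSemidef :=
  Matrix.posSemidef_vecMulVec_star_self p

theorem conjTranspose_mul_eq_sum_rankOne (M N : Matrix ι m ℂ) :
    Mᴴ * N = ∑ k, rankOne m (M k) (N k) := by
  ext i j
  simp [Matrix.mul_apply, Matrix.sum_apply, rankOne_apply, Matrix.vecMulVec_apply]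

theorem re_pos_of_posSemidef [Finite m] {ψ : Matrix m m ℂ →ₗ[ℂ] ℂ}
    (hψ : ∀ p, p ≠ 0 → 0 < (ψ (rankOne m p p)).re) {M : Matrix m m ℂ} (hM : M.PosSemidef)
    (hM0 : M ≠ 0) : 0 < (ψ M).re := by
  cases nonempty_fintype m
  obtain ⟨S, rfl⟩ := exists_eq_conjTranspose_mul_self hM
  have hnonneg (p : m → ℂ) : 0 ≤ (ψ (rankOne m p p)).re := by
    rcases eq_or_ne p 0 with rfl | hp
    · simp
    · exact (hψ p hp).le
  obtain ⟨k, hk⟩ : ∃ k, S k ≠ 0 := by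
    by_contra! h
    exact hM0 (by rw [show S = 0 from funext h, Matrix.mul_zero])
  rw [conjTranspose_mul_eq_sum_rankOne, map_sum, Complex.re_sum]
  exact Finset.sum_pos' (fun k _ => hnonneg _) ⟨k, Finset.mem_univ k, hψ _ hk⟩

/-- The completely positive map `a ↦ ∑ᵢ Vᵢᴴ a Vᵢ`. -/
noncomputable def krausMap [Fintype m] (V : ι → Matrix m m ℂ) :
    Matrix m m ℂ →ₗ[ℂ] Matrix m m ℂ where
  toFun a := ∑ i, (V i)ᴴ * a * V i
  map_add' a b := by simp only [Matrix.mul_add, Matrix.add_mul, Finset.sum_add_distrib]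
  map_smul' c a := by simp only [Matrix.mul_smul, Matrix.smul_mul, Finset.smul_sum,
    RingHom.id_apply]

theorem sub_kronecker (a b : Matrix m m ℂ) (c : Matrix κ κ ℂ) :
    (a - b) ⊗ₖ c = a ⊗ₖ c - b ⊗ₖ c := by
  ext x y
  exact sub_mul _ _ _

section Kraus

variable [Fintype m] (V : ι → Matrix m m ℂ)

theorem krausMap_apply (a : Matrix m m ℂ) : krausMap V a = ∑ i, (V i)ᴴ * a * V i := rfl

theorem krausMap_conjTranspose (a : Matrix m m ℂ) : krausMap V aᴴ = (krausMap V a)ᴴ := by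
  simp only [krausMap_apply, Matrix.conjTranspose_sum, Matrix.conjTranspose_mul,
    Matrix.conjTranspose_conjTranspose, Matrix.mul_assoc]

theorem posSemidef_krausMap {a : Matrix m m ℂ} (ha : a.PosSemidef) : (krausMap V a).PosSemidef :=
  Matrix.posSemidef_sum _ fun _ _ => ha.conjTranspose_mul_mul_same _

theorem krausMap_kronecker_one [Fintype κ] [DecidableEq κ] (a : Matrix m m ℂ) (b : Matrix κ κ ℂ) :
    krausMap (fun i => V i ⊗ₖ (1 : Matrix κ κ ℂ)) (a ⊗ₖ b) = krausMap V a ⊗ₖ b := by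
  simp only [krausMap_apply, Matrix.conjTranspose_kronecker, Matrix.conjTranspose_one,
    ← Matrix.mul_kronecker_mul, Matrix.one_mul, Matrix.mul_one]
  ext x y
  simp only [Matrix.sum_apply, Matrix.kroneckerMap_apply, Finset.sum_mul]

end Kraus

theorem posSemidef_of_forall_add_smul_one [Finite m] [DecidableEq m] {L : Matrix m m ℂ}
    (h : ∀ ε : ℝ, 0 < ε → (L + ε • (1 : Matrix m m ℂ)).PosSemidef) : L.PosSemidef := by
  cases nonempty_fintype m
  have hL : L.IsHermitian := by
    simpa using (h 1 one_pos).isHermitian.sub Matrix.isHermitian_one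
  refine posSemidef_of_re_nonneg hL fun w => ?_
  have hlim : Filter.Tendsto (fun ε : ℝ => (star w ⬝ᵥ (L + ε • (1 : Matrix m m ℂ)) *ᵥ w).re)
      (nhdsWithin 0 (Set.Ioi 0)) (nhds (star w ⬝ᵥ (L + (0 : ℝ) • (1 : Matrix m m ℂ)) *ᵥ w).re) :=
    ((by fun_prop : Continuous _).tendsto 0).mono_left nhdsWithin_le_nhds
  rw [zero_smul, add_zero] at hlim
  exact ge_of_tendsto hlim (eventually_nhdsWithin_of_forall fun ε hε =>
    (h ε hε).re_dotProduct_nonneg w)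

variable {Φ : Matrix m m ℂ →ₗ[ℂ] Matrix m m ℂ}

theorem exists_forall_posSemidef_smul_one_sub_iterate [Finite m] [DecidableEq m]
    (hΦ : ∀ a : Matrix m m ℂ, a.PosSemidef → (Φ a).PosSemidef) (hΦ1 : (1 - Φ 1).PosSemidef)
    {b : Matrix m m ℂ} (hb : b.IsHermitian) :
    ∃ r : ℝ, 0 ≤ r ∧ ∀ M, (r • (1 : Matrix m m ℂ) - Φ^[M] b).PosSemidef := by
  cases nonempty_fintype m
  obtain ⟨r, hr, hrb⟩ := exists_posSemidef_add_smul hb.neg Matrix.PosSemidef.one fun w hw h0 =>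
    absurd (by simpa using h0) hw
  refine ⟨r, hr, fun M => ?_⟩
  induction M with
  | zero => simpa only [Function.iterate_zero_apply, neg_add_eq_sub] using hrb
  | succ M ih =>
    convert (hΦ _ ih).add (hΦ1.smul hr) using 1
    rw [Function.iterate_succ_apply', map_sub, LinearMap.map_smul_of_tower]
    module

theorem posSemidef_smul_add_iterate_sub
    (hΦ : ∀ a : Matrix m m ℂ, a.PosSemidef → (Φ a).PosSemidef) {L b : Matrix m m ℂ}
    (hL : (L - Φ L).PosSemidef) (hb : (L + (Φ b - b)).PosSemidef) (M : ℕ) :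
    ((M : ℝ) • L + (Φ^[M] b - b)).PosSemidef := by
  induction M with
  | zero => simpa using Matrix.PosSemidef.zero
  | succ M ih =>
    convert ((hΦ _ ih).add hb).add (hL.smul (M.cast_nonneg (α := ℝ))) using 1
    rw [Function.iterate_succ_apply', map_add, map_sub, LinearMap.map_smul_of_tower]
    push_cast
    module

-- Telescoping: applying `Φ` repeatedly gives `M • L + (Φ^M b - b) ⪰ 0`, and the bracket is bounded.
theorem posSemidef_of_posSemidef_add_map_sub [Finite m] [DecidableEq m]
    (hΦ : ∀ a : Matrix m m ℂ, a.PosSemidef → (Φ a).PosSemidef) (hΦ1 : (1 - Φ 1).PosSemidef)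
    {L b : Matrix m m ℂ} (hL : (L - Φ L).PosSemidef) (hb : b.IsHermitian)
    (hLb : (L + (Φ b - b)).PosSemidef) : L.PosSemidef := by
  cases nonempty_fintype m
  obtain ⟨r, hr, hΦr⟩ := exists_forall_posSemidef_smul_one_sub_iterate hΦ hΦ1 hb
  obtain ⟨s, hs, hbs⟩ := exists_posSemidef_add_smul hb Matrix.PosSemidef.one fun w hw h0 =>
    absurd (by simpa using h0) hw
  refine posSemidef_of_forall_add_smul_one fun ε hε => ?_
  obtain ⟨M, hM⟩ := exists_nat_gt ((r + s) / ε)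
  have hM0 : (0 : ℝ) < M := (div_nonneg (add_nonneg hr hs) hε.le).trans_lt hM
  rw [div_lt_iff₀ hε] at hM
  have h := (((posSemidef_smul_add_iterate_sub hΦ hL hLb M).add (hΦr M)).add hbs).add
    (Matrix.PosSemidef.one.smul (sub_nonneg.mpr hM.le))
  convert h.smul (inv_nonneg.mpr hM0.le) using 1
  match_scalars <;> field_simp <;> ring

end PositiveMap

section Rigidity

variable {n d : ℕ} {ι : Type*} [Fintype ι] {A : Fin n → Matrix (Fin d) (Fin d) ℂ}
  {V : ι → Matrix (Fin d) (Fin d) ℂ}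

theorem one_sub_krausMap_kronecker_one (V : ι → Matrix (Fin d) (Fin d) ℂ) (k : ℕ) :
    1 - krausMap (fun i => V i ⊗ₖ (1 : Matrix (Fin k) (Fin k) ℂ)) 1 =
      (1 - krausMap V 1) ⊗ₖ 1 := by
  rw [sub_kronecker, ← krausMap_kronecker_one, Matrix.one_kronecker_one]

theorem monicK_sub_krausMap {k : ℕ} (hVA : ∀ j, krausMap V (A j) = A j)
    (X : Fin n → Matrix (Fin k) (Fin k) ℂ) :
    monicK A X - krausMap (fun i => V i ⊗ₖ (1 : Matrix (Fin k) (Fin k) ℂ)) (monicK A X) =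
      (1 - krausMap V 1) ⊗ₖ 1 := by
  simp only [monicK, map_add, map_sum, krausMap_kronecker_one, hVA,
    ← one_sub_krausMap_kronecker_one]
  abel

theorem IsMinimal.eq_zero_of_posSemidef_krausMap_sub (hmin : IsMinimal A)
    (hA : ∀ j, (A j).IsHermitian)
    (hV : (1 - krausMap V 1).PosSemidef) (hVA : ∀ j, krausMap V (A j) = A j)
    {a : Matrix (Fin d) (Fin d) ℂ} (ha : a.IsHermitian) {p : Fin d → ℂ}
    (hp : (krausMap V a - a - rankOne _ p p).PosSemidef) : p = 0 := by
  by_contra hne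
  obtain ⟨k, X, hX, hneg, hpos⟩ := hmin.exists_not_posSemidef hA (star_ne_zero.mpr hne)
  rw [star_star, ← rankOne_apply] at hpos
  refine hneg (posSemidef_of_forall_add_smul_one fun δ hδ => ?_)
  obtain ⟨C, hC, hLC⟩ := exists_posSemidef_add_smul
    ((isHermitian_monicK hA hX).add (Matrix.isHermitian_one.smul (.all δ)))
    ((posSemidef_rankOne_self p).kronecker (Matrix.PosSemidef.one (n := Fin k))) fun w hw h0 => by
      rw [Matrix.add_mulVec, dotProduct_add, Complex.add_re, Matrix.smul_mulVec,
        Matrix.one_mulVec, dotProduct_smul, Complex.smul_re]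
      exact add_pos_of_nonneg_of_pos (hpos w h0) (mul_pos hδ (Complex.pos_iff.mp
        (Matrix.dotProduct_star_self_pos_iff.mpr hw)).1)
  have hV1 : ((1 - krausMap V 1) ⊗ₖ (1 : Matrix (Fin k) (Fin k) ℂ)).PosSemidef :=
    hV.kronecker .one
  refine posSemidef_of_posSemidef_add_map_sub (b := C • (a ⊗ₖ (1 : Matrix (Fin k) (Fin k) ℂ)))
    (fun _ => posSemidef_krausMap fun i => V i ⊗ₖ (1 : Matrix (Fin k) (Fin k) ℂ))
    (one_sub_krausMap_kronecker_one V k ▸ hV1) ?_ ?_ ?_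
  · rw [map_add, LinearMap.map_smul_of_tower, add_sub_add_comm, monicK_sub_krausMap hVA X,
      ← smul_sub, one_sub_krausMap_kronecker_one]
    exact hV1.add (hV1.smul hδ.le)
  · rw [Matrix.IsHermitian, Matrix.conjTranspose_smul, Matrix.conjTranspose_kronecker, ha.eq,
      Matrix.conjTranspose_one, star_trivial]
  · convert hLC.add ((hp.kronecker Matrix.PosSemidef.one).smul hC) using 1
    rw [LinearMap.map_smul_of_tower, krausMap_kronecker_one, sub_kronecker, sub_kronecker]
    module

open scoped MatrixOrder in
theorem IsMinimal.eq_zero_of_krausMap_sub_eq_sum_rankOne (hmin : IsMinimal A)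
    (hA : ∀ j, (A j).IsHermitian) (hV : (1 - krausMap V 1).PosSemidef)
    (hVA : ∀ j, krausMap V (A j) = A j) {N : ℕ} {p : Fin N → Fin d → ℂ}
    {a : Matrix (Fin d) (Fin d) ℂ} (ha : krausMap V a - a = ∑ i, rankOne _ (p i) (p i))
    (i : Fin N) : p i = 0 := by
  have hsum : (∑ i, rankOne _ (p i) (p i)).IsHermitian :=
    (Matrix.posSemidef_sum Finset.univ fun i _ => posSemidef_rankOne_self (p i)).isHermitian
  have ha' : krausMap V aᴴ - aᴴ = ∑ i, rankOne _ (p i) (p i) := by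
    rw [krausMap_conjTranspose, ← Matrix.conjTranspose_sub, ha, hsum.eq]
  refine hmin.eq_zero_of_posSemidef_krausMap_sub hA hV hVA (a := (1 / 2 : ℝ) • (a + aᴴ)) ?_ ?_
  · simp [Matrix.IsHermitian, Matrix.conjTranspose_smul, add_comm]
  · rw [LinearMap.map_smul_of_tower, ← smul_sub, map_add, add_sub_add_comm, ha, ha',
      ← two_smul ℝ, smul_smul, one_div_mul_cancel two_ne_zero, one_smul]
    exact Matrix.le_iff.mp (Finset.single_le_sum
      (fun i _ => (posSemidef_rankOne_self (p i)).nonneg) (Finset.mem_univ i))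

theorem IsMinimal.exists_faithful_invariant_dual (hmin : IsMinimal A) (hA : ∀ j, (A j).IsHermitian)
    (hV : (1 - krausMap V 1).PosSemidef) (hVA : ∀ j, krausMap V (A j) = A j) :
    ∃ ψ : Matrix (Fin d) (Fin d) ℂ →ₗ[ℂ] ℂ, (∀ a, ψ (krausMap V a) = ψ a) ∧
      ∀ p, p ≠ 0 → 0 < (ψ (rankOne _ p p)).re := by
  let st : Matrix (Fin d) (Fin d) ℂ →ₗ⋆[ℂ] Matrix (Fin d) (Fin d) ℂ :=
    (Matrix.conjTransposeLinearEquiv (Fin d) (Fin d) ℂ ℂ).toLinearMap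
  have hR : ∀ v ∈ LinearMap.range (krausMap V - LinearMap.id),
      st v ∈ LinearMap.range (krausMap V - LinearMap.id) := by
    rintro _ ⟨a, rfl⟩
    exact ⟨aᴴ, by simp [st, krausMap_conjTranspose]⟩
  obtain ⟨ψ, hψR, -, hψ⟩ := exists_dual_pos_of_submodule (rankOne (Fin d)) (st := st)
    Matrix.conjTranspose_conjTranspose (fun p => (posSemidef_rankOne_self p).isHermitian) _ hR
    fun N p ⟨a, ha⟩ => hmin.eq_zero_of_krausMap_sub_eq_sum_rankOne hA hV hVA ha
  refine ⟨ψ, fun a => ?_, hψ⟩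
  rw [← sub_eq_zero, ← map_sub]
  exact hψR _ ⟨a, rfl⟩

theorem sum_conjTranspose_commutator_mul_self {a : Matrix (Fin d) (Fin d) ℂ} (ha : a.IsHermitian)
    (hV : krausMap V 1 = 1) (hVa : krausMap V a = a) :
    ∑ i, (V i * a - a * V i)ᴴ * (V i * a - a * V i) = krausMap V (a * a) - a * a := by
  have h (i : ι) : (V i * a - a * V i)ᴴ * (V i * a - a * V i) =
      a * ((V i)ᴴ * 1 * V i) * a - a * ((V i)ᴴ * a * V i) - ((V i)ᴴ * a * V i) * a +
        (V i)ᴴ * (a * a) * V i := by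
    simp only [Matrix.conjTranspose_sub, Matrix.conjTranspose_mul, ha.eq]
    noncomm_ring
  simp only [h, Finset.sum_add_distrib, Finset.sum_sub_distrib, ← Finset.mul_sum,
    ← Finset.sum_mul, ← krausMap_apply, hV, hVa]
  rw [Matrix.mul_one]
  abel

theorem IsMinimal.krausMap_one_eq_one_and_commute (hmin : IsMinimal A) (hA : ∀ j, (A j).IsHermitian)
    (hV : (1 - krausMap V 1).PosSemidef) (hVA : ∀ j, krausMap V (A j) = A j) :
    krausMap V 1 = 1 ∧ ∀ i j, Commute (V i) (A j) := by
  obtain ⟨ψ, hψV, hψ⟩ := hmin.exists_faithful_invariant_dual hA hV hVA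
  have hfaithful {M : Matrix (Fin d) (Fin d) ℂ} (hM : M.PosSemidef) (h : ψ M = 0) : M = 0 := by
    by_contra hne
    simpa [h] using re_pos_of_posSemidef hψ hM hne
  have hone : krausMap V 1 = 1 :=
    (sub_eq_zero.mp (hfaithful hV (by rw [map_sub, hψV, sub_self]))).symm
  refine ⟨hone, fun i j => sub_eq_zero.mp ?_⟩
  refine eq_zero_of_sum_conjTranspose_mul_self_eq_zero (C := fun i => V i * A j - A j * V i)
    (hfaithful (Matrix.posSemidef_sum _ fun i _ => Matrix.posSemidef_conjTranspose_mul_self _) ?_) i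
  rw [sum_conjTranspose_commutator_mul_self (hA j) hone (hVA j), map_sub, hψV, sub_self]

end Rigidity

section Cayley

variable {n d : ℕ} {ι m : Type*} [Fintype ι] [Fintype m] [DecidableEq m]

theorem isUnit_one_add_of_posSemidef {h : Matrix m m ℂ} (hh : (h + hᴴ).PosSemidef) :
    IsUnit (1 + h) := by
  rw [← Matrix.mulVec_injective_iff_isUnit]
  refine (injective_iff_map_eq_zero (Matrix.mulVecLin (1 + h))).mpr fun w hw => ?_
  rw [Matrix.mulVecLin_apply, Matrix.add_mulVec, Matrix.one_mulVec] at hw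
  by_contra hne
  have hpos := (Complex.pos_iff.mp (Matrix.dotProduct_star_self_pos_iff.mpr hne)).1
  have hhw : star w ⬝ᵥ h *ᵥ w = -(star w ⬝ᵥ w) := by
    rw [eq_neg_of_add_eq_zero_right hw, dotProduct_neg]
  have hhw' : star w ⬝ᵥ hᴴ *ᵥ w = -(star w ⬝ᵥ w) := by
    rw [Matrix.dotProduct_mulVec, ← Matrix.star_mulVec, eq_neg_of_add_eq_zero_right hw, star_neg,
      neg_dotProduct]
  have := hh.re_dotProduct_nonneg w
  rw [Matrix.add_mulVec, dotProduct_add, hhw, hhw'] at this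
  simp only [RCLike.re_to_complex, Complex.add_re, Complex.neg_re] at this
  linarith

-- A solution of the dissipation identity `Φ(M) = h M + M hᴴ` is turned into `Ψ(M) = M` by the
-- Cayley transform of `h`.
theorem krausMap_cayley (q : ι → Matrix m m ℂ) {h R : Matrix m m ℂ} (hR : (1 + hᴴ) * R = 1)
    (M : Matrix m m ℂ) :
    krausMap (fun o : Option ι => o.elim ((1 - hᴴ) * R) (q · * R)) M =
      M + Rᴴ * (krausMap q M - (2 : ℂ) • (h * M + M * hᴴ)) * R := by
  have hM : M = Rᴴ * ((1 + h) * M * (1 + hᴴ)) * R := by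
    have hR' : Rᴴ * (1 + h) = 1 := by simpa using congrArg Matrix.conjTranspose hR
    rw [Matrix.mul_assoc _ _ R, Matrix.mul_assoc _ _ R, hR, Matrix.mul_one, ← Matrix.mul_assoc,
      hR', Matrix.one_mul]
  have hq : krausMap (q · * R) M = Rᴴ * krausMap q M * R := by
    simp only [krausMap_apply, Matrix.conjTranspose_mul, Matrix.mul_sum, Matrix.sum_mul,
      Matrix.mul_assoc]
  have hnone : ((1 - hᴴ) * R)ᴴ * M * ((1 - hᴴ) * R) = Rᴴ * ((1 - h) * M * (1 - hᴴ)) * R := by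
    simp only [Matrix.conjTranspose_mul, Matrix.conjTranspose_sub, Matrix.conjTranspose_one,
      Matrix.conjTranspose_conjTranspose, Matrix.mul_assoc]
  rw [krausMap_apply, Fintype.sum_option]
  change _ + krausMap (q · * R) M = _
  nth_rw 3 [hM]
  rw [hq, Option.elim_none, hnone, ← Matrix.add_mul, ← Matrix.mul_add, ← Matrix.add_mul,
    ← Matrix.mul_add]
  congr 2
  rw [two_smul]
  noncomm_ring

variable {A : Fin n → Matrix (Fin d) (Fin d) ℂ}

theorem IsMinimal.commute_and_eq_zero_of_krausMap_eq (hmin : IsMinimal A)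
    (hA : ∀ j, (A j).IsHermitian) {q : ι → Matrix (Fin d) (Fin d) ℂ}
    {S g : Matrix (Fin d) (Fin d) ℂ} (hS : S.PosSemidef) (h1 : krausMap q 1 + S = g + gᴴ)
    (hqA : ∀ j, krausMap q (A j) = g * A j + A j * gᴴ) :
    (∀ i j, Commute (q i) (A j)) ∧ S = 0 := by
  obtain ⟨h, rfl⟩ : ∃ h : Matrix (Fin d) (Fin d) ℂ, g = (2 : ℝ) • h :=
    ⟨(2⁻¹ : ℝ) • g, by rw [smul_smul]; norm_num⟩
  have hpos : (hᴴ + hᴴᴴ).PosSemidef := by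
    have := ((posSemidef_krausMap (V := q) Matrix.PosSemidef.one).add hS).smul
      (show (0 : ℝ) ≤ 2⁻¹ by norm_num)
    rw [h1, Matrix.conjTranspose_smul, star_trivial, ← smul_add, smul_smul] at this
    simpa [add_comm] using this
  obtain ⟨T, hT⟩ := isUnit_one_add_of_posSemidef hpos
  set R : Matrix (Fin d) (Fin d) ℂ := ↑T⁻¹ with hRT
  have hR : (1 + hᴴ) * R = 1 := by rw [← hT, hRT, T.mul_inv]
  set V : Option ι → Matrix (Fin d) (Fin d) ℂ := fun o => o.elim ((1 - hᴴ) * R) (q · * R) with hV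
  have hV1 : krausMap V 1 = 1 - Rᴴ * S * R := by
    rw [hV, krausMap_cayley q hR, eq_sub_of_add_eq h1]
    simp only [two_smul, Matrix.conjTranspose_add, Matrix.mul_one, Matrix.one_mul]
    noncomm_ring
  have hVA (j) : krausMap V (A j) = A j := by
    rw [hV, krausMap_cayley q hR, hqA]
    simp only [two_smul, Matrix.conjTranspose_add]
    noncomm_ring
  have hV1' : (1 - krausMap V 1).PosSemidef := by
    rw [hV1, sub_sub_cancel]
    exact hS.conjTranspose_mul_mul_same R
  obtain ⟨h1V, hcomm⟩ := hmin.krausMap_one_eq_one_and_commute hA hV1' hVA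
  have hTA (j) : Commute (T : Matrix (Fin d) (Fin d) ℂ) (A j) := by
    have hnone : V none = (2 : ℝ) • R - 1 := by
      rw [← hR, two_smul]
      simp only [hV, Option.elim_none]
      noncomm_ring
    have := (hcomm none j).add_left (Commute.one_left _)
    rw [hnone, sub_add_cancel] at this
    exact Commute.units_inv_left_iff.mp ((Commute.smul_left_iff₀ two_ne_zero).mp this)
  refine ⟨fun i j => ?_, ?_⟩
  · have := (hcomm (some i) j).mul_left (hTA j)
    rwa [show V (some i) = q i * R from rfl, Matrix.mul_assoc, T.inv_mul, Matrix.mul_one] at this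
  · have hRSR : Rᴴ * S * R = 0 := by simpa using hV1.symm.trans h1V
    have hTR : (T : Matrix (Fin d) (Fin d) ℂ)ᴴ * Rᴴ = 1 := by
      rw [← Matrix.conjTranspose_mul, T.inv_mul, Matrix.conjTranspose_one]
    calc S = (T : Matrix (Fin d) (Fin d) ℂ)ᴴ * Rᴴ * S * (R * T) := by
          rw [hTR, T.inv_mul, Matrix.one_mul, Matrix.mul_one]
      _ = (T : Matrix (Fin d) (Fin d) ℂ)ᴴ * (Rᴴ * S * R) * T := by
          simp only [Matrix.mul_assoc]
      _ = 0 := by rw [hRSR, Matrix.mul_zero, Matrix.zero_mul]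

end Cayley

section KernelGenerator

variable {n d k : ℕ} {W : Type*} [AddCommGroup W] [Module ℂ W]

/-- The matrices commuting with every coefficient `Aⱼ` of a pencil. -/
def commutant (A : Fin n → Matrix (Fin d) (Fin d) ℂ) : Submodule ℂ (Matrix (Fin d) (Fin d) ℂ) :=
  Subalgebra.toSubmodule (Subalgebra.centralizer ℂ (Set.range A))

theorem mem_commutant {A : Fin n → Matrix (Fin d) (Fin d) ℂ} {z : Matrix (Fin d) (Fin d) ℂ} :
    z ∈ commutant A ↔ ∀ j, z * A j = A j * z := by
  simp [commutant, Subalgebra.mem_centralizer_iff, eq_comm]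

/-- The tuple `X` lies in the free spectrahedron of the pencil `L` with coefficients `A`, and
`ker L(X)` consists of the vectors `(z ⊗ 1) u` with `z` in the commutant of `A`. -/
structure IsKernelGenerator (A : Fin n → Matrix (Fin d) (Fin d) ℂ)
    (X : Fin n → Matrix (Fin k) (Fin k) ℂ) (u : Fin d → Fin k → ℂ) : Prop where
  isHermitian : ∀ j, (X j).IsHermitian
  posSemidef : (monicK A X).PosSemidef
  mulVec_eq_zero : monicK A X *ᵥ (fun p => u p.1 p.2) = 0
  exists_mem_commutant : ∀ w : Fin d × Fin k → ℂ, monicK A X *ᵥ w = 0 →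
    ∃ z ∈ commutant A, ∀ i a, w (i, a) = ∑ l, z i l * u l a

theorem exists_isKernelGenerator [FiniteDimensional ℂ W]
    {A : Fin n → Matrix (Fin d) (Fin d) ℂ} (hA : ∀ j, (A j).IsHermitian)
    {s : W →ₗ⋆[ℂ] W →ₗ[ℂ] ℂ} (hs : s.IsSymm) (hs0 : ∀ a, a ≠ 0 → 0 < (s a a).re)
    {x : Fin n → W →ₗ⋆[ℂ] W →ₗ[ℂ] ℂ} (hx : ∀ j, (x j).IsSymm) {u : Fin d → W}
    (hpos : ∀ v, 0 ≤ (pencilForm A s x v v).re) (hu : ∀ v, pencilForm A s x v u = 0)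
    (hker : ∀ v, (pencilForm A s x v v).re = 0 → ∃ z ∈ commutant A, ∀ i, v i = ∑ l, z i l • u l) :
    ∃ (k : ℕ) (T : W ≃ₗ[ℂ] (Fin k → ℂ)) (X : Fin n → Matrix (Fin k) (Fin k) ℂ),
      IsKernelGenerator A X (T ∘ u) := by
  obtain ⟨k, T, X, hXh, hT, hX⟩ := exists_realization hs hs0 hx
  have hform := pencilForm_eq_dotProduct A T hT hX
  have hsurj (w : Fin d × Fin k → ℂ) : ∃ v : Fin d → W, (fun p => T (v p.1) p.2) = w :=
    ⟨fun i => T.symm fun a => w (i, a), by simp⟩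
  refine ⟨k, T, X, hXh, ?_, ?_, fun w hw => ?_⟩
  · refine posSemidef_of_re_nonneg (isHermitian_monicK hA hXh) fun w => ?_
    obtain ⟨v, rfl⟩ := hsurj w
    exact (hform v v).symm ▸ hpos v
  · obtain ⟨v, hv⟩ := hsurj (monicK A X *ᵥ fun p => T (u p.1) p.2)
    refine dotProduct_star_self_eq_zero.mp ?_
    nth_rw 1 [Function.comp_def, ← hv]
    exact (hform v u).symm.trans (hu v)
  · obtain ⟨v, rfl⟩ := hsurj w
    obtain ⟨z, hz, hv⟩ := hker v (by rw [hform, hw, dotProduct_zero, Complex.zero_re])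
    refine ⟨z, hz, fun i a => ?_⟩
    simp only [hv i, map_sum, map_smul, Finset.sum_apply, Pi.smul_apply, smul_eq_mul,
      Function.comp_apply]

end KernelGenerator

section BaseRepresentation

variable {n d : ℕ} {A : Fin n → Matrix (Fin d) (Fin d) ℂ}

/-- The constant coefficient and the coefficients of `x₁, …, xₙ` of the polynomial `pᴴ L q`, where
`L` is the monic pencil with coefficients `A`. -/
noncomputable def pencilGram (A : Fin n → Matrix (Fin d) (Fin d) ℂ) :
    Matrix (Fin d) (Fin d) ℂ →ₗ⋆[ℂ] Matrix (Fin d) (Fin d) ℂ →ₗ[ℂ]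
      Matrix (Fin d) (Fin d) ℂ × (Fin n → Matrix (Fin d) (Fin d) ℂ) :=
  LinearMap.mk₂'ₛₗ (starRingEnd ℂ) (RingHom.id ℂ) (fun p q => (pᴴ * q, fun j => pᴴ * A j * q))
    (fun _ _ _ => by ext <;> simp [Matrix.add_mul]) (fun _ _ _ => by ext <;> simp)
    (fun _ _ _ => by ext <;> simp [Matrix.mul_add]) (fun _ _ _ => by ext <;> simp)

/-- The adjoint of an affine linear matrix polynomial, in terms of its coefficients. -/
noncomputable def coeffAdj (n d : ℕ) :
    Matrix (Fin d) (Fin d) ℂ × (Fin n → Matrix (Fin d) (Fin d) ℂ) →ₗ⋆[ℂ]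
      Matrix (Fin d) (Fin d) ℂ × (Fin n → Matrix (Fin d) (Fin d) ℂ) where
  toFun v := (v.1ᴴ, fun j => (v.2 j)ᴴ)
  map_add' _ _ := by ext <;> simp
  map_smul' _ _ := by ext <;> simp

theorem pencilGram_apply (p q : Matrix (Fin d) (Fin d) ℂ) :
    pencilGram A p q = (pᴴ * q, fun j => pᴴ * A j * q) := rfl

theorem coeffAdj_apply (v : Matrix (Fin d) (Fin d) ℂ × (Fin n → Matrix (Fin d) (Fin d) ℂ)) :
    coeffAdj n d v = (v.1ᴴ, fun j => (v.2 j)ᴴ) := rfl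

theorem coeffAdj_involutive : Function.Involutive (coeffAdj n d) := fun v => by
  simp [coeffAdj_apply]

theorem coeffAdj_pencilGram (hA : ∀ j, (A j).IsHermitian) (p q : Matrix (Fin d) (Fin d) ℂ) :
    coeffAdj n d (pencilGram A p q) = pencilGram A q p := by
  simp [coeffAdj_apply, pencilGram_apply, (hA _).eq, Matrix.mul_assoc]

theorem rankOne_conjTranspose {m : Type*} (p q : m → ℂ) : (rankOne m p q)ᴴ = rankOne m q p := by
  simp [rankOne_apply, Matrix.conjTranspose_vecMulVec]

theorem IsMinimal.mem_commutant_and_eq_zero_of_sum_pencilGram_eq {ι : Type*} [Fintype ι]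
    (hmin : IsMinimal A) (hA : ∀ j, (A j).IsHermitian) {q : ι → Matrix (Fin d) (Fin d) ℂ}
    {p : ι → Fin d → ℂ} {g : Matrix (Fin d) (Fin d) ℂ}
    (h : ∑ i, (pencilGram A (q i) (q i) + (rankOne (Fin d) (p i) (p i), 0)) =
      (g + gᴴ, fun j => g * A j + A j * gᴴ)) :
    (∀ i, q i ∈ commutant A) ∧ p = 0 := by
  have hfst := congrArg Prod.fst h
  have hsnd j := congrFun (congrArg Prod.snd h) j
  rw [Prod.fst_sum] at hfst
  simp only [Prod.snd_sum, Finset.sum_apply] at hsnd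
  have hgram : ∑ i, rankOne (Fin d) (p i) (p i) = (Matrix.of p)ᴴ * Matrix.of p :=
    (conjTranspose_mul_eq_sum_rankOne (Matrix.of p) (Matrix.of p)).symm
  obtain ⟨hq, hp⟩ := hmin.commute_and_eq_zero_of_krausMap_eq hA
    (Matrix.posSemidef_conjTranspose_mul_self (Matrix.of p))
    (by simpa [← hgram, krausMap_apply, pencilGram_apply, Finset.sum_add_distrib] using hfst)
    fun j => by simpa [krausMap_apply, pencilGram_apply] using hsnd j
  exact ⟨fun i => mem_commutant.mpr (hq i), Matrix.conjTranspose_mul_self_eq_zero.mp hp⟩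

theorem IsMinimal.exists_dual_pos_of_disjoint (hmin : IsMinimal A) (hA : ∀ j, (A j).IsHermitian)
    {C : Submodule ℂ (Matrix (Fin d) (Fin d) ℂ)} (hC : Disjoint (commutant A) C) :
    ∃ ψ : Matrix (Fin d) (Fin d) ℂ × (Fin n → Matrix (Fin d) (Fin d) ℂ) →ₗ[ℂ] ℂ,
      (∀ v, ψ (coeffAdj n d v) = star (ψ v)) ∧ (∀ g, ψ (g, fun j => g * A j) = 0) ∧
      ∀ q ∈ C, ∀ p : Fin d → ℂ, (q, p) ≠ 0 →
        0 < (ψ (pencilGram A q q + (rankOne (Fin d) p p, 0))).re := by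
  let S : C × (Fin d → ℂ) →ₗ⋆[ℂ] C × (Fin d → ℂ) →ₗ[ℂ]
      Matrix (Fin d) (Fin d) ℂ × (Fin n → Matrix (Fin d) (Fin d) ℂ) :=
    LinearMap.mk₂'ₛₗ (starRingEnd ℂ) (RingHom.id ℂ)
      (fun a b => pencilGram A a.1 b.1 + (rankOne (Fin d) a.2 b.2, 0))
      (fun _ _ _ => by ext <;> simp [add_add_add_comm]) (fun _ _ _ => by ext <;> simp)
      (fun _ _ _ => by ext <;> simp [add_add_add_comm]) (fun _ _ _ => by ext <;> simp)
  let rel : Matrix (Fin d) (Fin d) ℂ × Matrix (Fin d) (Fin d) ℂ →ₗ[ℂ]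
      Matrix (Fin d) (Fin d) ℂ × (Fin n → Matrix (Fin d) (Fin d) ℂ) :=
    { toFun := fun a => (a.1 + a.2, fun j => a.1 * A j + A j * a.2)
      map_add' := fun _ _ => by ext <;> simp [Matrix.add_mul, Matrix.mul_add, add_add_add_comm]
      map_smul' := fun _ _ => by ext <;> simp [mul_add] }
  have hrel (g h) : rel (g, h) = (g + h, fun j => g * A j + A j * h) := rfl
  have hadj (g h) : coeffAdj n d (rel (g, h)) = rel (hᴴ, gᴴ) := by
    simp [hrel, coeffAdj_apply, (hA _).eq, add_comm]
  have hSadj (a : C × (Fin d → ℂ)) : coeffAdj n d (S a a) = S a a := by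
    change coeffAdj n d (_ + _) = _ + _
    rw [map_add, coeffAdj_pencilGram hA]
    simp [coeffAdj_apply, rankOne_conjTranspose, Pi.zero_def]
  obtain ⟨ψ, hψrel, hψadj, hψ⟩ := exists_dual_pos_of_submodule S coeffAdj_involutive hSadj
    (LinearMap.range rel) (by rintro _ ⟨⟨g, h⟩, rfl⟩; exact ⟨_, (hadj g h).symm⟩)
    fun N a ⟨⟨g, h⟩, hgh⟩ => by
      have hsymm : rel ((2⁻¹ : ℂ) • (g + hᴴ), ((2⁻¹ : ℂ) • (g + hᴴ))ᴴ) = rel (g, h) := by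
        have : coeffAdj n d (rel (g, h)) = rel (g, h) := by
          rw [hgh, map_sum]
          exact Finset.sum_congr rfl fun i _ => hSadj _
        calc _ = (2⁻¹ : ℂ) • (rel (g, h) + rel (hᴴ, gᴴ)) := by
              rw [← map_add, ← map_smul]
              simp [add_comm]
          _ = rel (g, h) := by rw [← hadj, this, ← two_smul ℂ, smul_smul]; norm_num
      obtain ⟨hq, hp⟩ := hmin.mem_commutant_and_eq_zero_of_sum_pencilGram_eq hA
        (hgh.symm.trans hsymm.symm)
      exact fun i => Prod.ext (Subtype.ext (Submodule.disjoint_def.mp hC _ (hq i) (a i).1.2))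
        (congrFun hp i)
  refine ⟨ψ, hψadj, fun g => ?_, fun q hq p hqp => hψ (⟨q, hq⟩, p) (by simpa using hqp)⟩
  simpa [hrel] using hψrel _ ⟨(g, 0), rfl⟩

theorem IsMinimal.exists_dual_pencilGram (hmin : IsMinimal A) (hA : ∀ j, (A j).IsHermitian) :
    ∃ ψ : Matrix (Fin d) (Fin d) ℂ × (Fin n → Matrix (Fin d) (Fin d) ℂ) →ₗ[ℂ] ℂ,
      (∀ v, ψ (coeffAdj n d v) = star (ψ v)) ∧ (∀ g, ψ (g, fun j => g * A j) = 0) ∧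
      (∀ p : Fin d → ℂ, p ≠ 0 → 0 < (ψ (rankOne (Fin d) p p, 0)).re) ∧
      ∀ q, 0 ≤ (ψ (pencilGram A q q)).re ∧
        ((ψ (pencilGram A q q)).re = 0 → q ∈ commutant A) := by
  obtain ⟨C, hC⟩ := Submodule.exists_isCompl (commutant A)
  obtain ⟨ψ, hψadj, hψ0, hψ⟩ := hmin.exists_dual_pos_of_disjoint hA hC.disjoint
  have hright {z} (hz : z ∈ commutant A) (q) : ψ (pencilGram A q z) = 0 := by
    rw [← hψ0 (qᴴ * z)]
    simp only [pencilGram_apply, Matrix.mul_assoc, mem_commutant.mp hz]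
  have hleft {z} (hz : z ∈ commutant A) (q) : ψ (pencilGram A z q) = 0 := by
    rw [← coeffAdj_pencilGram hA, hψadj, hright hz, star_zero]
  refine ⟨ψ, hψadj, hψ0, fun p hp => by simpa using hψ 0 C.zero_mem p (by simp [hp]), fun q => ?_⟩
  obtain ⟨z, hz, c, hc, rfl⟩ := Submodule.mem_sup.mp (hC.sup_eq_top.ge (Submodule.mem_top (x := q)))
  simp only [map_add, LinearMap.add_apply, hright hz, hleft hz, zero_add]
  rcases eq_or_ne c 0 with rfl | hc0
  · simpa using hz
  · have := hψ c hc 0 (by simp [hc0])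
    simp only [map_zero, Prod.mk_zero_zero, add_zero] at this
    exact ⟨this.le, fun h => absurd h this.ne'⟩

theorem pencilGram_eq_sum_rankOne (v w : Matrix (Fin d) (Fin d) ℂ) :
    pencilGram A v w = ∑ i, (rankOne (Fin d) (v i) (w i), 0) +
      ∑ j, ∑ i, ∑ l, A j i l • (0, Pi.single j (rankOne (Fin d) (v i) (w l))) := by
  have hrow j i : (A j * w) i = ∑ l, A j i l • w l := by
    funext a
    simp [Matrix.mul_apply]
  have hlin j : vᴴ * A j * w = ∑ i, ∑ l, A j i l • rankOne (Fin d) (v i) (w l) := by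
    rw [Matrix.mul_assoc, conjTranspose_mul_eq_sum_rankOne]
    simp only [hrow, map_sum, map_smul]
  ext1
  · simp [pencilGram_apply, conjTranspose_mul_eq_sum_rankOne, Prod.fst_sum]
  · simp only [Prod.snd_add, Prod.snd_sum, Prod.smul_snd, Finset.sum_const_zero, zero_add,
      ← Pi.single_smul, pencilGram_apply, hlin]
    refine (Finset.univ_sum_single _).symm.trans (Finset.sum_congr rfl fun j _ => ?_)
    exact (map_sum (AddMonoidHom.single (fun _ => Matrix (Fin d) (Fin d) ℂ) j) _ _).trans
      (Finset.sum_congr rfl fun i _ =>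
        map_sum (AddMonoidHom.single (fun _ => Matrix (Fin d) (Fin d) ℂ) j) _ _)

theorem IsMinimal.exists_linearIndependent_isKernelGenerator (hmin : IsMinimal A)
    (hA : ∀ j, (A j).IsHermitian) :
    ∃ (k : ℕ) (X : Fin n → Matrix (Fin k) (Fin k) ℂ) (u : Fin d → Fin k → ℂ),
      IsKernelGenerator A X u ∧ LinearIndependent ℂ u := by
  obtain ⟨ψ, hψadj, hψ0, hψpos, hψ⟩ := hmin.exists_dual_pencilGram hA
  obtain ⟨s, hsψ⟩ : ∃ s : (Fin d → ℂ) →ₗ⋆[ℂ] (Fin d → ℂ) →ₗ[ℂ] ℂ,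
      ∀ a b, s a b = ψ (rankOne (Fin d) a b, 0) :=
    ⟨(rankOne (Fin d)).compr₂ₛₗ (ψ ∘ₗ LinearMap.inl ℂ _ _), fun _ _ => rfl⟩
  obtain ⟨x, hxψ⟩ : ∃ x : Fin n → (Fin d → ℂ) →ₗ⋆[ℂ] (Fin d → ℂ) →ₗ[ℂ] ℂ,
      ∀ j a b, x j a b = ψ (0, Pi.single j (rankOne (Fin d) a b)) :=
    ⟨fun j => (rankOne (Fin d)).compr₂ₛₗ
      (ψ ∘ₗ LinearMap.inr ℂ _ _ ∘ₗ LinearMap.single ℂ (fun _ => _) j), fun _ _ _ => rfl⟩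
  have hs : s.IsSymm := ⟨fun a b => by
    rw [starRingEnd_apply, hsψ, hsψ, ← hψadj]
    simp [coeffAdj_apply, rankOne_conjTranspose, Pi.zero_def]⟩
  have hx j : (x j).IsSymm := ⟨fun a b => by
    rw [starRingEnd_apply, hxψ, hxψ, ← rankOne_conjTranspose a b, ← hψadj,
      coeffAdj_apply, Matrix.conjTranspose_zero]
    congr 2
    funext l
    exact Pi.apply_single (fun _ (a : Matrix (Fin d) (Fin d) ℂ) => aᴴ) (by simp) j _ l⟩
  have hform (v w : Fin d → Fin d → ℂ) :
      pencilForm A s x v w = ψ (pencilGram A (Matrix.of v) (Matrix.of w)) := by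
    simp only [pencilGram_eq_sum_rankOne, pencilForm, map_add, map_sum, map_smul, smul_eq_mul, hsψ,
      hxψ]
    rfl
  have hone : (Matrix.of fun l : Fin d => (Pi.single l 1 : Fin d → ℂ)) = 1 := by
    ext i l
    simp [Matrix.one_apply, Pi.single_apply, eq_comm]
  have hnonneg (v) : 0 ≤ (pencilForm A s x v v).re := (hform v v).symm ▸ (hψ _).1
  have hu (v) : pencilForm A s x v (fun l => Pi.single l 1) = 0 := by
    rw [hform, hone, pencilGram_apply, Matrix.mul_one, ← hψ0 (Matrix.of v)ᴴ]
    simp only [Matrix.mul_one]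
  have hker (v) (hv : (pencilForm A s x v v).re = 0) :
      ∃ z ∈ commutant A, ∀ i, v i = ∑ l, z i l • (Pi.single l 1 : Fin d → ℂ) :=
    ⟨Matrix.of v, (hψ _).2 (hform v v ▸ hv), fun i => pi_eq_sum_univ' (v i)⟩
  obtain ⟨k, T, X, hX⟩ :=
    exists_isKernelGenerator hA hs (fun p hp => hsψ p p ▸ hψpos p hp) hx hnonneg hu hker
  exact ⟨k, X, _, hX, LinearIndependent.map' (v := fun l => Pi.single l (1 : ℂ))
    (Pi.linearIndependent_single_one (Fin d) ℂ) T.toLinearMap T.ker⟩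

end BaseRepresentation

section Domination

variable {l m r : Type*} [Fintype l] [Fintype m]

theorem exists_mul_eq_of_forall_mulVec_eq_zero {S : Matrix l m ℂ} {B : Matrix r m ℂ}
    (h : ∀ w, S *ᵥ w = 0 → B *ᵥ w = 0) : ∃ R : Matrix r l ℂ, R * S = B := by
  classical
  let F : (m → ℂ) →ₗ[ℂ] (l → ℂ) := S.mulVecLin
  obtain ⟨g, hg⟩ := F.rangeRestrict.exists_rightInverse_of_surjective F.range_rangeRestrict
  obtain ⟨R, hR⟩ := (B.mulVecLin ∘ₗ g).exists_extend
  refine ⟨LinearMap.toMatrix' R, Matrix.toLin'.injective (LinearMap.ext fun w => ?_)⟩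
  have hgw : F (g (F.rangeRestrict w)) = F w :=
    congrArg Subtype.val (LinearMap.congr_fun hg (F.rangeRestrict w))
  have hBw : B *ᵥ (g (F.rangeRestrict w) - w) = 0 := h _ <| by
    rw [← Matrix.mulVecLin_apply, map_sub, sub_eq_zero]
    exact hgw
  rw [Matrix.mulVec_sub, sub_eq_zero] at hBw
  rw [Matrix.toLin'_mul, Matrix.toLin'_toMatrix', Matrix.toLin'_apply, ← hBw]
  exact LinearMap.congr_fun hR (F.rangeRestrict w)

theorem exists_posSemidef_smul_sub [Fintype r] {G : Matrix m m ℂ}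
    (hG : G.PosSemidef) {B : Matrix r m ℂ} (h : ∀ w, G *ᵥ w = 0 → B *ᵥ w = 0) :
    ∃ c : ℝ, 0 ≤ c ∧ (c • G - Bᴴ * B).PosSemidef := by
  classical
  obtain ⟨S, rfl⟩ := exists_eq_conjTranspose_mul_self hG
  obtain ⟨R, rfl⟩ := exists_mul_eq_of_forall_mulVec_eq_zero fun w hw => h w <| by
    rw [← Matrix.mulVec_mulVec, hw, Matrix.mulVec_zero]
  obtain ⟨c, hc, hR⟩ := exists_posSemidef_add_smul
    (Matrix.isHermitian_conjTranspose_mul_self R).neg .one fun w hw0 hw => by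
      rw [Matrix.one_mulVec] at hw
      exact absurd hw hw0
  refine ⟨c, hc, ?_⟩
  convert! hR.conjTranspose_mul_mul_same S using 1
  simp only [Matrix.conjTranspose_mul, Matrix.mul_add, Matrix.add_mul, Matrix.mul_neg,
    Matrix.neg_mul, Matrix.mul_assoc, Matrix.mul_smul, Matrix.smul_mul, Matrix.one_mul]
  abel

theorem mulVec_eq_zero_of_posSemidef_smul_sub [Fintype r] {c : ℝ} {G : Matrix m m ℂ}
    {B : Matrix r m ℂ} (h : (c • G - Bᴴ * B).PosSemidef) {w : m → ℂ} (hw : G *ᵥ w = 0) :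
    B *ᵥ w = 0 := by
  have := h.dotProduct_mulVec_nonneg w
  rw [Matrix.sub_mulVec, Matrix.smul_mulVec, hw, smul_zero, zero_sub, dotProduct_neg,
    ← Matrix.mulVec_mulVec, Matrix.dotProduct_mulVec, ← Matrix.star_mulVec, neg_nonneg] at this
  exact dotProduct_star_self_eq_zero.mp (this.antisymm (dotProduct_star_self_nonneg _))

end Domination

section Dilation

variable {n d k N : ℕ} {A : Fin n → Matrix (Fin d) (Fin d) ℂ}
  {X : Fin n → Matrix (Fin k) (Fin k) ℂ} {u : Fin d → Fin k → ℂ}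

/-- The tuple of hermitian block matrices with diagonal blocks `Xⱼ`, `0` and lower left blocks
`bⱼ`. -/
def hermDilation (X : Fin n → Matrix (Fin k) (Fin k) ℂ) (b : Fin n → Matrix (Fin N) (Fin k) ℂ)
    (j : Fin n) : Matrix (Fin (k + N)) (Fin (k + N)) ℂ :=
  Matrix.reindex finSumFinEquiv finSumFinEquiv (Matrix.fromBlocks (X j) (b j)ᴴ (b j) 0)

/-- The splitting of the space on which a pencil of size `d` acts at a tuple `hermDilation`. -/
def dilationEquiv (d k N : ℕ) : (Fin d × Fin k) ⊕ (Fin d × Fin N) ≃ Fin d × Fin (k + N) :=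
  (Equiv.prodSumDistrib _ _ _).symm.trans ((Equiv.refl _).prodCongr finSumFinEquiv)

theorem hermDilation_mulVec_append (b : Fin n → Matrix (Fin N) (Fin k) ℂ) (j : Fin n)
    (h : Fin k → ℂ) :
    hermDilation X b j *ᵥ Fin.append h 0 = Fin.append (X j *ᵥ h) (b j *ᵥ h) := by
  rw [hermDilation, Matrix.reindex_apply]
  funext a
  refine Fin.addCases (fun a => ?_) (fun a => ?_) a <;>
  simp [Matrix.mulVec, dotProduct, Fin.sum_univ_add]

theorem monicK_hermDilation_submatrix (hA : ∀ j, (A j).IsHermitian)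
    (b : Fin n → Matrix (Fin N) (Fin k) ℂ) :
    (monicK A (hermDilation X b)).submatrix (dilationEquiv d k N) (dilationEquiv d k N) =
      Matrix.fromBlocks (monicK A X) (∑ j, A j ⊗ₖ b j)ᴴ (∑ j, A j ⊗ₖ b j) 1 := by
  rw [monicK, Matrix.submatrix_add, Pi.add_apply, Pi.add_apply, Matrix.submatrix_one_equiv]
  ext (p | p) (q | q) <;>
  simp [monicK, hermDilation, dilationEquiv, Matrix.sum_apply, (hA _).apply, Matrix.one_apply]

theorem monicK_hermDilation_mulVec_eq_zero_iff (hA : ∀ j, (A j).IsHermitian)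
    {b : Fin n → Matrix (Fin N) (Fin k) ℂ} {w : Fin d × Fin (k + N) → ℂ} {v : Fin d × Fin k → ℂ}
    {g : Fin d × Fin N → ℂ} (hw : w ∘ dilationEquiv d k N = Sum.elim v g) :
    monicK A (hermDilation X b) *ᵥ w = 0 ↔
      monicK A X *ᵥ v + (∑ j, A j ⊗ₖ b j)ᴴ *ᵥ g = 0 ∧ (∑ j, A j ⊗ₖ b j) *ᵥ v + g = 0 := by
  have hblocks := Matrix.fromBlocks_mulVec (monicK A X) (∑ j, A j ⊗ₖ b j)ᴴ (∑ j, A j ⊗ₖ b j) 1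
    (Sum.elim v g)
  rw [← monicK_hermDilation_submatrix hA, Matrix.submatrix_mulVec_equiv, ← hw, Function.comp_assoc,
    Equiv.self_comp_symm, Function.comp_id, hw, Sum.elim_comp_inl, Sum.elim_comp_inr,
    Matrix.one_mulVec] at hblocks
  rw [← (dilationEquiv d k N).surjective.injective_comp_right.eq_iff, hblocks, Pi.zero_comp,
    ← Sum.elim_zero_zero, Sum.elim_eq_iff]

theorem posSemidef_monicK_hermDilation (hA : ∀ j, (A j).IsHermitian)
    {b : Fin n → Matrix (Fin N) (Fin k) ℂ}
    (hb : (monicK A X - (∑ j, A j ⊗ₖ b j)ᴴ * ∑ j, A j ⊗ₖ b j).PosSemidef) :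
    (monicK A (hermDilation X b)).PosSemidef := by
  let : Invertible (1 : Matrix (Fin d × Fin N) (Fin d × Fin N) ℂ) := invertibleOne
  have := Matrix.PosDef.fromBlocks₂₂ (monicK A X) (∑ j, A j ⊗ₖ b j)ᴴ (D := 1) .one
  rw [← Matrix.posSemidef_submatrix_equiv (dilationEquiv d k N), monicK_hermDilation_submatrix hA]
  simpa using this.mpr (by simpa using hb)

theorem isKernelGenerator_hermDilation (hA : ∀ j, (A j).IsHermitian)
    (hX : IsKernelGenerator A X u) {b : Fin n → Matrix (Fin N) (Fin k) ℂ}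
    (hb : ((2⁻¹ : ℝ) • monicK A X - (∑ j, A j ⊗ₖ b j)ᴴ * ∑ j, A j ⊗ₖ b j).PosSemidef) :
    IsKernelGenerator A (hermDilation X b) fun l => Fin.append (u l) 0 := by
  have hker {v} (hv : monicK A X *ᵥ v = 0) : (∑ j, A j ⊗ₖ b j) *ᵥ v = 0 :=
    mulVec_eq_zero_of_posSemidef_smul_sub hb hv
  refine ⟨fun j => ?_, posSemidef_monicK_hermDilation hA ?_, ?_, fun w hw => ?_⟩
  · exact (Matrix.IsHermitian.fromBlocks (hX.isHermitian j) (Matrix.conjTranspose_conjTranspose _)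
      Matrix.isHermitian_zero).submatrix _
  · convert! hb.add (hX.posSemidef.smul (by norm_num : (0 : ℝ) ≤ 2⁻¹)) using 1
    rw [sub_add_eq_add_sub, ← add_smul]
    norm_num
  · refine (monicK_hermDilation_mulVec_eq_zero_iff hA (v := fun p => u p.1 p.2) (g := 0) ?_).mpr ?_
    · ext (p | p) <;> simp [dilationEquiv]
    · simp [hX.mulVec_eq_zero, hker hX.mulVec_eq_zero]
  · obtain ⟨v, g, hvg⟩ : ∃ v g, w ∘ dilationEquiv d k N = Sum.elim v g :=
      ⟨_, _, (Sum.elim_comp_inl_inr _).symm⟩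
    obtain ⟨hLv, hBv⟩ := (monicK_hermDilation_mulVec_eq_zero_iff hA hvg).mp hw
    rw [← eq_neg_iff_add_eq_zero] at hBv
    have hLv0 : monicK A X *ᵥ v = 0 := by
      have hneg := hb.dotProduct_mulVec_nonneg v
      rw [Matrix.sub_mulVec, ← Matrix.mulVec_mulVec, hBv, Matrix.mulVec_neg, sub_neg_eq_add,
        eq_neg_of_add_eq_zero_right hLv, Matrix.smul_mulVec, ← sub_eq_add_neg,
        show (2⁻¹ : ℝ) • monicK A X *ᵥ v - monicK A X *ᵥ v = -((2⁻¹ : ℝ) • monicK A X *ᵥ v) by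
          module, dotProduct_neg, dotProduct_smul, neg_nonneg] at hneg
      refine (hX.posSemidef.dotProduct_mulVec_zero_iff v).mp
        (le_antisymm ?_ (hX.posSemidef.dotProduct_mulVec_nonneg v))
      simpa using smul_le_smul_of_nonneg_left hneg (by norm_num : (0 : ℝ) ≤ 2)
    obtain ⟨z, hz, hzv⟩ := hX.exists_mem_commutant v hLv0
    refine ⟨z, hz, fun i a => ?_⟩
    have hg : g = 0 := by rw [← neg_eq_zero, ← hBv, hker hLv0]
    refine Fin.addCases (fun a => ?_) (fun a => ?_) a
    · simpa [dilationEquiv] using (congrFun hvg (Sum.inl (i, a))).trans (hzv i a)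
    · simpa [dilationEquiv, hg] using congrFun hvg (Sum.inr (i, a))

theorem exists_isKernelGenerator_hermDilation (hA : ∀ j, (A j).IsHermitian)
    (hX : IsKernelGenerator A X u) {b : Fin n → Matrix (Fin N) (Fin k) ℂ}
    (hb : ∀ c : Fin d → ℂ, ∑ j, b j *ᵥ ∑ l, (c ᵥ* A j) l • u l = 0) :
    ∃ ε : ℝ, ε ≠ 0 ∧
      IsKernelGenerator A (hermDilation X (ε • b)) fun l => Fin.append (u l) 0 := by
  obtain ⟨c, hc, h⟩ := exists_posSemidef_smul_sub hX.posSemidef (B := ∑ j, A j ⊗ₖ b j)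
    fun w hw => by
      obtain ⟨z, hz, hzw⟩ := hX.exists_mem_commutant w hw
      funext ⟨i, a⟩
      rw [Pi.zero_apply, ← Pi.zero_apply (M := fun _ => ℂ) a, ← hb (z i)]
      simp only [Matrix.sum_mulVec, Finset.sum_apply, kronecker_mulVec_apply]
      refine Finset.sum_congr rfl fun j _ => ?_
      have hsum : ∑ l, A j i l • (fun c => w (l, c)) = ∑ l, (z i ᵥ* A j) l • u l := by
        have hwl (l : Fin d) : (fun c => w (l, c)) = ∑ m, z l m • u m := by
          funext c
          simp only [hzw, Finset.sum_apply, Pi.smul_apply, smul_eq_mul]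
        have hcomm (m : Fin d) : (z i ᵥ* A j) m = ∑ l, A j i l * z l m :=
          congrFun₂ (mem_commutant.mp hz j) i m
        simp only [hwl, hcomm, Finset.smul_sum, Finset.sum_smul, smul_smul]
        exact Finset.sum_comm
      rw [← hsum, Matrix.mulVec_sum, Finset.sum_apply]
      simp only [Matrix.mulVec_smul, Pi.smul_apply, smul_eq_mul]
  refine ⟨(2 * (c + 1))⁻¹, by positivity, isKernelGenerator_hermDilation hA hX ?_⟩
  set ε : ℝ := (2 * (c + 1))⁻¹
  have hε : 0 ≤ 2⁻¹ - ε ^ 2 * c := by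
    have hεc : ε * (2 * (c + 1)) = 1 := inv_mul_cancel₀ (by positivity)
    nlinarith [sq_nonneg ε]
  convert! (h.smul (sq_nonneg ε)).add (hX.posSemidef.smul hε) using 1
  have hB : ∑ j, A j ⊗ₖ (ε • b) j = ε • ∑ j, A j ⊗ₖ b j := by
    simp only [Pi.smul_apply, Matrix.kronecker_smul, Finset.smul_sum]
  simp only [hB, Matrix.conjTranspose_smul, star_trivial, Matrix.smul_mul, Matrix.mul_smul]
  module

end Dilation

section RowModule

variable {n d k N : ℕ} {A : Fin n → Matrix (Fin d) (Fin d) ℂ}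

theorem append_eq_zero_iff {v : Fin k → ℂ} {w : Fin N → ℂ} :
    Fin.append v w = 0 ↔ v = 0 ∧ w = 0 := by
  simp only [funext_iff, Fin.forall_fin_add, Fin.append_left, Fin.append_right, Pi.zero_apply]

/-- The left submodule of `ℂ⟨x⟩^{1×d}` generated by the rows of the monic pencil. -/
noncomputable def rowModule (A : Fin n → Matrix (Fin d) (Fin d) ℂ) :
    Submodule (FreeAlg n) (Fin d → FreeAlg n) :=
  Submodule.span (FreeAlg n) (Set.range (monicPoly A))

theorem algebraMap_add_sum_ι_mul_mem_rowModule (A : Fin n → Matrix (Fin d) (Fin d) ℂ)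
    (c : Fin d → ℂ) :
    (fun l => algebraMap ℂ (FreeAlg n) (c l) +
      ∑ j, FreeAlgebra.ι ℂ j * algebraMap ℂ (FreeAlg n) ((c ᵥ* A j) l)) ∈ rowModule A := by
  refine (Submodule.mem_span_range_iff_exists_fun _).mpr
    ⟨fun i => algebraMap ℂ (FreeAlg n) (c i), ?_⟩
  funext l
  simp only [Finset.sum_apply, Pi.smul_apply, smul_eq_mul, monicPoly_apply, mul_add,
    Finset.sum_add_distrib, Finset.mul_sum, Matrix.vecMul, dotProduct, map_sum, map_mul]
  congr 1
  · simp [Matrix.one_apply]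
  · rw [Finset.sum_comm]
    simp only [Algebra.algebraMap_eq_smul_one, smul_mul_assoc, mul_smul_comm, one_mul, mul_one]

/-- The value `r(X) u = ∑ₗ rₗ(X) uₗ` of a row `r` of polynomials at a tuple `X` and a vector `u`. -/
noncomputable def rowEval (X : Fin n → Matrix (Fin k) (Fin k) ℂ) (u : Fin d → Fin k → ℂ) :
    (Fin d → FreeAlg n) →ₗ[ℂ] (Fin k → ℂ) where
  toFun r := ∑ l, FreeAlgebra.lift ℂ X (r l) *ᵥ u l
  map_add' _ _ := by
    simp only [Pi.add_apply, map_add, Matrix.add_mulVec, Finset.sum_add_distrib]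
  map_smul' _ _ := by
    simp only [Pi.smul_apply, map_smul, Matrix.smul_mulVec, Finset.smul_sum, RingHom.id_apply]

variable (X : Fin n → Matrix (Fin k) (Fin k) ℂ) (u : Fin d → Fin k → ℂ)

theorem rowEval_apply (r : Fin d → FreeAlg n) :
    rowEval X u r = ∑ l, FreeAlgebra.lift ℂ X (r l) *ᵥ u l := rfl

theorem rowEval_smul (a : FreeAlg n) (r : Fin d → FreeAlg n) :
    rowEval X u (a • r) = FreeAlgebra.lift ℂ X a *ᵥ rowEval X u r := by
  simp only [rowEval_apply, Pi.smul_apply, smul_eq_mul, map_mul, Matrix.mulVec_sum,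
    Matrix.mulVec_mulVec]

theorem rowEval_algebraMap (c : Fin d → ℂ) :
    rowEval X u (fun l => algebraMap ℂ (FreeAlg n) (c l)) = ∑ l, c l • u l := by
  simp only [rowEval_apply, AlgHom.commutes, Algebra.algebraMap_eq_smul_one (A := Matrix _ _ ℂ),
    Matrix.smul_mulVec, Matrix.one_mulVec]

theorem rowEval_eq_sum_constCoeff_add_sum_leftDeriv (r : Fin d → FreeAlg n) :
    rowEval X u r = ∑ l, constCoeff (r l) • u l +
      ∑ j, X j *ᵥ rowEval X u fun l => leftDeriv j (r l) := by
  have hr : r = (fun l => algebraMap ℂ (FreeAlg n) (constCoeff (r l))) +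
      ∑ j, FreeAlgebra.ι ℂ j • fun l => leftDeriv j (r l) := by
    funext l
    simpa using eq_constCoeff_add_sum_ι_mul_leftDeriv (r l)
  conv_lhs => rw [hr]
  simp only [map_add, map_sum, rowEval_algebraMap, rowEval_smul, FreeAlgebra.lift_ι_apply]

variable {X u}

theorem evalM_mulVec_eq_rowEval {I : Type*} (f : Matrix I (Fin d) (FreeAlg n)) (i : I)
    (a : Fin k) : (evalM f X *ᵥ fun p => u p.1 p.2) (i, a) = rowEval X u (f i) a := by
  rw [evalM_mulVec, rowEval_apply, Finset.sum_apply]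

theorem rowEval_eq_zero_of_mem_rowModule (hu : monicK A X *ᵥ (fun p => u p.1 p.2) = 0)
    {r : Fin d → FreeAlg n} (hr : r ∈ rowModule A) : rowEval X u r = 0 := by
  induction hr using Submodule.span_induction with
  | mem r hr =>
    obtain ⟨i, rfl⟩ := hr
    funext a
    rw [← evalM_mulVec_eq_rowEval, evalM_monicPoly, hu, Pi.zero_apply, Pi.zero_apply]
  | zero => exact map_zero _
  | add r r' _ _ hr hr' => rw [map_add, hr, hr', add_zero]
  | smul a r _ hr => rw [rowEval_smul, hr, Matrix.mulVec_zero]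

theorem rowEval_hermDilation {b : Fin n → Matrix (Fin N) (Fin k) ℂ} {r : Fin d → FreeAlg n}
    (hr : ∀ j, rowEval (hermDilation X b) (fun l => Fin.append (u l) 0)
      (fun l => leftDeriv j (r l)) = Fin.append (rowEval X u fun l => leftDeriv j (r l)) 0) :
    rowEval (hermDilation X b) (fun l => Fin.append (u l) 0) r =
      Fin.append (rowEval X u r) (∑ j, b j *ᵥ rowEval X u fun l => leftDeriv j (r l)) := by
  rw [rowEval_eq_sum_constCoeff_add_sum_leftDeriv,
    rowEval_eq_sum_constCoeff_add_sum_leftDeriv X u r]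
  simp only [hr, hermDilation_mulVec_append]
  funext a
  refine Fin.addCases (fun a => ?_) (fun a => ?_) a <;> simp

theorem rowEval_hermDilation_of_mem_degLT {b : Fin n → Matrix (Fin N) (Fin k) ℂ} {m : ℕ}
    (hb : ∀ r : Fin d → FreeAlg n, (∀ l, r l ∈ degLT n m) → ∀ j, b j *ᵥ rowEval X u r = 0)
    {r : Fin d → FreeAlg n} (hr : ∀ l, r l ∈ degLT n (m + 1)) :
    rowEval (hermDilation X b) (fun l => Fin.append (u l) 0) r =
      Fin.append (rowEval X u r) 0 := by
  have hr' (j : Fin n) (l : Fin d) : leftDeriv j (r l) ∈ degLT n m := mem_degLT_succ.mp (hr l) j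
  rw [rowEval_hermDilation, Finset.sum_eq_zero fun j _ => hb _ (hr' j) j]
  intro j
  induction m generalizing r j with
  | zero =>
    have hzero : (fun l => leftDeriv j (r l)) = 0 :=
      funext fun l => mem_degLT_zero.mp (hr' j l)
    rw [hzero, map_zero, map_zero, append_eq_zero_iff.mpr ⟨rfl, rfl⟩]
  | succ m ih =>
    have hb' (r : Fin d → FreeAlg n) (hr : ∀ l, r l ∈ degLT n m) :=
      hb r fun l => degLT_mono m.le_succ (hr l)
    have hr'' (i : Fin n) (l : Fin d) := mem_degLT_succ.mp (hr' j l) i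
    rw [rowEval_hermDilation (ih hb' (hr' j) hr''), Finset.sum_eq_zero fun i _ => hb' _ (hr'' i) i]

end RowModule

section Exactness

variable {n d k : ℕ} {A : Fin n → Matrix (Fin d) (Fin d) ℂ}
  {X : Fin n → Matrix (Fin k) (Fin k) ℂ} {u : Fin d → Fin k → ℂ} {m : ℕ}

/-- The rows of polynomials of degree less than `m` that annihilate `u` at `X` are left
combinations of the rows of the monic pencil. -/
def IsExactBelow (A : Fin n → Matrix (Fin d) (Fin d) ℂ) (X : Fin n → Matrix (Fin k) (Fin k) ℂ)
    (u : Fin d → Fin k → ℂ) (m : ℕ) : Prop :=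
  ∀ r : Fin d → FreeAlg n, (∀ l, r l ∈ degLT n m) → rowEval X u r = 0 → r ∈ rowModule A

theorem isExactBelow_one (hu : LinearIndependent ℂ u) : IsExactBelow A X u 1 := by
  intro r hr h0
  have hconst : r = fun l => algebraMap ℂ (FreeAlg n) (constCoeff (r l)) :=
    funext fun l => mem_degLT_one.mp (hr l)
  rw [hconst, rowEval_algebraMap] at h0
  have hzero : r = 0 := by
    rw [hconst]
    funext l
    rw [Fintype.linearIndependent_iff.mp hu _ h0 l, map_zero, Pi.zero_apply]
  exact hzero ▸ Submodule.zero_mem _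

theorem IsExactBelow.exists_sub_mem_rowModule (hex : IsExactBelow A X u (m + 1))
    {r : Fin d → FreeAlg n} (hr : ∀ l, r l ∈ degLT n (m + 2)) {s : Fin n → Fin d → FreeAlg n}
    (hs : ∀ j l, s j l ∈ degLT n m) {c : Fin d → ℂ}
    (hrs : ∀ j, rowEval X u (fun l => leftDeriv j (r l)) =
      rowEval X u (s j) + ∑ l, (c ᵥ* A j) l • u l) :
    ∃ t : Fin d → FreeAlg n, (∀ l, t l ∈ degLT n (m + 1)) ∧ r - t ∈ rowModule A := by
  have hderiv (j : Fin n) : (fun l => leftDeriv j (r l)) - s j -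
      (fun l => algebraMap ℂ (FreeAlg n) ((c ᵥ* A j) l)) ∈ rowModule A := by
    refine hex _ (fun l => ?_) ?_
    · exact Submodule.sub_mem _ (Submodule.sub_mem _ (mem_degLT_succ.mp (hr l) j)
        (degLT_mono m.le_succ (hs j l))) (algebraMap_mem_degLT _ _)
    · rw [map_sub, map_sub, rowEval_algebraMap, hrs, add_sub_cancel_left, sub_self]
  refine ⟨fun l => ∑ j, FreeAlgebra.ι ℂ j * s j l +
    algebraMap ℂ (FreeAlg n) (constCoeff (r l) - c l), fun l => ?_, ?_⟩
  · exact Submodule.add_mem _ (Submodule.sum_mem _ fun j _ => ι_mul_mem_degLT j (hs j l))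
      (algebraMap_mem_degLT _ _)
  · convert! Submodule.add_mem _ (Submodule.sum_mem _ fun j (_ : j ∈ Finset.univ) =>
      Submodule.smul_mem _ (FreeAlgebra.ι ℂ j) (hderiv j))
      (algebraMap_add_sum_ι_mul_mem_rowModule A c) using 1
    funext l
    simp only [Pi.sub_apply, Pi.add_apply, Finset.sum_apply, Pi.smul_apply, smul_eq_mul, mul_sub,
      Finset.sum_sub_distrib, map_sub]
    nth_rw 1 [eq_constCoeff_add_sum_ι_mul_leftDeriv (r l)]
    abel

theorem exists_sum_mulVec_eq_zero_iff_mem (R : Submodule ℂ (Fin n → Fin k → ℂ)) :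
    ∃ (N : ℕ) (b : Fin n → Matrix (Fin N) (Fin k) ℂ), ∀ y, ∑ j, b j *ᵥ y j = 0 ↔ y ∈ R := by
  let G := (Module.finBasis ℂ ((Fin n → Fin k → ℂ) ⧸ R)).equivFun.toLinearMap ∘ₗ R.mkQ
  let ι := LinearMap.single ℂ fun _ : Fin n => Fin k → ℂ
  refine ⟨_, fun j => LinearMap.toMatrix' (G ∘ₗ ι j), fun y => ?_⟩
  have hG : ∑ j, LinearMap.toMatrix' (G ∘ₗ ι j) *ᵥ y j = G y := by
    simp only [LinearMap.toMatrix'_mulVec, LinearMap.comp_apply, ι, LinearMap.single_apply,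
      ← map_sum, Finset.univ_sum_single]
  rw [hG, LinearMap.comp_apply, LinearEquiv.coe_coe, LinearEquiv.map_eq_zero_iff,
    Submodule.mkQ_apply, Submodule.Quotient.mk_eq_zero]

theorem IsExactBelow.exists_succ (hA : ∀ j, (A j).IsHermitian) (hX : IsKernelGenerator A X u)
    (hex : IsExactBelow A X u (m + 1)) :
    ∃ (k' : ℕ) (X' : Fin n → Matrix (Fin k') (Fin k') ℂ) (u' : Fin d → Fin k' → ℂ),
      IsKernelGenerator A X' u' ∧ IsExactBelow A X' u' (m + 2) := by
  let H : Submodule ℂ (Fin k → ℂ) :=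
    (Submodule.pi Set.univ fun _ : Fin d => degLT n m).map (rowEval X u)
  let Λ : (Fin d → ℂ) →ₗ[ℂ] Fin n → Fin k → ℂ :=
    LinearMap.pi fun j => Fintype.linearCombination ℂ u ∘ₗ (A j).vecMulLinear
  obtain ⟨N, b, hb⟩ :=
    exists_sum_mulVec_eq_zero_iff_mem (Submodule.pi Set.univ (fun _ : Fin n => H) ⊔ Λ.range)
  obtain ⟨ε, hε, hX'⟩ := exists_isKernelGenerator_hermDilation hA hX (b := b) fun c =>
    (hb _).mpr (Submodule.mem_sup_right ⟨c, rfl⟩)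
  have hεb (y : Fin n → Fin k → ℂ) : ∑ j, (ε • b) j *ᵥ y j = 0 ↔ ∑ j, b j *ᵥ y j = 0 := by
    simp only [Pi.smul_apply, Matrix.smul_mulVec, ← Finset.smul_sum, smul_eq_zero, hε, false_or]
  have hlow (r : Fin d → FreeAlg n) (hr : ∀ l, r l ∈ degLT n m) (j : Fin n) :
      (ε • b) j *ᵥ rowEval X u r = 0 := by
    have hmem := Submodule.le_comap_single_pi (fun _ : Fin n => H) (I := Set.univ) (i := j)
      (Submodule.mem_map_of_mem (Submodule.mem_pi.mpr fun l _ => hr l))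
    have hsum := (hεb _).mpr ((hb _).mpr (Submodule.mem_sup_left hmem))
    rwa [Finset.sum_eq_single_of_mem j (Finset.mem_univ j) fun i _ hij => by
      rw [LinearMap.single_apply, Pi.single_eq_of_ne hij, Matrix.mulVec_zero],
      LinearMap.single_apply, Pi.single_eq_same] at hsum
  refine ⟨_, _, _, hX', fun r hr h0 => ?_⟩
  have hr' (j : Fin n) (l : Fin d) := mem_degLT_succ.mp (hr l) j
  have hr0 := rowEval_hermDilation fun j => rowEval_hermDilation_of_mem_degLT hlow (hr' j)
  rw [h0, eq_comm, append_eq_zero_iff] at hr0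
  obtain ⟨y, hy, w, ⟨c, rfl⟩, hyw⟩ :=
    Submodule.mem_sup.mp ((hb _).mp ((hεb _).mp hr0.2))
  choose s hs hsy using fun j => Submodule.mem_map.mp (Submodule.mem_pi.mp hy j trivial)
  obtain ⟨t, ht, hrt⟩ := hex.exists_sub_mem_rowModule hr
    (fun j l => Submodule.mem_pi.mp (hs j) l trivial) fun j => by
      rw [hsy, ← congrFun hyw j]; rfl
  have hrt0 := rowEval_eq_zero_of_mem_rowModule (u := fun l => Fin.append (u l) 0)
    hX'.mulVec_eq_zero hrt
  rw [map_sub, h0, zero_sub, neg_eq_zero, rowEval_hermDilation_of_mem_degLT hlow ht] at hrt0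
  have := Submodule.add_mem _ hrt (hex t ht (append_eq_zero_iff.mp hrt0).1)
  rwa [sub_add_cancel] at this

theorem IsMinimal.exists_isExactBelow (hmin : IsMinimal A) (hA : ∀ j, (A j).IsHermitian) (m : ℕ) :
    ∃ (k : ℕ) (X : Fin n → Matrix (Fin k) (Fin k) ℂ) (u : Fin d → Fin k → ℂ),
      IsKernelGenerator A X u ∧ IsExactBelow A X u (m + 1) := by
  induction m with
  | zero =>
    obtain ⟨k, X, u, hX, hu⟩ := hmin.exists_linearIndependent_isKernelGenerator hA
    exact ⟨k, X, u, hX, isExactBelow_one hu⟩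
  | succ m ih =>
    obtain ⟨k, X, u, hX, hex⟩ := ih
    exact hex.exists_succ hA hX

theorem IsMinimal.exists_eq_mul_monicPoly (hmin : IsMinimal A) (hA : ∀ j, (A j).IsHermitian)
    {I : Type*} [Finite I] {f : Matrix I (Fin d) (FreeAlg n)}
    (hf : ∀ (k : ℕ) (X : Fin n → Matrix (Fin k) (Fin k) ℂ), (∀ j, (X j).IsHermitian) →
      (monicK A X).PosSemidef → ∀ u, monicK A X *ᵥ u = 0 → evalM f X *ᵥ u = 0) :
    ∃ g : Matrix I (Fin d) (FreeAlg n), f = g * monicPoly A := by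
  obtain ⟨m, hm⟩ := exists_forall_mem_degLT f
  obtain ⟨k, X, u, hX, hex⟩ := hmin.exists_isExactBelow hA m
  have hrow (i : I) : f i ∈ rowModule A :=
    hex _ (fun l => degLT_mono m.le_succ (hm i l)) <| funext fun a => by
      rw [← evalM_mulVec_eq_rowEval, hf k X hX.isHermitian hX.posSemidef _ hX.mulVec_eq_zero]; rfl
  choose g hg using fun i => (Submodule.mem_span_range_iff_exists_fun _).mp (hrow i)
  refine ⟨Matrix.of g, ?_⟩
  ext i l
  rw [← hg, Matrix.mul_apply, Finset.sum_apply]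
  rfl

end Exactness

section ConstantTerm

variable {n d k : ℕ}

theorem continuous_lift_smul (X : Fin n → Matrix (Fin k) (Fin k) ℂ) (a : FreeAlg n) :
    Continuous fun t : ℝ => FreeAlgebra.lift ℂ (fun j => t • X j) a := by
  induction a using FreeAlgebra.induction with
  | grade0 c => simpa only [AlgHom.commutes] using continuous_const
  | grade1 j => simp only [FreeAlgebra.lift_ι_apply]; fun_prop
  | mul a b ha hb => simp only [map_mul]; exact ha.mul hb
  | add a b ha hb => simp only [map_add]; exact ha.add hb

theorem continuous_evalM_smul {I J : Type*} (f : Matrix I J (FreeAlg n))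
    (X : Fin n → Matrix (Fin k) (Fin k) ℂ) : Continuous fun t : ℝ => evalM f fun j => t • X j :=
  continuous_matrix fun p q => (continuous_lift_smul X (f p.1 q.1)).matrix_elem p.2 q.2

theorem monicK_smul (A : Fin n → Matrix (Fin d) (Fin d) ℂ) (X : Fin n → Matrix (Fin k) (Fin k) ℂ)
    (t : ℝ) : monicK A (fun j => t • X j) = (1 - t) • 1 + t • monicK A X := by
  simp only [monicK, Matrix.kronecker_smul, ← Finset.smul_sum, smul_add, sub_smul, one_smul]
  abel

theorem star_mulVec_dotProduct_of_isHermitian {I : Type*} [Fintype I] {M : Matrix I I ℂ}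
    (hM : M.IsHermitian) (v w : I → ℂ) : star (M *ᵥ v) ⬝ᵥ w = star v ⬝ᵥ M *ᵥ w := by
  rw [Matrix.star_mulVec, hM.eq, ← Matrix.dotProduct_mulVec]

variable {A : Fin n → Matrix (Fin d) (Fin d) ℂ} {f e : Matrix (Fin d) (Fin d) (FreeAlg n)}
  {c : Matrix (Fin d) (Fin d) ℂ} {X : Fin n → Matrix (Fin k) (Fin k) ℂ} {w : Fin d × Fin k → ℂ}

theorem dotProduct_evalM_smul_mulVec (hA : ∀ j, (A j).IsHermitian) (hX : ∀ j, (X j).IsHermitian)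
    (hw : monicK A X *ᵥ w = 0)
    (hf : f = monicPoly A * e * monicPoly A + constMat n c * monicPoly A) (t : ℝ) :
    star w ⬝ᵥ evalM f (fun j => t • X j) *ᵥ w =
      (1 - t : ℝ) * ((1 - t : ℝ) * star w ⬝ᵥ evalM e (fun j => t • X j) *ᵥ w +
        star w ⬝ᵥ (c ⊗ₖ (1 : Matrix (Fin k) (Fin k) ℂ)) *ᵥ w) := by
  have hLw : monicK A (fun j => t • X j) *ᵥ w = ((1 - t : ℝ) : ℂ) • w := by
    rw [monicK_smul, Matrix.add_mulVec, Matrix.smul_mulVec, Matrix.smul_mulVec, hw,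
      Matrix.one_mulVec, smul_zero, add_zero, Complex.coe_smul]
  have hherm : (monicK A fun j => t • X j).IsHermitian :=
    isHermitian_monicK hA fun j => (hX j).smul (IsSelfAdjoint.all t)
  rw [hf, evalM_add, evalM_mul, evalM_mul, evalM_mul, evalM_monicPoly, evalM_constMat,
    Matrix.add_mulVec, ← Matrix.mulVec_mulVec, ← Matrix.mulVec_mulVec, ← Matrix.mulVec_mulVec,
    hLw, dotProduct_add, ← star_mulVec_dotProduct_of_isHermitian hherm, hLw]
  simp only [Matrix.mulVec_smul, dotProduct_smul, star_smul, smul_dotProduct, smul_eq_mul,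
    RCLike.star_def, Complex.conj_ofReal]
  ring

theorem re_dotProduct_mulVec_nonneg_of_monicK_mulVec_eq_zero (hA : ∀ j, (A j).IsHermitian)
    (hX : ∀ j, (X j).IsHermitian) (hL : (monicK A X).PosSemidef) (hw : monicK A X *ᵥ w = 0)
    (hf : f = monicPoly A * e * monicPoly A + constMat n c * monicPoly A)
    (hpos : ∀ Y : Fin n → Matrix (Fin k) (Fin k) ℂ, (∀ j, (Y j).IsHermitian) →
      (monicK A Y).PosSemidef → (evalM f Y).PosSemidef) :
    0 ≤ (star w ⬝ᵥ (c ⊗ₖ (1 : Matrix (Fin k) (Fin k) ℂ)) *ᵥ w).re := by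
  set g : ℝ → ℝ := fun t => ((1 - t : ℝ) * star w ⬝ᵥ evalM e (fun j => t • X j) *ᵥ w +
    star w ⬝ᵥ (c ⊗ₖ (1 : Matrix (Fin k) (Fin k) ℂ)) *ᵥ w).re with hg
  have hcont : Continuous g := by
    have := continuous_const.dotProduct
      ((continuous_evalM_smul e X).matrix_mulVec (continuous_const (y := w))) (A := fun _ => star w)
    fun_prop
  -- `f(tX)` is positive at `w`, and its value there is `(1 - t) g(t)`.
  have hg_nonneg : Set.Ico 0 1 ⊆ {t | 0 ≤ g t} := fun t ht => by
    have hLt : (monicK A fun j => t • X j).PosSemidef := monicK_smul A X t ▸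
      (Matrix.PosSemidef.one.smul (sub_nonneg.mpr ht.2.le)).add (hL.smul ht.1)
    have hquad := Complex.nonneg_iff.mp ((hpos _
      (fun j => (hX j).smul (IsSelfAdjoint.all t)) hLt).dotProduct_mulVec_nonneg w)
    rw [dotProduct_evalM_smul_mulVec hA hX hw hf, Complex.re_ofReal_mul] at hquad
    exact nonneg_of_mul_nonneg_right hquad.1 (sub_pos.mpr ht.2)
  have hone : 0 ≤ g 1 := closure_minimal hg_nonneg (isClosed_le continuous_const hcont)
    (by rw [closure_Ico zero_ne_one]; exact Set.right_mem_Icc.mpr zero_le_one)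
  simpa only [hg, sub_self, Complex.ofReal_zero, zero_mul, zero_add] using hone

theorem eq_zero_of_kronecker_one_mulVec_eq_zero {I J K : Type*} [Fintype J] [Fintype K]
    [DecidableEq K] {z : Matrix I J ℂ} {u : J → K → ℂ} (hu : LinearIndependent ℂ u)
    (h : (z ⊗ₖ (1 : Matrix K K ℂ)) *ᵥ (fun p => u p.1 p.2) = 0) : z = 0 := by
  ext i l
  refine Fintype.linearIndependent_iff.mp hu (z i) (funext fun a => ?_) l
  have := congrFun h (i, a)
  simpa only [kronecker_mulVec_apply, Matrix.one_mulVec, Finset.sum_apply, Pi.smul_apply,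
    smul_eq_mul, Pi.zero_apply] using this

theorem eq_zero_of_mul_mul_self_eq_zero {I : Type*} [Fintype I] {z : Matrix I I ℂ}
    (hz : z.IsHermitian) (h : z * z * z = 0) : z = 0 := by
  have hsq : zᴴ * z = 0 := by
    rw [← Matrix.conjTranspose_mul_self_eq_zero, Matrix.conjTranspose_mul,
      Matrix.conjTranspose_conjTranspose, hz.eq, ← Matrix.mul_assoc, h, Matrix.zero_mul]
  exact Matrix.conjTranspose_mul_self_eq_zero.mp hsq

open scoped MatrixOrder in
theorem posSemidef_of_re_dotProduct_kronecker_one_nonneg {I K : Type*} [Fintype I]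
    [Fintype K] [DecidableEq K] {c : Matrix I I ℂ} (hc : c.IsHermitian) {u : I → K → ℂ}
    (hu : LinearIndependent ℂ u)
    (h : ∀ z : Matrix I I ℂ, (∀ B, Commute c B → Commute z B) → ∀ w,
      w = (z ⊗ₖ (1 : Matrix K K ℂ)) *ᵥ (fun p => u p.1 p.2) →
        0 ≤ (star w ⬝ᵥ (c ⊗ₖ (1 : Matrix K K ℂ)) *ᵥ w).re) : c.PosSemidef := by
  classical
  have hsa : IsSelfAdjoint c := hc
  have hz : (c⁻).PosSemidef := Matrix.nonneg_iff_posSemidef.mp (CFC.negPart_nonneg c)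
  have hzcz : c⁻ * c * c⁻ = -(c⁻ * c⁻ * c⁻) := by
    nth_rw 2 [← CFC.posPart_sub_negPart c hsa]
    rw [Matrix.mul_sub, CFC.negPart_mul_posPart, zero_sub, Matrix.neg_mul]
  have hz3 : ((c⁻ * c⁻ * c⁻) ⊗ₖ (1 : Matrix K K ℂ)).PosSemidef := by
    have := hz.conjTranspose_mul_mul_same c⁻
    rw [hz.isHermitian.eq] at this
    exact this.kronecker .one
  have hherm : (c⁻ ⊗ₖ (1 : Matrix K K ℂ)).IsHermitian := by
    rw [Matrix.IsHermitian, Matrix.conjTranspose_kronecker, hz.isHermitian.eq,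
      Matrix.conjTranspose_one]
  have hquad := h c⁻ (fun B hB => by rw [CFC.negPart_def]; exact hB.cfcₙ_real _) _ rfl
  rw [star_mulVec_dotProduct_of_isHermitian hherm, Matrix.mulVec_mulVec, Matrix.mulVec_mulVec,
    ← Matrix.mul_kronecker_mul, ← Matrix.mul_kronecker_mul, Matrix.one_mul, Matrix.one_mul,
    hzcz, ← neg_one_smul ℂ, Matrix.smul_kronecker, Matrix.smul_mulVec, dotProduct_smul,
    neg_one_smul, Complex.neg_re, neg_nonneg] at hquad
  have hker := (hz3.dotProduct_mulVec_zero_iff _).mp <| Complex.ext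
    (le_antisymm hquad (hz3.re_dotProduct_nonneg _))
    (hz3.isHermitian.im_star_dotProduct_mulVec_self _)
  have hcneg : c⁻ = 0 := eq_zero_of_mul_mul_self_eq_zero hz.isHermitian
    (eq_zero_of_kronecker_one_mulVec_eq_zero hu hker)
  exact Matrix.nonneg_iff_posSemidef.mp ((CFC.negPart_eq_zero_iff c hsa).mp hcneg)

theorem IsMinimal.posSemidef_of_normalForm (hmin : IsMinimal A) (hA : ∀ j, (A j).IsHermitian)
    (hc : c.IsHermitian) (hcA : ∀ j, c * A j = A j * c)
    (hf : f = monicPoly A * e * monicPoly A + constMat n c * monicPoly A)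
    (hpos : ∀ (k : ℕ) (Y : Fin n → Matrix (Fin k) (Fin k) ℂ), (∀ j, (Y j).IsHermitian) →
      (monicK A Y).PosSemidef → (evalM f Y).PosSemidef) : c.PosSemidef := by
  obtain ⟨k, X, u, hu, hli⟩ := hmin.exists_linearIndependent_isKernelGenerator hA
  refine posSemidef_of_re_dotProduct_kronecker_one_nonneg hc hli fun z hz w hw =>
    re_dotProduct_mulVec_nonneg_of_monicK_mulVec_eq_zero hA hu.isHermitian hu.posSemidef ?_ hf
      (hpos k)
  have hcomm := congrArg (evalM · X) (constMat_mul_monicPoly_comm fun j => hz (A j) (hcA j))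
  simp only [evalM_mul, evalM_constMat, evalM_monicPoly] at hcomm
  rw [hw, Matrix.mulVec_mulVec, ← hcomm, ← Matrix.mulVec_mulVec, hu.mulVec_eq_zero,
    Matrix.mulVec_zero]

open scoped MatrixOrder in
theorem exists_isHermitian_mul_self_eq {I : Type*} [Fintype I] {c : Matrix I I ℂ}
    (hc : c.PosSemidef) :
    ∃ C : Matrix I I ℂ, C.IsHermitian ∧ C * C = c ∧ ∀ B, Commute c B → Commute C B := by
  classical
  exact ⟨CFC.sqrt c, (Matrix.nonneg_iff_posSemidef.mp (CFC.sqrt_nonneg c)).isHermitian,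
    CFC.sqrt_mul_sqrt_self c hc.nonneg, fun _ hB => hB.cfcₙ_nnreal _⟩

end ConstantTerm

section GNS

variable {n d k m : ℕ}

/-- The polynomial matrix `p* b q` of two row vectors `p`, `q` of polynomials. -/
noncomputable def outerForm (b : FreeAlg n) :
    (Fin d → FreeAlg n) →ₗ⋆[ℂ] (Fin d → FreeAlg n) →ₗ[ℂ] Matrix (Fin d) (Fin d) (FreeAlg n) :=
  LinearMap.mk₂'ₛₗ (starRingEnd ℂ) (RingHom.id ℂ)
    (fun p q => Matrix.of fun i l => nstar (p i) * (b * q l))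
    (fun _ _ _ => by ext; simp [nstar_add, add_mul])
    (fun _ _ _ => by ext; simp [nstar_smul])
    (fun _ _ _ => by ext; simp [mul_add])
    (fun _ _ _ => by ext; simp)

theorem outerForm_apply (b : FreeAlg n) (p q : Fin d → FreeAlg n) (i l : Fin d) :
    outerForm b p q i l = nstar (p i) * (b * q l) := rfl

theorem adjM_outerForm {b : FreeAlg n} (hb : nstar b = b) (p q : Fin d → FreeAlg n) :
    adjM (outerForm b p q) = outerForm b q p := by
  ext i l
  simp only [adjM, outerForm_apply, nstar_mul, nstar_nstar, hb, mul_assoc]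

theorem adjM_mul_eq_sum_outerForm (M N : Matrix (Fin d) (Fin d) (FreeAlg n)) :
    adjM M * N = ∑ i, outerForm 1 (M i) (N i) := by
  ext i l
  simp only [Matrix.mul_apply, Matrix.sum_apply, outerForm_apply, adjM, one_mul]

theorem adjM_mul_monicPoly_mul_eq_sum_outerForm (A : Fin n → Matrix (Fin d) (Fin d) ℂ)
    (M N : Matrix (Fin d) (Fin d) (FreeAlg n)) :
    adjM M * monicPoly A * N = ∑ i, outerForm 1 (M i) (N i) +
      ∑ j, ∑ i, ∑ l, A j i l • outerForm (FreeAlgebra.ι ℂ j) (M i) (N l) := by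
  rw [← adjM_mul_eq_sum_outerForm, Matrix.mul_assoc, monicPoly, Matrix.add_mul, Matrix.mul_add,
    Matrix.one_mul, Matrix.sum_mul, Matrix.mul_sum]
  congr 1
  refine Finset.sum_congr rfl fun j _ => ?_
  ext a b
  simp only [Matrix.mul_apply, Matrix.sum_apply, outerForm_apply, adjM, Matrix.map_apply,
    Matrix.smul_apply, Finset.mul_sum, smul_mul_assoc, mul_smul_comm]

/-- The hermitian tuple `X` and the vector `u` represent the functional `φ` on matrices of
polynomials of degree less than `m`: `φ(M* N) = ⟨M(X)u, N(X)u⟩` and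
`φ(M* L N) = ⟨M(X)u, L(X)N(X)u⟩`, where `L` is the pencil with coefficients `A`. -/
structure IsGNS (A : Fin n → Matrix (Fin d) (Fin d) ℂ)
    (φ : Matrix (Fin d) (Fin d) (FreeAlg n) →ₗ[ℂ] ℂ) (m : ℕ)
    (X : Fin n → Matrix (Fin k) (Fin k) ℂ) (u : Fin d × Fin k → ℂ) : Prop where
  isHermitian : ∀ j, (X j).IsHermitian
  exists_mulVec_eq : ∀ w, ∃ M : Matrix (Fin d) (Fin d) (FreeAlg n),
    (∀ i l, M i l ∈ degLT n m) ∧ evalM M X *ᵥ u = w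
  map_adjM_mul : ∀ M N : Matrix (Fin d) (Fin d) (FreeAlg n), (∀ i l, M i l ∈ degLT n m) →
    (∀ i l, N i l ∈ degLT n m) → φ (adjM M * N) = star (evalM M X *ᵥ u) ⬝ᵥ evalM N X *ᵥ u
  map_adjM_mul_monicPoly_mul : ∀ M N : Matrix (Fin d) (Fin d) (FreeAlg n),
    (∀ i l, M i l ∈ degLT n m) → (∀ i l, N i l ∈ degLT n m) →
      φ (adjM M * monicPoly A * N) = star (evalM M X *ᵥ u) ⬝ᵥ monicK A X *ᵥ evalM N X *ᵥ u

/-- The `i`-th standard basis row, as a row of polynomials of degree at most `m`. -/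
noncomputable def stdRow (m : ℕ) (i : Fin d) : Fin d → degLT n (m + 1) :=
  Pi.single i ⟨1, one_mem_degLT m⟩

theorem eq_sum_constCoeff_smul_stdRow_add (r : Fin d → degLT n (m + 1))
    {xs : Fin n → Fin d → degLT n (m + 1)} (hxs : ∀ j l, (xs j l : FreeAlg n) =
      FreeAlgebra.ι ℂ j * leftDeriv j (r l : FreeAlg n)) :
    r = ∑ l, constCoeff (r l : FreeAlg n) • stdRow m l + ∑ j, xs j := by
  refine funext fun l => Subtype.ext ?_
  conv_lhs => rw [eq_constCoeff_add_sum_ι_mul_leftDeriv (r l : FreeAlg n)]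
  simp only [← hxs, Pi.add_apply, Finset.sum_apply, Submodule.coe_add, Submodule.coe_sum]
  rw [Finset.sum_eq_single l]
  · simp [stdRow, Algebra.algebraMap_eq_smul_one]
  · intro i _ hi
    simp [stdRow, Pi.single_eq_of_ne' hi]
  · simp

theorem map_eq_rowEval (T : (Fin d → degLT n (m + 1)) →ₗ[ℂ] (Fin k → ℂ))
    {X : Fin n → Matrix (Fin k) (Fin k) ℂ}
    (hX : ∀ (j : Fin n) (r r' : Fin d → degLT n (m + 1)),
      (∀ l, (r' l : FreeAlg n) = FreeAlgebra.ι ℂ j * r l) → T r' = X j *ᵥ T r)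
    (r : Fin d → degLT n (m + 1)) :
    T r = rowEval X (fun i => T (stdRow m i)) fun l => (r l : FreeAlg n) := by
  suffices ∀ q ≤ m + 1, ∀ r : Fin d → degLT n (m + 1), (∀ l, (r l : FreeAlg n) ∈ degLT n q) →
      T r = rowEval X (fun i => T (stdRow m i)) fun l => (r l : FreeAlg n)
    from this (m + 1) le_rfl r fun l => (r l).2
  intro q
  induction q with
  | zero =>
    intro _ r hr
    obtain rfl : r = 0 := funext fun l => Subtype.ext (mem_degLT_zero.mp (hr l))
    rw [map_zero]
    exact (map_zero (rowEval X _)).symm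
  | succ q ih =>
    intro hq r hr
    have hderiv (j : Fin n) (l : Fin d) : leftDeriv j (r l : FreeAlg n) ∈ degLT n q :=
      mem_degLT_succ.mp (hr l) j
    let s (j : Fin n) : Fin d → degLT n (m + 1) := fun l =>
      ⟨leftDeriv j (r l : FreeAlg n), degLT_mono (by omega) (hderiv j l)⟩
    let xs (j : Fin n) : Fin d → degLT n (m + 1) := fun l =>
      ⟨FreeAlgebra.ι ℂ j * leftDeriv j (r l : FreeAlg n),
        degLT_mono hq (ι_mul_mem_degLT j (hderiv j l))⟩
    rw [rowEval_eq_sum_constCoeff_add_sum_leftDeriv]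
    conv_lhs => rw [eq_sum_constCoeff_smul_stdRow_add r (xs := xs) fun _ _ => rfl]
    simp only [map_add, map_sum, map_smul]
    congr 1
    exact Finset.sum_congr rfl fun j _ => by
      rw [hX j (s j) (xs j) fun _ => rfl, ih (by omega) (s j) (hderiv j)]

theorem evalM_mulVec_eq_map (T : (Fin d → degLT n (m + 1)) →ₗ[ℂ] (Fin k → ℂ))
    {X : Fin n → Matrix (Fin k) (Fin k) ℂ}
    (hX : ∀ (j : Fin n) (r r' : Fin d → degLT n (m + 1)),
      (∀ l, (r' l : FreeAlg n) = FreeAlgebra.ι ℂ j * r l) → T r' = X j *ᵥ T r)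
    {I : Type*} (M : Matrix I (Fin d) (FreeAlg n)) (hM : ∀ i l, M i l ∈ degLT n (m + 1)) :
    (evalM M X *ᵥ fun p => T (stdRow m p.1) p.2) =
      fun p => T (fun l => ⟨M p.1 l, hM p.1 l⟩) p.2 := by
  funext ⟨i, a⟩
  rw [map_eq_rowEval T hX, evalM_mulVec_eq_rowEval (u := fun i => T (stdRow m i))]

/-- The form `(p, q) ↦ φ(p* b q)` on row vectors of polynomials of degree less than `m`. -/
noncomputable def momentForm (φ : Matrix (Fin d) (Fin d) (FreeAlg n) →ₗ[ℂ] ℂ) (m : ℕ)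
    (b : FreeAlg n) : (Fin d → degLT n m) →ₗ⋆[ℂ] (Fin d → degLT n m) →ₗ[ℂ] ℂ :=
  (((outerForm b).compr₂ₛₗ φ).comp ((degLT n m).subtype.compLeft (Fin d))).compl₂
    ((degLT n m).subtype.compLeft (Fin d))

section

variable {A : Fin n → Matrix (Fin d) (Fin d) ℂ} {φ : Matrix (Fin d) (Fin d) (FreeAlg n) →ₗ[ℂ] ℂ}

theorem momentForm_apply (b : FreeAlg n) (p q : Fin d → degLT n m) :
    momentForm φ m b p q = φ (outerForm b (fun l => p l) fun l => q l) := rfl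

theorem momentForm_isSymm (hφ : ∀ M, φ (adjM M) = star (φ M)) {b : FreeAlg n}
    (hb : nstar b = b) : (momentForm φ m b).IsSymm :=
  ⟨fun p q => by
    rw [momentForm_apply, momentForm_apply, starRingEnd_apply, ← hφ, adjM_outerForm hb]⟩

theorem isGNS_of_momentForm_eq (T : (Fin d → degLT n (m + 1)) ≃ₗ[ℂ] (Fin k → ℂ))
    {X : Fin n → Matrix (Fin k) (Fin k) ℂ} (hXh : ∀ j, (X j).IsHermitian)
    (hT : ∀ p q, momentForm φ (m + 1) 1 p q = star (T p) ⬝ᵥ T q)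
    (hX : ∀ j p q, momentForm φ (m + 1) (FreeAlgebra.ι ℂ j) p q = star (T p) ⬝ᵥ X j *ᵥ T q) :
    IsGNS A φ (m + 1) X fun p => T (stdRow m p.1) p.2 := by
  have hmulι (j : Fin n) (r r' : Fin d → degLT n (m + 1))
      (h : ∀ l, (r' l : FreeAlg n) = FreeAlgebra.ι ℂ j * r l) : T r' = X j *ᵥ T r := by
    refine dotProduct_eq _ _ fun v => ?_
    have hv : v = star (T (T.symm (star v))) := by rw [T.apply_symm_apply, star_star]
    rw [dotProduct_comm, dotProduct_comm _ v, hv, ← hT, ← hX, momentForm_apply, momentForm_apply]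
    congr 1
    ext
    simp only [outerForm_apply, one_mul, h]
  let row (M : Matrix (Fin d) (Fin d) (FreeAlg n)) (hM : ∀ i l, M i l ∈ degLT n (m + 1))
      (i : Fin d) : Fin d → degLT n (m + 1) := fun l => ⟨M i l, hM i l⟩
  have heval (M : Matrix (Fin d) (Fin d) (FreeAlg n)) (hM : ∀ i l, M i l ∈ degLT n (m + 1)) :
      (evalM M X *ᵥ fun p => T (stdRow m p.1) p.2) = fun p => T (row M hM p.1) p.2 :=
    evalM_mulVec_eq_map T.toLinearMap hmulι M hM
  refine ⟨hXh, fun w => ?_, fun M N hM hN => ?_, fun M N hM hN => ?_⟩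
  · let V (i : Fin d) : Fin d → degLT n (m + 1) := T.symm fun a => w (i, a)
    refine ⟨Matrix.of fun i l => V i l, fun i l => (V i l).2,
      (heval (Matrix.of fun i l => V i l) fun i l => (V i l).2).trans ?_⟩
    exact funext fun p => congrFun (T.apply_symm_apply fun a => w (p.1, a)) p.2
  · rw [heval M hM, heval N hN, adjM_mul_eq_sum_outerForm, map_sum, dotProduct,
      Fintype.sum_prod_type]
    exact Finset.sum_congr rfl fun i _ => hT (row M hM i) (row N hN i)
  · rw [heval M hM, heval N hN, ← pencilForm_eq_dotProduct A T hT hX (row M hM) (row N hN),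
      adjM_mul_monicPoly_mul_eq_sum_outerForm]
    simp only [pencilForm, momentForm_apply, row, map_add, map_sum, map_smul, smul_eq_mul]

theorem exists_isGNS (hφ : ∀ M, φ (adjM M) = star (φ M))
    (hpos : ∀ r : Fin d → FreeAlg n, (∀ l, r l ∈ degLT n (m + 1)) → r ≠ 0 →
      0 < (φ (outerForm 1 r r)).re) :
    ∃ (k : ℕ) (X : Fin n → Matrix (Fin k) (Fin k) ℂ) (u : Fin d × Fin k → ℂ),
      IsGNS A φ (m + 1) X u := by
  have hpos' (p : Fin d → degLT n (m + 1)) (hp : p ≠ 0) :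
      0 < (momentForm φ (m + 1) 1 p p).re :=
    hpos _ (fun l => (p l).2) fun h => hp (funext fun l => Subtype.ext (congrFun h l))
  obtain ⟨k, T, X, hXh, hT, hX⟩ := exists_realization (momentForm_isSymm hφ nstar_one) hpos'
    (x := fun j => momentForm φ (m + 1) (FreeAlgebra.ι ℂ j)) fun j =>
      momentForm_isSymm hφ (nstar_ι j)
  exact ⟨k, X, _, isGNS_of_momentForm_eq T hXh hT hX⟩

end

end GNS

section GramNondegenerate

variable {n : ℕ} {I J : Type*} [Fintype I]

/-- The polynomial matrix `M* K N`, as a sesquilinear form in `M`, `N`. -/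
noncomputable def gramForm (K : Matrix I I (FreeAlg n)) :
    Matrix I J (FreeAlg n) →ₗ⋆[ℂ] Matrix I J (FreeAlg n) →ₗ[ℂ] Matrix J J (FreeAlg n) :=
  LinearMap.mk₂'ₛₗ (starRingEnd ℂ) (RingHom.id ℂ) (fun M N => adjM M * K * N)
    (fun _ _ _ => by rw [adjM_add, Matrix.add_mul, Matrix.add_mul])
    (fun _ _ _ => by rw [adjM_smul, Matrix.smul_mul, Matrix.smul_mul])
    (fun _ _ _ => Matrix.mul_add _ _ _)
    (fun _ _ _ => Matrix.mul_smul _ _ _)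

theorem gramForm_apply (K : Matrix I I (FreeAlg n)) (M N : Matrix I J (FreeAlg n)) :
    gramForm K M N = adjM M * K * N := rfl

theorem adjM_gramForm {K : Matrix I I (FreeAlg n)} (hK : adjM K = K)
    (M N : Matrix I J (FreeAlg n)) : adjM (gramForm K M N) = gramForm K N M := by
  rw [gramForm_apply, gramForm_apply, adjM_mul, adjM_mul, adjM_adjM, hK, Matrix.mul_assoc]

theorem eq_zero_of_sum_gramForm_eq_zero [DecidableEq I] {K : Matrix I I (FreeAlg n)}
    (hK : K.map constCoeff = 1) {ι : Type*} [Fintype ι] {M : ι → Matrix I J (FreeAlg n)}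
    (h : ∑ i, gramForm K (M i) (M i) = 0) (i : ι) : M i = 0 := by
  classical
  ext s a
  let y (p : I × ι) : FreeAlg n := nstar (M p.2 p.1 a)
  obtain ⟨m, hm⟩ := exists_forall_mem_degLT (Matrix.of fun (p : I × ι) (_ : Unit) => y p)
  have hconst : (Matrix.blockDiagonal fun _ : ι => K).map constCoeff = 1 := by
    rw [Matrix.blockDiagonal_map _ _ (map_zero _)]
    simp only [hK]
    exact Matrix.blockDiagonal_one
  refine nstar_injective (.trans ?_ nstar_zero.symm)
  refine eq_zero_of_sum_mul_nstar_eq_zero (y := y) (fun s t => congrFun₂ hconst s t)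
    (fun s => hm s ()) ?_ (s, i)
  rw [← Matrix.zero_apply a a, ← h, Matrix.sum_apply, Fintype.sum_prod_type_right]
  refine Finset.sum_congr rfl fun i _ => ?_
  simp only [Fintype.sum_prod_type, Matrix.blockDiagonal_apply, ite_mul, mul_ite, zero_mul,
    mul_zero, Finset.sum_ite_eq, Finset.mem_univ, if_true, y, nstar_nstar, gramForm_apply,
    Matrix.mul_apply, adjM, Finset.sum_mul, mul_assoc]
  exact Finset.sum_comm

end GramNondegenerate

section Certificate

variable {n d m : ℕ} {A : Fin n → Matrix (Fin d) (Fin d) ℂ}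

/-- The coordinates `(p, q, C)` of a summand `L p* p L + (q L + C)* L (q L + C)` of a certificate,
with entries of `p` and `q` of degree less than `m`. -/
abbrev CertificateCoord (A : Fin n → Matrix (Fin d) (Fin d) ℂ) (m : ℕ) : Type :=
  Matrix (Fin 1) (Fin d) (degLT n m) × Matrix (Fin d) (Fin d) (degLT n m) × commutant A

/-- The matrix with block rows `p L` and `q L + C`; the certificate summand of `(p, q, C)` is the
Gram matrix of its columns with respect to `certificateWeight A`. -/
noncomputable def certificateMap (A : Fin n → Matrix (Fin d) (Fin d) ℂ) (m : ℕ) :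
    CertificateCoord A m →ₗ[ℂ] Matrix (Fin 1 ⊕ Fin d) (Fin d) (FreeAlg n) where
  toFun a := Matrix.fromRows (a.1.map (degLT n m).subtype * monicPoly A)
    (a.2.1.map (degLT n m).subtype * monicPoly A + constMat n (a.2.2 : Matrix (Fin d) (Fin d) ℂ))
  map_add' a b := by
    ext (i | i) l
    · simp [add_mul, Matrix.mul_apply, Finset.sum_add_distrib]
    · simp [add_mul, Matrix.mul_apply, Finset.sum_add_distrib]
      abel
  map_smul' c a := by
    ext (i | i) l
    · simp [Matrix.mul_apply, Finset.smul_sum]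
    · simp [Matrix.mul_apply, Finset.smul_sum, Algebra.algebraMap_eq_smul_one, mul_smul]

/-- The block diagonal matrix `diag(1, L)`. -/
noncomputable def certificateWeight (A : Fin n → Matrix (Fin d) (Fin d) ℂ) :
    Matrix (Fin 1 ⊕ Fin d) (Fin 1 ⊕ Fin d) (FreeAlg n) :=
  Matrix.fromBlocks 1 0 0 (monicPoly A)

theorem map_constCoeff_certificateWeight : (certificateWeight A).map constCoeff = 1 := by
  rw [certificateWeight, Matrix.fromBlocks_map, map_constCoeff_monicPoly,
    Matrix.map_one _ (map_zero _) (map_one _), Matrix.map_zero _ (map_zero _),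
    Matrix.map_zero _ (map_zero _), Matrix.fromBlocks_one]

theorem adjM_certificateWeight (hA : ∀ j, (A j).IsHermitian) :
    adjM (certificateWeight A) = certificateWeight A := by
  have hL := adjM_monicPoly hA
  ext (i | i) (l | l)
  · exact congrFun₂ adjM_one i l
  · exact nstar_zero
  · exact nstar_zero
  · exact congrFun₂ hL i l

theorem gramForm_certificateWeight (P P' : Matrix (Fin 1) (Fin d) (FreeAlg n))
    (Q Q' : Matrix (Fin d) (Fin d) (FreeAlg n)) :
    gramForm (certificateWeight A) (Matrix.fromRows P Q) (Matrix.fromRows P' Q') =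
      adjM P * P' + adjM Q * monicPoly A * Q' := by
  have hadj : adjM (Matrix.fromRows P Q) = Matrix.fromCols (adjM P) (adjM Q) := by
    ext i (l | l) <;> rfl
  rw [gramForm_apply, certificateWeight, hadj, Matrix.mul_assoc, Matrix.fromBlocks_mul_fromRows,
    Matrix.fromCols_mul_fromRows, Matrix.one_mul, Matrix.zero_mul, Matrix.zero_mul, add_zero,
    zero_add, Matrix.mul_assoc]

theorem gramForm_certificateMap (hA : ∀ j, (A j).IsHermitian) (a b : CertificateCoord A m) :
    gramForm (certificateWeight A) (certificateMap A m a) (certificateMap A m b) =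
      monicPoly A *
          (adjM (a.1.map (degLT n m).subtype) * b.1.map (degLT n m).subtype) * monicPoly A +
        adjM (a.2.1.map (degLT n m).subtype * monicPoly A + constMat n a.2.2.1) * monicPoly A *
          (b.2.1.map (degLT n m).subtype * monicPoly A + constMat n b.2.2.1) := by
  refine (gramForm_certificateWeight _ _ _ _).trans ?_
  simp only [adjM_mul, adjM_monicPoly hA, Matrix.mul_assoc]

theorem certificateMap_injective (hA : ∀ j, (A j).IsHermitian)
    {B : Fin n → Matrix (Fin d) (Fin d) ℂ} (hB : ∑ j, B j * A j = 1) :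
    Function.Injective (certificateMap A m) := by
  rw [injective_iff_map_eq_zero]
  rintro ⟨p, q, C⟩ h
  obtain ⟨hp, hq⟩ := Matrix.fromRows_inj (h.trans Matrix.fromRows_zero.symm)
  have p_eq := eq_zero_of_mul_monicPoly_eq_constMat hA hB (hp.trans constMat_zero.symm)
  obtain ⟨q_eq, C_eq⟩ := eq_zero_and_eq_zero_of_mul_monicPoly_eq_constMat hA hB
    (c := -C) ((eq_neg_of_add_eq_zero_left hq).trans (by ext; simp))
  have inj := Subtype.val_injective (p := (· ∈ degLT n m))
  exact Prod.ext (Matrix.map_injective inj p_eq)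
    (Prod.ext (Matrix.map_injective inj q_eq) (Subtype.ext (neg_eq_zero.1 C_eq)))

end Certificate

section Separation

variable {n d k m : ℕ} {A : Fin n → Matrix (Fin d) (Fin d) ℂ}
  {ψ : Matrix (Fin d) (Fin d) (FreeAlg n) →ₗ[ℂ] ℂ}

/-- The functional `ψ` is hermitian and strictly positive on the nonzero certificate summands
`L p* p L + (q L + C)* L (q L + C)` whose `p` and `q` have degree less than `m`. -/
structure IsCertificatePositive (A : Fin n → Matrix (Fin d) (Fin d) ℂ) (m : ℕ)
    (ψ : Matrix (Fin d) (Fin d) (FreeAlg n) →ₗ[ℂ] ℂ) : Prop where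
  map_adjM : ∀ M, ψ (adjM M) = star (ψ M)
  pos : ∀ (p : Matrix (Fin 1) (Fin d) (FreeAlg n)) (q : Matrix (Fin d) (Fin d) (FreeAlg n))
    (C : Matrix (Fin d) (Fin d) ℂ), (∀ i l, p i l ∈ degLT n m) → (∀ i l, q i l ∈ degLT n m) →
    (∀ j, C * A j = A j * C) → (p ≠ 0 ∨ q ≠ 0 ∨ C ≠ 0) →
    0 < (ψ (monicPoly A * (adjM p * p) * monicPoly A +
      adjM (q * monicPoly A + constMat n C) * monicPoly A * (q * monicPoly A + constMat n C))).re

/-- The functional `M ↦ ψ(L M L)`. -/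
noncomputable def pencilCongruence (A : Fin n → Matrix (Fin d) (Fin d) ℂ)
    (ψ : Matrix (Fin d) (Fin d) (FreeAlg n) →ₗ[ℂ] ℂ) :
    Matrix (Fin d) (Fin d) (FreeAlg n) →ₗ[ℂ] ℂ :=
  ψ ∘ₗ LinearMap.mulLeftRight ℂ (monicPoly A, monicPoly A)

theorem pencilCongruence_apply (M : Matrix (Fin d) (Fin d) (FreeAlg n)) :
    pencilCongruence A ψ M = ψ (monicPoly A * M * monicPoly A) := rfl

theorem IsCertificatePositive.exists_isGNS (hψ : IsCertificatePositive A (m + 1) ψ)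
    (hA : ∀ j, (A j).IsHermitian) :
    ∃ (k : ℕ) (X : Fin n → Matrix (Fin k) (Fin k) ℂ) (u : Fin d × Fin k → ℂ),
      IsGNS A (pencilCongruence A ψ) (m + 1) X u := by
  refine _root_.exists_isGNS (fun M => ?_) fun r hr hr0 => ?_
  · rw [pencilCongruence_apply, pencilCongruence_apply, ← hψ.map_adjM, adjM_mul, adjM_mul,
      adjM_monicPoly hA, Matrix.mul_assoc]
  · have hrow : adjM (Matrix.replicateRow (Fin 1) r) * Matrix.replicateRow (Fin 1) r =
        outerForm 1 r r := by
      ext i l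
      simp [Matrix.mul_apply, adjM, outerForm_apply]
    have := hψ.pos (Matrix.replicateRow (Fin 1) r) 0 0 (fun _ => hr) (fun _ _ => zero_mem _)
      (fun _ => by simp) (.inl fun h => hr0 (funext fun l => congrFun₂ h 0 l))
    simpa [hrow, constMat_zero, pencilCongruence_apply] using this

theorem IsCertificatePositive.posDef_monicK (hψ : IsCertificatePositive A m ψ)
    (hA : ∀ j, (A j).IsHermitian) {X : Fin n → Matrix (Fin k) (Fin k) ℂ} {u : Fin d × Fin k → ℂ}
    (h : IsGNS A (pencilCongruence A ψ) m X u) : (monicK A X).PosDef := by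
  have hherm := isHermitian_monicK hA h.isHermitian
  refine .of_dotProduct_mulVec_pos hherm fun w hw => ?_
  obtain ⟨M, hM, rfl⟩ := h.exists_mulVec_eq w
  have hM0 : M ≠ 0 := by
    rintro rfl
    exact hw (by rw [evalM_zero, Matrix.zero_mulVec])
  have hre := hψ.pos 0 M 0 (fun _ _ => zero_mem _) hM (fun _ => by simp) (.inr (.inl hM0))
  simp only [adjM_zero, Matrix.mul_zero, Matrix.zero_mul, zero_add, constMat_zero, add_zero,
    adjM_mul, adjM_monicPoly hA] at hre
  have hmap := h.map_adjM_mul_monicPoly_mul M M hM hM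
  rw [pencilCongruence_apply] at hmap
  simp only [Matrix.mul_assoc] at hmap hre
  rw [hmap] at hre
  exact Complex.pos_iff.2 ⟨hre, (hherm.im_star_dotProduct_mulVec_self _).symm⟩

theorem adjM_mul_monicPoly_mul_of_commute (hA : ∀ j, (A j).IsHermitian)
    {C : Matrix (Fin d) (Fin d) ℂ} (hC : C.IsHermitian) (hCA : ∀ j, C * A j = A j * C)
    (Q : Matrix (Fin d) (Fin d) (FreeAlg n)) :
    adjM (Q * monicPoly A + constMat n C) * monicPoly A * (Q * monicPoly A + constMat n C) =
      monicPoly A * (adjM Q * monicPoly A * Q + adjM Q * constMat n C + constMat n C * Q) *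
        monicPoly A + constMat n (C * C) * monicPoly A := by
  have hcomm := constMat_mul_monicPoly_comm hCA
  have hcomm' (M : Matrix (Fin d) (Fin d) (FreeAlg n)) :
      constMat n C * (monicPoly A * M) = monicPoly A * (constMat n C * M) := by
    rw [← Matrix.mul_assoc, hcomm, Matrix.mul_assoc]
  rw [adjM_add, adjM_mul, adjM_monicPoly hA, adjM_constMat, hC.eq, constMat_mul]
  simp only [Matrix.mul_add, Matrix.add_mul, Matrix.mul_assoc, hcomm, hcomm']
  abel

theorem IsGNS.map_eq {φ : Matrix (Fin d) (Fin d) (FreeAlg n) →ₗ[ℂ] ℂ}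
    {X : Fin n → Matrix (Fin k) (Fin k) ℂ} {u : Fin d × Fin k → ℂ} (h : IsGNS A φ (m + 1) X u)
    {M : Matrix (Fin d) (Fin d) (FreeAlg n)} (hM : ∀ i l, M i l ∈ degLT n (m + 1)) :
    φ M = star u ⬝ᵥ evalM M X *ᵥ u := by
  have hone (i l : Fin d) : constMat n (1 : Matrix (Fin d) (Fin d) ℂ) i l ∈ degLT n (m + 1) :=
    algebraMap_mem_degLT _ m
  have hmap := h.map_adjM_mul (constMat n 1) M hone hM
  rwa [evalM_constMat, Matrix.one_kronecker_one, Matrix.one_mulVec, constMat_one, adjM_one,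
    Matrix.one_mul] at hmap

theorem IsGNS.map_completedSquare {φ : Matrix (Fin d) (Fin d) (FreeAlg n) →ₗ[ℂ] ℂ}
    {X : Fin n → Matrix (Fin k) (Fin k) ℂ} {u z : Fin d × Fin k → ℂ} (h : IsGNS A φ m X u)
    (hA : ∀ j, (A j).IsHermitian) {P Q : Matrix (Fin d) (Fin d) (FreeAlg n)}
    (hP : ∀ i l, P i l ∈ degLT n m) (hQ : ∀ i l, Q i l ∈ degLT n m)
    (hPu : evalM P X *ᵥ u = monicK A X *ᵥ z) (hQu : evalM Q X *ᵥ u = -z) :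
    φ (adjM Q * monicPoly A * Q + adjM Q * P + adjM P * Q) =
      -(star z ⬝ᵥ monicK A X *ᵥ z) := by
  rw [map_add, map_add, h.map_adjM_mul_monicPoly_mul Q Q hQ hQ, h.map_adjM_mul Q P hQ hP,
    h.map_adjM_mul P Q hP hQ, hPu, hQu, dotProduct_neg,
    star_mulVec_dotProduct_of_isHermitian (isHermitian_monicK hA h.isHermitian)]
  simp only [star_neg, neg_dotProduct, Matrix.mulVec_neg, dotProduct_neg]
  ring

theorem IsCertificatePositive.re_nonneg_of_commute (hψ : IsCertificatePositive A m ψ)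
    (hA : ∀ j, (A j).IsHermitian) {C : Matrix (Fin d) (Fin d) ℂ} (hC : C.IsHermitian)
    (hCA : ∀ j, C * A j = A j * C) {Q : Matrix (Fin d) (Fin d) (FreeAlg n)}
    (hQ : ∀ i l, Q i l ∈ degLT n m) :
    0 ≤ (pencilCongruence A ψ (adjM Q * monicPoly A * Q + adjM Q * constMat n C +
      constMat n C * Q) + ψ (constMat n (C * C) * monicPoly A)).re := by
  rw [pencilCongruence_apply, ← map_add, ← adjM_mul_monicPoly_mul_of_commute hA hC hCA]
  by_cases h0 : Q ≠ 0 ∨ C ≠ 0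
  · simpa [adjM_zero] using (hψ.pos 0 Q C (fun _ _ => zero_mem _) hQ hCA (.inr h0)).le
  · obtain ⟨rfl, rfl⟩ := not_or.1 h0 |>.imp not_not.1 not_not.1
    simp

theorem star_dotProduct_evalM_normalForm (hA : ∀ j, (A j).IsHermitian)
    {C : Matrix (Fin d) (Fin d) ℂ} (hC : C.IsHermitian) (hCA : ∀ j, C * A j = A j * C)
    (e : Matrix (Fin d) (Fin d) (FreeAlg n)) {X : Fin n → Matrix (Fin k) (Fin k) ℂ}
    (hX : ∀ j, (X j).IsHermitian) (y : Fin d × Fin k → ℂ) :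
    star y ⬝ᵥ evalM (monicPoly A * e * monicPoly A + constMat n (C * C) * monicPoly A) X *ᵥ y =
      star (monicK A X *ᵥ y) ⬝ᵥ evalM e X *ᵥ monicK A X *ᵥ y +
        star (evalM (constMat n C) X *ᵥ y) ⬝ᵥ
          monicK A X *ᵥ evalM (constMat n C) X *ᵥ y := by
  have hK : (evalM (constMat n C) X).IsHermitian := by
    rw [Matrix.IsHermitian, ← evalM_adjM _ hX, adjM_constMat, hC.eq]
  rw [star_mulVec_dotProduct_of_isHermitian (isHermitian_monicK hA hX),
    star_mulVec_dotProduct_of_isHermitian hK, constMat_mul, Matrix.mul_assoc (constMat n C),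
    constMat_mul_monicPoly_comm hCA]
  simp only [evalM_add, evalM_mul, evalM_monicPoly, Matrix.add_mulVec, dotProduct_add,
    Matrix.mulVec_mulVec, Matrix.mul_assoc]

theorem IsCertificatePositive.re_nonneg (hψ : IsCertificatePositive A (m + 1) ψ)
    (hA : ∀ j, (A j).IsHermitian) {C : Matrix (Fin d) (Fin d) ℂ} (hC : C.IsHermitian)
    (hCA : ∀ j, C * A j = A j * C) {e f : Matrix (Fin d) (Fin d) (FreeAlg n)}
    (he : ∀ i l, e i l ∈ degLT n (m + 1))
    (hf : f = monicPoly A * e * monicPoly A + constMat n (C * C) * monicPoly A)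
    (hpos : ∀ (k : ℕ) (X : Fin n → Matrix (Fin k) (Fin k) ℂ), (∀ j, (X j).IsHermitian) →
      (monicK A X).PosSemidef → (evalM f X).PosSemidef) : 0 ≤ (ψ f).re := by
  -- With `L(X) y = u`, `V(X) u = -y` and `q = C V`, the number `ψ(f)` is the sum of
  -- `⟨y, f(X) y⟩` and the value of `ψ` at the square `(q L + C)* L (q L + C)`.
  obtain ⟨k, X, u, h⟩ := hψ.exists_isGNS hA
  have hL := hψ.posDef_monicK hA h
  obtain ⟨y, rfl⟩ := Matrix.mulVec_surjective_iff_isUnit.2 hL.isUnit u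
  obtain ⟨V, hV, hVu⟩ := h.exists_mulVec_eq (-y)
  have hconst (i l : Fin d) : constMat n C i l ∈ degLT n (m + 1) := algebraMap_mem_degLT _ m
  have hQ (i l : Fin d) : (constMat n C * V) i l ∈ degLT n (m + 1) :=
    constMat_mul_mem_degLT C hV i l
  have hCu : evalM (constMat n C) X *ᵥ monicK A X *ᵥ y =
      monicK A X *ᵥ evalM (constMat n C) X *ᵥ y := by
    simp only [Matrix.mulVec_mulVec, ← evalM_monicPoly, ← evalM_mul,
      constMat_mul_monicPoly_comm hCA]
  have hsquare := h.map_completedSquare hA (P := constMat n C) (Q := constMat n C * V) hconst hQ hCu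
    (by rw [evalM_mul, ← Matrix.mulVec_mulVec, hVu, Matrix.mulVec_neg])
  rw [adjM_constMat, hC.eq] at hsquare
  have hnonneg := hψ.re_nonneg_of_commute hA hC hCA hQ
  rw [hsquare] at hnonneg
  have he_eq := h.map_eq he
  rw [pencilCongruence_apply] at he_eq
  have hfy := (hpos k X h.isHermitian hL.posSemidef).re_dotProduct_nonneg y
  rw [hf, star_dotProduct_evalM_normalForm hA hC hCA e h.isHermitian, ← he_eq] at hfy
  rw [hf, map_add]
  simp only [RCLike.re_eq_complex_re, Complex.add_re, Complex.neg_re] at hfy hnonneg ⊢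
  linarith

end Separation

section CertificateExistence

variable {n d m : ℕ} {A : Fin n → Matrix (Fin d) (Fin d) ℂ}

theorem isCertificatePositive_of_gramForm_pos (hA : ∀ j, (A j).IsHermitian)
    {ψ : Matrix (Fin d) (Fin d) (FreeAlg n) →ₗ[ℂ] ℂ} (hψ : ∀ M, ψ (adjM M) = star (ψ M))
    (hpos : ∀ a : CertificateCoord A m, a ≠ 0 →
      0 < (ψ (gramForm (certificateWeight A) (certificateMap A m a)
        (certificateMap A m a))).re) :
    IsCertificatePositive A m ψ where
  map_adjM := hψ
  pos p q C hp hq hC h0 := by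
    let a : CertificateCoord A m := (Matrix.of fun i l => ⟨p i l, hp i l⟩,
      Matrix.of fun i l => ⟨q i l, hq i l⟩, ⟨C, mem_commutant.2 hC⟩)
    have ha : a ≠ 0 := by
      intro h
      simp only [a, Prod.mk_eq_zero, Submodule.mk_eq_zero] at h
      rcases h0 with h0 | h0 | h0
      · exact h0 (congrArg (·.map (degLT n m).subtype) h.1)
      · exact h0 (congrArg (·.map (degLT n m).subtype) h.2.1)
      · exact h0 h.2.2
    exact gramForm_certificateMap hA a a ▸ hpos a ha

theorem exists_eq_sum_gramForm (hA : ∀ j, (A j).IsHermitian)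
    {B : Fin n → Matrix (Fin d) (Fin d) ℂ} (hB : ∑ j, B j * A j = 1)
    {f : Matrix (Fin d) (Fin d) (FreeAlg n)} (hf : adjM f = f)
    (hpos : ∀ ψ, IsCertificatePositive A m ψ → 0 ≤ (ψ f).re) :
    ∃ (N : ℕ) (a : Fin N → CertificateCoord A m), f = ∑ i,
      gramForm (certificateWeight A) (certificateMap A m (a i)) (certificateMap A m (a i)) := by
  obtain ⟨S, hS⟩ : ∃ S : CertificateCoord A m →ₗ⋆[ℂ] CertificateCoord A m →ₗ[ℂ]
      Matrix (Fin d) (Fin d) (FreeAlg n), ∀ a b, S a b =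
        gramForm (certificateWeight A) (certificateMap A m a) (certificateMap A m b) :=
    ⟨((gramForm (certificateWeight A)).comp (certificateMap A m)).compl₂ (certificateMap A m),
      fun _ _ => rfl⟩
  simp only [← hS]
  refine exists_eq_sum_of_forall_dual_nonneg S (st := adjMₗ) adjM_adjM (fun a => ?_)
    (fun N a ha i => ?_) hf fun ψ hψ hψpos => ?_
  · rw [hS]
    exact adjM_gramForm (adjM_certificateWeight hA) _ _
  · simp only [hS] at ha
    exact (map_eq_zero_iff _ (certificateMap_injective hA hB)).1
      (eq_zero_of_sum_gramForm_eq_zero map_constCoeff_certificateWeight ha i)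
  · exact hpos ψ (isCertificatePositive_of_gramForm_pos hA hψ fun a ha => hS a a ▸ hψpos a ha)

theorem IsMinimal.exists_certificate (hmin : IsMinimal A) (hA : ∀ j, (A j).IsHermitian)
    {f : Matrix (Fin d) (Fin d) (FreeAlg n)} (hf : adjM f = f)
    (hpos : ∀ (k : ℕ) (X : Fin n → Matrix (Fin k) (Fin k) ℂ), (∀ j, (X j).IsHermitian) →
      (monicK A X).PosSemidef → (evalM f X).PosSemidef)
    (hker : ∀ (k : ℕ) (X : Fin n → Matrix (Fin k) (Fin k) ℂ), (∀ j, (X j).IsHermitian) →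
      (monicK A X).PosSemidef → ∀ u, monicK A X *ᵥ u = 0 → evalM f X *ᵥ u = 0) :
    ∃ (m N : ℕ) (a : Fin N → CertificateCoord A m), f = ∑ i,
      gramForm (certificateWeight A) (certificateMap A m (a i)) (certificateMap A m (a i)) := by
  obtain ⟨g, hg⟩ := hmin.exists_eq_mul_monicPoly hA hker
  obtain ⟨B, hB⟩ := hmin.exists_sum_mul_eq_one hA
  obtain ⟨e, c, -, hc, hcA, hfe⟩ := exists_normalForm hA hB hf hg
  obtain ⟨C, hC, rfl, hCcomm⟩ :=
    exists_isHermitian_mul_self_eq (hmin.posSemidef_of_normalForm hA hc hcA hfe hpos)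
  obtain ⟨m, he⟩ := exists_forall_mem_degLT e
  exact ⟨m + 1, exists_eq_sum_gramForm hA hB hf fun ψ hψ => hψ.re_nonneg hA hC
    (fun j => hCcomm _ (hcA j)) (fun i l => degLT_mono m.le_succ (he i l)) hfe hpos⟩

end CertificateExistence

/-- Randstellensatz: for a minimal monic hermitian pencil `L` of size `d`
and `f = f* ∈ M_d(ℂ⟨x⟩)`, one has `f ⪰ 0` on `D_L` with `ker L(X) ⊆ ker f(X)` iff
`f = L (∑ᵢ pᵢpᵢ*) L + ∑ⱼ (qⱼL + Cⱼ)* L (qⱼL + Cⱼ)` with `CⱼL = LCⱼ`. -/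
theorem randstellensatz {n d : ℕ}
    (A : Fin n → Matrix (Fin d) (Fin d) ℂ) (hAherm : ∀ j, (A j).IsHermitian)
    (hAmin : ∀ (e : ℕ) (C : Fin n → Matrix (Fin e) (Fin e) ℂ), (∀ j, (C j).IsHermitian) →
      (∀ (k : ℕ) (X : Fin n → Matrix (Fin k) (Fin k) ℂ), (∀ j, (X j).IsHermitian) →
        ((monicK A X).PosSemidef ↔ (monicK C X).PosSemidef)) → d ≤ e)
    (f : Matrix (Fin d) (Fin d) (FreeAlg n)) (hf : IsHermPoly f) :
    (∀ (k : ℕ) (X : Fin n → Matrix (Fin k) (Fin k) ℂ), (∀ j, (X j).IsHermitian) →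
        (monicK A X).PosSemidef →
        (evalM f X).PosSemidef ∧
        ∀ u : Fin d × Fin k → ℂ, (monicK A X).mulVec u = 0 → (evalM f X).mulVec u = 0) ↔
      (∃ (M N : ℕ) (p : Fin M → Matrix (Fin d) (Fin 1) (FreeAlg n))
          (q : Fin N → Matrix (Fin d) (Fin d) (FreeAlg n))
          (C : Fin N → Matrix (Fin d) (Fin d) ℂ),
        (∀ j, (C j).map (algebraMap ℂ (FreeAlg n)) * monicPoly A =
          monicPoly A * (C j).map (algebraMap ℂ (FreeAlg n))) ∧
        f = monicPoly A * (∑ i, p i * adjM (p i)) * monicPoly A +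
          ∑ j, adjM (q j * monicPoly A + (C j).map (algebraMap ℂ (FreeAlg n))) *
            monicPoly A *
            (q j * monicPoly A + (C j).map (algebraMap ℂ (FreeAlg n)))) := by
  constructor
  · intro h
    obtain ⟨m, N, a, hfa⟩ := IsMinimal.exists_certificate hAmin hAherm hf.adjM_eq
      (fun k X hX hL => (h k X hX hL).1) (fun k X hX hL => (h k X hX hL).2)
    refine ⟨N, N, fun i => adjM ((a i).1.map (degLT n m).subtype),
      fun i => (a i).2.1.map (degLT n m).subtype, fun i => (a i).2.2,
      fun i => constMat_mul_monicPoly_comm (mem_commutant.1 (a i).2.2.2), ?_⟩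
    simp only [adjM_adjM]
    rw [Matrix.mul_sum, Matrix.sum_mul, ← Finset.sum_add_distrib]
    exact hfa.trans (Finset.sum_congr rfl fun i _ => gramForm_certificateMap hAherm (a i) (a i))
  · rintro ⟨M, N, p, q, C, hC, hfC⟩ k X hX hL
    exact posSemidef_and_ker_le_of_certificate hAherm p q hC hX hL hfC
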